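/- arXiv:1202.6259 — 2 statements merged into one kernel-verified Lean document; each statement's English description precedes it below -/
import Mathlib

section
/- Let Ψ = (X, A, q, g) be a standard MDP where X is a compact subset of the simplex Δ(K) for a nonempty finite set K, and assume: for all x, y ∈ X, a ∈ A, f ∈ D_1, α ≥ 0, β ≥ 0, one has |α·f(q(x,a)) − β·f(q(y,a))| ≤ ‖α·x − β·y‖₁ and |α·g(x,a) − β·g(y,a)| ≤ ‖α·x − β·y‖₁ (f being linearly extended to finitely supported probabilities). Then Ψ has a general uniform value v*, and for all x ∈ X, v*(x) is the infimum of w(x) over all continuous affine functions w : Δ(X) → [0,1] such that (1) w(δ_{x'}) ≥ sup_{a ∈ A} w(q(x',a)) for all x' ∈ X, and (2) w(u) ≥ y for all (u,y) ∈ RR, where RR is the set of invariant couples of Ψ. -/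
open Set MeasureTheory

namespace Stmt16

/-- The simplex `Δ(K)` of probability vectors on `K`, inside `K → ℝ`
(endowed with the ℓ¹ norm, written explicitly as sums of absolute values below). -/
def ΔK (K : Type*) [Fintype K] : Set (K → ℝ) := {p | (∀ k, 0 ≤ p k) ∧ ∑ k, p k = 1}

/-- `D₁`, realized as continuous functions on the simplex (given through all of their
ambient extensions): `a·f(x) − b·f(y) ≤ ‖a·x − b·y‖₁` for `x, y ∈ Δ(K)`, `a, b ≥ 0`. -/
def D1 (K : Type*) [Fintype K] : Set ((K → ℝ) → ℝ) :=
  {f | ContinuousOn f (ΔK K) ∧ ∀ x ∈ ΔK K, ∀ y ∈ ΔK K, ∀ a b : ℝ, 0 ≤ a → 0 ≤ b →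
    a * f x - b * f y ≤ ∑ k, |a * x k - b * y k|}

/-- `Δ_f(𝒳)`: finitely supported probability measures, as weight functions. -/
def Δf (𝒳 : Type*) : Set (𝒳 →₀ ℝ) := {u | (∀ x, 0 ≤ u x) ∧ u.sum (fun _ r => r) = 1}

/-- Linear extension of a function to finitely supported probabilities on a subset `X`
of `K → ℝ`. -/
noncomputable def fExt {K : Type*} {X : Set (K → ℝ)} (f : (K → ℝ) → ℝ)
    (u : X →₀ ℝ) : ℝ :=
  u.sum fun p w => w * f (p : K → ℝ)

variable {𝒳 A : Type*}

/-- Behavioral strategies: given the past history and the current state, play a finitely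
supported mixed action. -/
def IsStrat (σ : List (𝒳 × A) → 𝒳 → (A →₀ ℝ)) : Prop := ∀ h x, σ h x ∈ Δf A

/-- The (finitely supported) distribution at time `t` of the pair
(history of states and actions up to stage `t`, state at stage `t+1`),
for initial state `x₁` and strategy `σ`. -/
noncomputable def hist (q : 𝒳 → A → (𝒳 →₀ ℝ)) (σ : List (𝒳 × A) → 𝒳 → (A →₀ ℝ))
    (x₁ : 𝒳) : ℕ → (List (𝒳 × A) × 𝒳 →₀ ℝ)
  | 0 => Finsupp.single ([], x₁) 1
  | t + 1 => (hist q σ x₁ t).sum fun hx w =>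
      (σ hx.1 hx.2).sum fun a pa =>
        (q hx.2 a).sum fun x' pr => Finsupp.single (hx.1 ++ [(hx.2, a)], x') (w * pa * pr)

/-- The expected payoff `E_{x₁,σ}(g(x_{t+1}, a_{t+1}))` at stage `t+1`. -/
noncomputable def stagePay (q : 𝒳 → A → (𝒳 →₀ ℝ)) (g : 𝒳 → A → ℝ)
    (σ : List (𝒳 × A) → 𝒳 → (A →₀ ℝ)) (x₁ : 𝒳) (t : ℕ) : ℝ :=
  (hist q σ x₁ t).sum fun hx w => (σ hx.1 hx.2).sum fun a pa => w * pa * g hx.2 a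

/-- An evaluation: a probability distribution `θ = (θ_t)_{t ≥ 1}` over stages
(indexed here by `t : ℕ`, `t` standing for stage `t+1`). -/
def IsEval (θ : ℕ → ℝ) : Prop := (∀ t, 0 ≤ θ t) ∧ ∑' t, θ t = 1

/-- The impatience `I(θ) = Σ_{t≥1} |θ_{t+1} − θ_t|`. -/
noncomputable def impatience (θ : ℕ → ℝ) : ℝ := ∑' t, |θ (t + 1) - θ t|

/-- The `θ`-payoff `γ_θ(x₁,σ) = E_{x₁,σ}(Σ_t θ_t g(x_t,a_t))`. -/
noncomputable def payoff (q : 𝒳 → A → (𝒳 →₀ ℝ)) (g : 𝒳 → A → ℝ)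
    (θ : ℕ → ℝ) (σ : List (𝒳 × A) → 𝒳 → (A →₀ ℝ)) (x₁ : 𝒳) : ℝ :=
  ∑' t, θ t * stagePay q g σ x₁ t

/-- The `θ`-value `v_θ(x₁) = sup_σ γ_θ(x₁,σ)`. -/
noncomputable def value (q : 𝒳 → A → (𝒳 →₀ ℝ)) (g : 𝒳 → A → ℝ)
    (θ : ℕ → ℝ) (x₁ : 𝒳) : ℝ :=
  sSup {c : ℝ | ∃ σ, IsStrat σ ∧ c = payoff q g θ σ x₁}

/-- The Borel measure associated to a finitely supported weight function. -/
noncomputable def toMeas [MeasurableSpace 𝒳] (u : 𝒳 →₀ ℝ) : Measure 𝒳 :=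
  u.sum fun x a => ENNReal.ofReal a • Measure.dirac x

/-- `w` is affine on `Δ(𝒳)`. -/
def IsAffine [MeasurableSpace 𝒳] (w : ProbabilityMeasure 𝒳 → ℝ) : Prop :=
  ∀ (u v m : ProbabilityMeasure 𝒳) (α : ℝ), α ∈ Icc (0:ℝ) 1 →
    (m : Measure 𝒳) =
      ENNReal.ofReal α • (u : Measure 𝒳) + ENNReal.ofReal (1 - α) • (v : Measure 𝒳) →
    w m = α * w u + (1 - α) * w v

/-- `Q(u,a) = Σ_x u(x) q(x, a(x))` for a mixed action profile `a`. -/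
noncomputable def Qmix (q : 𝒳 → A → (𝒳 →₀ ℝ)) (u : 𝒳 →₀ ℝ)
    (a : 𝒳 → (A →₀ ℝ)) : 𝒳 →₀ ℝ :=
  u.sum fun x w => w • ((a x).sum fun act p => p • q x act)

/-- `G(u,a) = Σ_x u(x) g(x, a(x))` for a mixed action profile `a`. -/
noncomputable def Gmix (g : 𝒳 → A → ℝ) (u : 𝒳 →₀ ℝ) (a : 𝒳 → (A →₀ ℝ)) : ℝ :=
  u.sum fun x w => w * (a x).sum fun act p => p * g x act

/-- The set `RR` of invariant couples: `(u,y) ∈ Δ(𝒳)×[0,1]` with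
`((u,y),(u,y)) ∈ cl(Graph F̂)` for the weak-* topology. -/
def RR [MeasurableSpace 𝒳] [TopologicalSpace 𝒳] [OpensMeasurableSpace 𝒳]
    (q : 𝒳 → A → (𝒳 →₀ ℝ)) (g : 𝒳 → A → ℝ) :
    Set (ProbabilityMeasure 𝒳 × ℝ) :=
  {py | (py, py) ∈ closure {z : (ProbabilityMeasure 𝒳 × ℝ) × (ProbabilityMeasure 𝒳 × ℝ) |
    z.1.2 ∈ Icc (0:ℝ) 1 ∧ ∃ u ∈ Δf 𝒳, ∃ a : 𝒳 → (A →₀ ℝ), (∀ x, a x ∈ Δf A) ∧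
      (z.1.1 : Measure 𝒳) = toMeas u ∧
      (z.2.1 : Measure 𝒳) = toMeas (Qmix q u a) ∧ z.2.2 = Gmix g u a}}

end Stmt16

/-
Since the `θ`-values form an equicontinuous family, they have uniform cluster points as the
impatience of `θ` tends to `0`, and it suffices to show that every cluster point `v` at `x` is the
least value `w(δ_x)` of an excessive majorant `w`. Integration against `v` is such a majorant: the
Bellman inequality at impatience `0` makes it excessive, and summing the Bellman inequalities of the
successive shifts of `θ` along an invariant couple `(u, y)` telescopes to `y ≤ ∫ v_θ du`.
Conversely, the occupation law of a nearly optimal play from `x`, averaged over the level sets of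
`θ`, is invariant up to the impatience; a limit of such laws is an invariant couple whose payoff is
at least `v(x)`, while `w` does not increase along the play, so `v(x) ≤ w(δ_x)`.

For a strategy good for all patient evaluations at once, the convex set of these evaluations is
approximated at each stage by a finite net. Sion's minimax theorem on the simplex of weights on the
net yields one mixed action whose payoff plus continuation value loses at most `η / 2 ^ (t + 1)`
simultaneously for every evaluation in the set.
-/

open Filter Topology
open scoped BoundedContinuousFunction NNReal

namespace Stmt16

section Expectation

variable {S T : Type*}

/-- The expectation `∑ x, u x * f x` of `f` under a finitely supported weight `u`, as a linear
functional of `u`; it is the linear extension of `f` from `S` to `Δf S`. -/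
noncomputable def expect (f : S → ℝ) : (S →₀ ℝ) →ₗ[ℝ] ℝ := Finsupp.linearCombination ℝ f

lemma expect_apply (f : S → ℝ) (u : S →₀ ℝ) : expect f u = u.sum fun x w => w * f x := by
  simp [expect, Finsupp.linearCombination_apply]

@[simp] lemma expect_single (f : S → ℝ) (x : S) (c : ℝ) :
    expect f (Finsupp.single x c) = c * f x := by
  simp [expect]

lemma expect_add (f f' : S → ℝ) (u : S →₀ ℝ) :
    expect (fun x => f x + f' x) u = expect f u + expect f' u := by
  simp only [expect_apply, Finsupp.sum, mul_add, Finset.sum_add_distrib]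

lemma expect_const_mul (c : ℝ) (f : S → ℝ) (u : S →₀ ℝ) :
    expect (fun x => c * f x) u = c * expect f u := by
  simp only [expect_apply, Finsupp.sum, Finset.mul_sum, mul_left_comm]

lemma expect_linearCombination (f : T → ℝ) (k : S → (T →₀ ℝ)) (u : S →₀ ℝ) :
    expect f (Finsupp.linearCombination ℝ k u) = expect (fun x => expect f (k x)) u := by
  rw [Finsupp.linearCombination_apply, map_finsuppSum, expect_apply]
  simp

lemma expect_indicator [DecidableEq S] (x : S) (u : S →₀ ℝ) :
    expect (fun y => if y = x then 1 else 0) u = u x := by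
  by_cases hx : u x = 0 <;> simp [expect_apply, Finsupp.sum, hx]

lemma ext_expect {u v : S →₀ ℝ} (h : ∀ f : S → ℝ, expect f u = expect f v) : u = v := by
  classical
  ext x
  rw [← expect_indicator, h, expect_indicator]

lemma mem_Δf_iff {u : S →₀ ℝ} : u ∈ Δf S ↔ (∀ x, 0 ≤ u x) ∧ expect (fun _ => 1) u = 1 := by
  simp [Δf, expect_apply]

lemma single_mem_Δf (x : S) : Finsupp.single x (1 : ℝ) ∈ Δf S :=
  mem_Δf_iff.2 ⟨Finsupp.single_nonneg.2 zero_le_one, by simp⟩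

lemma convex_Δf : Convex ℝ (Δf S) := by
  intro u hu v hv a b ha hb hab
  refine mem_Δf_iff.2 ⟨fun x => ?_, ?_⟩
  · exact add_nonneg (mul_nonneg ha (hu.1 x)) (mul_nonneg hb (hv.1 x))
  · simp [(mem_Δf_iff.1 hu).2, (mem_Δf_iff.1 hv).2, hab]

lemma linearCombination_mem_Δf {k : S → (T →₀ ℝ)} {u : S →₀ ℝ} (hu : u ∈ Δf S)
    (hk : ∀ x, k x ∈ Δf T) : Finsupp.linearCombination ℝ k u ∈ Δf T := by
  rw [Finsupp.linearCombination_apply]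
  exact convex_Δf.sum_mem (fun x _ => hu.1 x) hu.2 fun x _ => hk x

lemma tendsto_expect {ι : Type*} {l : Filter ι} {F : ι → S → ℝ} {f : S → ℝ}
    (hF : ∀ x, Tendsto (fun i => F i x) l (𝓝 (f x))) (u : S →₀ ℝ) :
    Tendsto (fun i => expect (F i) u) l (𝓝 (expect f u)) := by
  simp only [expect_apply]
  exact tendsto_finsetSum _ fun x _ => (hF x).const_mul _

variable {f f' : S → ℝ} {u : S →₀ ℝ}

lemma expect_mono (hu : u ∈ Δf S) (h : ∀ x, f x ≤ f' x) : expect f u ≤ expect f' u := by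
  simp only [expect_apply]
  exact Finset.sum_le_sum fun x _ => mul_le_mul_of_nonneg_left (h x) (hu.1 x)

lemma expect_const (hu : u ∈ Δf S) (c : ℝ) : expect (fun _ => c) u = c := by
  simpa [(mem_Δf_iff.1 hu).2] using expect_const_mul c (fun _ => 1) u

lemma expect_add_const (hu : u ∈ Δf S) (f : S → ℝ) (c : ℝ) :
    expect (fun x => f x + c) u = expect f u + c := by
  rw [expect_add, expect_const hu]

lemma expect_le_of_le (hu : u ∈ Δf S) {c : ℝ} (h : ∀ x, f x ≤ c) : expect f u ≤ c :=
  (expect_mono hu h).trans_eq (expect_const hu c)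

lemma le_expect_of_le (hu : u ∈ Δf S) {c : ℝ} (h : ∀ x, c ≤ f x) : c ≤ expect f u :=
  (expect_const hu c).symm.trans_le (expect_mono hu h)

end Expectation

section Laws

variable {S A : Type*}

/-- The law of the current state under a state-action weight. -/
noncomputable def stateLaw : (S × A →₀ ℝ) →ₗ[ℝ] (S →₀ ℝ) :=
  Finsupp.linearCombination ℝ fun p => Finsupp.single p.1 1

/-- The law of the next state under a state-action weight, i.e. the linear extension of `q`. -/
noncomputable def nextLaw (q : S → A → (S →₀ ℝ)) : (S × A →₀ ℝ) →ₗ[ℝ] (S →₀ ℝ) :=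
  Finsupp.linearCombination ℝ fun p => q p.1 p.2

/-- The expected stage payoff under a state-action weight, i.e. the linear extension of `g`. -/
noncomputable def meanReward (g : S → A → ℝ) : (S × A →₀ ℝ) →ₗ[ℝ] ℝ :=
  expect fun p => g p.1 p.2

/-- The state-action law of a state drawn from `u` followed by an action drawn from `a x`. -/
noncomputable def jointLaw (u : S →₀ ℝ) (a : S → (A →₀ ℝ)) : S × A →₀ ℝ :=
  Finsupp.linearCombination ℝ
    (fun x => Finsupp.linearCombination ℝ (fun b => Finsupp.single (x, b) 1) (a x)) u

variable {q : S → A → (S →₀ ℝ)} {g : S → A → ℝ} {k : S × A →₀ ℝ} {u : S →₀ ℝ}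
  {a : S → (A →₀ ℝ)}

lemma expect_stateLaw (f : S → ℝ) (k : S × A →₀ ℝ) :
    expect f (stateLaw k) = expect (fun p => f p.1) k := by
  simp [stateLaw, expect_linearCombination]

lemma expect_nextLaw (q : S → A → (S →₀ ℝ)) (f : S → ℝ) (k : S × A →₀ ℝ) :
    expect f (nextLaw q k) = expect (fun p => expect f (q p.1 p.2)) k := by
  rw [nextLaw, expect_linearCombination]

lemma expect_jointLaw (F : S × A → ℝ) (u : S →₀ ℝ) (a : S → (A →₀ ℝ)) :
    expect F (jointLaw u a) = expect (fun x => expect (fun b => F (x, b)) (a x)) u := by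
  simp [jointLaw, expect_linearCombination]

lemma stateLaw_mem_Δf (hk : k ∈ Δf (S × A)) : stateLaw k ∈ Δf S :=
  linearCombination_mem_Δf hk fun _ => single_mem_Δf _

lemma nextLaw_mem_Δf (hq : ∀ x a, q x a ∈ Δf S) (hk : k ∈ Δf (S × A)) : nextLaw q k ∈ Δf S :=
  linearCombination_mem_Δf hk fun _ => hq _ _

lemma meanReward_mem_Icc (hg : ∀ x a, g x a ∈ Icc (0 : ℝ) 1) (hk : k ∈ Δf (S × A)) :
    meanReward g k ∈ Icc (0 : ℝ) 1 :=
  ⟨le_expect_of_le hk fun _ => (hg _ _).1, expect_le_of_le hk fun _ => (hg _ _).2⟩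

lemma jointLaw_mem_Δf (hu : u ∈ Δf S) (ha : ∀ x, a x ∈ Δf A) : jointLaw u a ∈ Δf (S × A) :=
  linearCombination_mem_Δf hu fun x => linearCombination_mem_Δf (ha x) fun _ => single_mem_Δf _

lemma stateLaw_jointLaw (u : S →₀ ℝ) (ha : ∀ x, a x ∈ Δf A) : stateLaw (jointLaw u a) = u :=
  ext_expect fun f => by simp only [expect_stateLaw, expect_jointLaw, expect_const (ha _)]

lemma nextLaw_jointLaw (q : S → A → (S →₀ ℝ)) (u : S →₀ ℝ) (a : S → (A →₀ ℝ)) :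
    nextLaw q (jointLaw u a) = Qmix q u a :=
  ext_expect fun f => by
    simp only [expect_nextLaw, expect_jointLaw, Qmix, map_finsuppSum, map_smul, smul_eq_mul]
    simp only [expect_apply]

lemma meanReward_jointLaw (g : S → A → ℝ) (u : S →₀ ℝ) (a : S → (A →₀ ℝ)) :
    meanReward g (jointLaw u a) = Gmix g u a := by
  rw [meanReward, expect_jointLaw]
  simp only [Gmix, expect_apply]

lemma stateLaw_apply [DecidableEq S] (k : S × A →₀ ℝ) (x : S) :
    stateLaw k x = expect (fun p => if p.1 = x then 1 else 0) k := by
  rw [← expect_indicator x, expect_stateLaw]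

lemma apply_le_stateLaw (hk : k ∈ Δf (S × A)) (x : S) (b : A) : k (x, b) ≤ stateLaw k x := by
  classical
  rw [stateLaw_apply, ← expect_indicator (x, b)]
  refine expect_mono hk fun p => ?_
  by_cases hp : p = (x, b)
  · simp [hp]
  · rw [if_neg hp]
    positivity

lemma expect_one_curry (k : S × A →₀ ℝ) (x : S) :
    expect (fun _ => 1) (k.curry x) = stateLaw k x := by
  classical
  rw [stateLaw_apply]
  induction k using Finsupp.induction_linear with
  | zero => rw [show Finsupp.curry 0 x = (0 : A →₀ ℝ) from Finsupp.ext fun _ => rfl]; simp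
  | add k k' hk hk' =>
    rw [show (k + k').curry x = k.curry x + k'.curry x from Finsupp.ext fun _ => rfl,
      map_add, map_add, hk, hk']
  | single p c => rw [Finsupp.curry_single]; by_cases hp : p.1 = x <;> simp [hp]

lemma jointLaw_apply (u : S →₀ ℝ) (a : S → (A →₀ ℝ)) (x : S) (b : A) :
    jointLaw u a (x, b) = u x * a x b := by
  classical
  rw [← expect_indicator (x, b), expect_jointLaw, ← expect_indicator x u, mul_comm,
    ← expect_const_mul]
  congr 2 with y
  by_cases hy : y = x
  · subst hy
    simp [expect_indicator]
  · simp [hy, expect_apply]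

/- Where the state law vanishes the conditional law of the action is irrelevant; it is taken to be
a Dirac mass so that it is still a probability. -/
lemma exists_jointLaw_stateLaw_eq [Nonempty A] (hk : k ∈ Δf (S × A)) :
    ∃ a : S → (A →₀ ℝ), (∀ x, a x ∈ Δf A) ∧ jointLaw (stateLaw k) a = k := by
  classical
  obtain ⟨b₀⟩ := ‹Nonempty A›
  let a : S → (A →₀ ℝ) := fun x =>
    if stateLaw k x = 0 then Finsupp.single b₀ 1 else (stateLaw k x)⁻¹ • k.curry x
  refine ⟨a, fun x => ?_, Finsupp.ext fun p => ?_⟩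
  · by_cases hx : stateLaw k x = 0
    · simpa only [a, if_pos hx] using single_mem_Δf b₀
    · simp only [a, if_neg hx]
      refine mem_Δf_iff.2 ⟨fun b => ?_, ?_⟩
      · exact mul_nonneg (inv_nonneg.2 ((stateLaw_mem_Δf hk).1 x)) (hk.1 (x, b))
      · rw [map_smul, expect_one_curry, smul_eq_mul, inv_mul_cancel₀ hx]
  · rw [jointLaw_apply]
    by_cases hx : stateLaw k p.1 = 0
    · rw [hx, zero_mul]
      exact (hk.1 p).antisymm ((apply_le_stateLaw hk p.1 p.2).trans_eq hx)
    · simp [a, hx]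

end Laws

section Plays

variable {S A : Type*} {q : S → A → (S →₀ ℝ)} {g : S → A → ℝ} {θ : ℕ → ℝ} {u : S →₀ ℝ}
  {m : ℕ → (S × A →₀ ℝ)}

/-- The data of a standard MDP: transitions are probabilities and rewards lie in `[0, 1]`. -/
structure IsMDP (q : S → A → (S →₀ ℝ)) (g : S → A → ℝ) : Prop where
  trans_mem : ∀ x a, q x a ∈ Δf S
  reward_mem : ∀ x a, g x a ∈ Icc (0 : ℝ) 1

/-- A nonnegative summable weight on stages, i.e. an evaluation that need not have total mass `1`;
unlike evaluations, these weights are stable under `shift`. -/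
structure IsStageWeight (θ : ℕ → ℝ) : Prop where
  nonneg : ∀ t, 0 ≤ θ t
  summable : Summable θ

/-- The weight `θ` seen from stage `n` on. -/
def shift (n : ℕ) (θ : ℕ → ℝ) : ℕ → ℝ := fun t => θ (t + n)

/-- A play from the state law `u`: a sequence of state-action laws in which each state law is the
next-state law of the previous stage. This is the deterministic lift of the MDP to `Δf S`. -/
structure IsPlay (q : S → A → (S →₀ ℝ)) (u : S →₀ ℝ) (m : ℕ → (S × A →₀ ℝ)) : Prop where
  mem : ∀ t, m t ∈ Δf (S × A)
  init : stateLaw (m 0) = u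
  step : ∀ t, stateLaw (m (t + 1)) = nextLaw q (m t)

/-- The payoff `∑ₜ θₜ G(mₜ)` of a sequence of state-action laws. -/
noncomputable def playPayoff (g : S → A → ℝ) (θ : ℕ → ℝ) (m : ℕ → (S × A →₀ ℝ)) : ℝ :=
  ∑' t, θ t * meanReward g (m t)

lemma IsEval.isStageWeight (h : IsEval θ) : IsStageWeight θ := by
  refine ⟨h.1, by_contra fun hs => ?_⟩
  have := h.2
  rw [tsum_eq_zero_of_not_summable hs] at this
  exact zero_ne_one this

lemma IsStageWeight.shift (h : IsStageWeight θ) (n : ℕ) : IsStageWeight (shift n θ) :=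
  ⟨fun _ => h.nonneg _, (summable_nat_add_iff n).2 h.summable⟩

lemma IsStageWeight.indicator (h : IsStageWeight θ) (s : Set ℕ) : IsStageWeight (s.indicator θ) :=
  ⟨indicator_nonneg fun t _ => h.nonneg t, h.summable.indicator s⟩

lemma IsStageWeight.tsum_shift_le (h : IsStageWeight θ) (n : ℕ) :
    ∑' t, Stmt16.shift n θ t ≤ ∑' t, θ t := by
  rw [← h.summable.sum_add_tsum_nat_add n]
  exact le_add_of_nonneg_left (Finset.sum_nonneg fun t _ => h.nonneg t)

lemma IsStageWeight.summable_mul_meanReward (h : IsStageWeight θ)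
    (hg : ∀ x a, g x a ∈ Icc (0 : ℝ) 1) (hm : ∀ t, m t ∈ Δf (S × A)) :
    Summable fun t => θ t * meanReward g (m t) :=
  h.summable.of_nonneg_of_le (fun t => mul_nonneg (h.nonneg t) (meanReward_mem_Icc hg (hm t)).1)
    fun t => mul_le_of_le_one_right (h.nonneg t) (meanReward_mem_Icc hg (hm t)).2

lemma playPayoff_nonneg (h : IsStageWeight θ) (hg : ∀ x a, g x a ∈ Icc (0 : ℝ) 1)
    (hm : ∀ t, m t ∈ Δf (S × A)) : 0 ≤ playPayoff g θ m :=
  tsum_nonneg fun t => mul_nonneg (h.nonneg t) (meanReward_mem_Icc hg (hm t)).1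

lemma playPayoff_le_tsum (h : IsStageWeight θ) (hg : ∀ x a, g x a ∈ Icc (0 : ℝ) 1)
    (hm : ∀ t, m t ∈ Δf (S × A)) : playPayoff g θ m ≤ ∑' t, θ t :=
  (h.summable_mul_meanReward hg hm).tsum_le_tsum
    (fun t => mul_le_of_le_one_right (h.nonneg t) (meanReward_mem_Icc hg (hm t)).2) h.summable

lemma playPayoff_succ (h : IsStageWeight θ) (hg : ∀ x a, g x a ∈ Icc (0 : ℝ) 1)
    (hm : ∀ t, m t ∈ Δf (S × A)) : playPayoff g θ m =
      θ 0 * meanReward g (m 0) + playPayoff g (shift 1 θ) fun t => m (t + 1) :=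
  (h.summable_mul_meanReward hg hm).tsum_eq_zero_add

lemma playPayoff_le_add_tsum_abs_sub {θ' : ℕ → ℝ} (h : IsStageWeight θ) (h' : IsStageWeight θ')
    (hg : ∀ x a, g x a ∈ Icc (0 : ℝ) 1) (hm : ∀ t, m t ∈ Δf (S × A)) :
    playPayoff g θ m ≤ playPayoff g θ' m + ∑' t, |θ t - θ' t| := by
  have hθ' := h'.summable_mul_meanReward hg hm
  have habs := (h.summable.sub h'.summable).abs
  rw [playPayoff, playPayoff, ← hθ'.tsum_add habs]
  refine (h.summable_mul_meanReward hg hm).tsum_le_tsum (fun t => ?_) (hθ'.add habs)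
  have hG := meanReward_mem_Icc hg (hm t)
  have := mul_le_mul_of_nonneg_right (le_abs_self (θ t - θ' t)) hG.1
  have := mul_le_of_le_one_right (abs_nonneg (θ t - θ' t)) hG.2
  linarith

lemma playPayoff_linearCombination {m : S → ℕ → (S × A →₀ ℝ)} (h : IsStageWeight θ)
    (hg : ∀ x a, g x a ∈ Icc (0 : ℝ) 1) (hm : ∀ x t, m x t ∈ Δf (S × A)) (u : S →₀ ℝ) :
    playPayoff g θ (fun t => Finsupp.linearCombination ℝ (fun x => m x t) u) =
      expect (fun x => playPayoff g θ (m x)) u := by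
  have hsum : ∀ x ∈ u.support, Summable fun t => u x * (θ t * meanReward g (m x t)) :=
    fun x _ => (h.summable_mul_meanReward hg (hm x)).mul_left _
  simp only [playPayoff, meanReward, expect_linearCombination] at hsum ⊢
  simp only [expect_apply _ u, Finsupp.sum, ← tsum_mul_left, Finset.mul_sum, ← mul_assoc] at hsum ⊢
  rw [← Summable.tsum_finsetSum hsum]
  simp only [mul_comm (θ _) (u _)]

lemma IsPlay.cons {k : S × A →₀ ℝ} (hk : k ∈ Δf (S × A)) (hm : IsPlay q (nextLaw q k) m) :
    IsPlay q (stateLaw k) (fun t => Nat.casesOn t k m) where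
  mem t := by cases t; exacts [hk, hm.mem _]
  init := rfl
  step t := by cases t; exacts [hm.init, hm.step _]

lemma IsPlay.tail (hm : IsPlay q u m) : IsPlay q (nextLaw q (m 0)) (fun t => m (t + 1)) :=
  ⟨fun _ => hm.mem _, hm.step 0, fun _ => hm.step _⟩

lemma IsPlay.linearCombination {m : S → ℕ → (S × A →₀ ℝ)} (hu : u ∈ Δf S)
    (hm : ∀ x, IsPlay q (Finsupp.single x 1) (m x)) :
    IsPlay q u (fun t => Finsupp.linearCombination ℝ (fun x => m x t) u) where
  mem t := linearCombination_mem_Δf hu fun x => (hm x).mem t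
  init := ext_expect fun f => by
    simp only [expect_stateLaw, expect_linearCombination]
    simp only [← expect_stateLaw, (hm _).init, expect_single, one_mul]
  step t := ext_expect fun f => by
    simp only [expect_stateLaw, expect_nextLaw, expect_linearCombination]
    simp only [← expect_stateLaw, ← expect_nextLaw, (hm _).step]

end Plays

section Strategies

variable {S A : Type*} {q : S → A → (S →₀ ℝ)} {g : S → A → ℝ} {θ : ℕ → ℝ} {u : S →₀ ℝ}
  {m : ℕ → (S × A →₀ ℝ)} {σ : List (S × A) → S → (A →₀ ℝ)}

/-- The law of the state-action pair at stage `t`, from the state `x` under the strategy `σ`. -/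
noncomputable def stageLaw (q : S → A → (S →₀ ℝ)) (σ : List (S × A) → S → (A →₀ ℝ)) (x : S)
    (t : ℕ) : S × A →₀ ℝ :=
  Finsupp.linearCombination ℝ (fun hx => Finsupp.linearCombination ℝ
    (fun b => Finsupp.single (hx.2, b) 1) (σ hx.1 hx.2)) (hist q σ x t)

lemma expect_stageLaw (q : S → A → (S →₀ ℝ)) (σ : List (S × A) → S → (A →₀ ℝ)) (x : S) (t : ℕ)
    (F : S × A → ℝ) : expect F (stageLaw q σ x t) =
      expect (fun hx => expect (fun b => F (hx.2, b)) (σ hx.1 hx.2)) (hist q σ x t) := by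
  simp [stageLaw, expect_linearCombination]

lemma hist_succ_eq_linearCombination (q : S → A → (S →₀ ℝ)) (σ : List (S × A) → S → (A →₀ ℝ))
    (x : S) (t : ℕ) : hist q σ x (t + 1) =
      Finsupp.linearCombination ℝ (fun hx => Finsupp.linearCombination ℝ (fun b =>
        Finsupp.linearCombination ℝ (fun x' => Finsupp.single (hx.1 ++ [(hx.2, b)], x') 1)
          (q hx.2 b)) (σ hx.1 hx.2)) (hist q σ x t) := by
  simp only [hist, Finsupp.linearCombination_apply, Finsupp.smul_sum, Finsupp.smul_single,
    smul_eq_mul, mul_one, mul_assoc]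

lemma expect_hist_succ (q : S → A → (S →₀ ℝ)) (σ : List (S × A) → S → (A →₀ ℝ)) (x : S) (t : ℕ)
    (F : List (S × A) × S → ℝ) : expect F (hist q σ x (t + 1)) =
      expect (fun hx => expect (fun b => expect (fun x' => F (hx.1 ++ [(hx.2, b)], x')) (q hx.2 b))
        (σ hx.1 hx.2)) (hist q σ x t) := by
  simp [hist_succ_eq_linearCombination, expect_linearCombination]

lemma hist_mem_Δf (hq : ∀ x a, q x a ∈ Δf S) (hσ : IsStrat σ) (x : S) (t : ℕ) :
    hist q σ x t ∈ Δf (List (S × A) × S) := by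
  induction t with
  | zero => exact single_mem_Δf _
  | succ t ih =>
    rw [hist_succ_eq_linearCombination]
    exact linearCombination_mem_Δf ih fun hx => linearCombination_mem_Δf (hσ _ _) fun b =>
      linearCombination_mem_Δf (hq _ _) fun x' => single_mem_Δf _

lemma expect_hist_congr {F F' : List (S × A) × S → ℝ} {t : ℕ}
    (h : ∀ hx, hx.1.length = t → F hx = F' hx) (x : S) :
    expect F (hist q σ x t) = expect F' (hist q σ x t) := by
  induction t generalizing F F' with
  | zero => simp [hist, h]
  | succ t ih =>
    simp only [expect_hist_succ]
    refine ih fun hx hlen => ?_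
    congr! 6
    exact h _ (by simp [hlen])

lemma isPlay_stageLaw (hq : ∀ x a, q x a ∈ Δf S) (hσ : IsStrat σ) (x : S) :
    IsPlay q (Finsupp.single x 1) (stageLaw q σ x) where
  mem t := linearCombination_mem_Δf (hist_mem_Δf hq hσ x t) fun _ =>
    linearCombination_mem_Δf (hσ _ _) fun _ => single_mem_Δf _
  init := ext_expect fun f => by
    simp only [expect_stateLaw, expect_stageLaw, expect_const (hσ _ _), hist, expect_single]
  step t := ext_expect fun f => by
    simp only [expect_stateLaw, expect_nextLaw, expect_stageLaw, expect_const (hσ _ _),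
      expect_hist_succ]

lemma stageLaw_eq_jointLaw_of_markov {a : ℕ → S → (A →₀ ℝ)} (ha : ∀ t x, a t x ∈ Δf A) (x : S)
    (t : ℕ) : stageLaw q (fun h y => a h.length y) x t =
      jointLaw (stateLaw (stageLaw q (fun h y => a h.length y) x t)) (a t) := by
  refine ext_expect fun F => ?_
  simp only [expect_jointLaw, expect_stateLaw, expect_stageLaw, expect_const (ha _ _)]
  exact expect_hist_congr (fun hx hlen => by rw [hlen]) x

/- Disintegrating every stage of a play gives a Markov strategy, the same for all initial states. -/
lemma IsPlay.exists_isStrat [Nonempty A] (hq : ∀ x a, q x a ∈ Δf S) (hu : u ∈ Δf S)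
    (hm : IsPlay q u m) : ∃ σ, IsStrat σ ∧
      ∀ t, Finsupp.linearCombination ℝ (fun x => stageLaw q σ x t) u = m t := by
  choose a ha hjoint using fun t => exists_jointLaw_stateLaw_eq (hm.mem t)
  have hσ : IsStrat fun (h : List (S × A)) y => a h.length y := fun h y => ha _ _
  have hplay := IsPlay.linearCombination hu fun x => isPlay_stageLaw hq hσ x
  refine ⟨_, hσ, fun t => ?_⟩
  have of_stateLaw_eq : ∀ t, stateLaw (Finsupp.linearCombination ℝ
      (fun x => stageLaw q (fun h y => a h.length y) x t) u) = stateLaw (m t) →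
      Finsupp.linearCombination ℝ (fun x => stageLaw q (fun h y => a h.length y) x t) u = m t := by
    intro t ht
    refine ext_expect fun F => ?_
    rw [← hjoint t, ← ht, expect_linearCombination, expect_jointLaw, expect_stateLaw,
      expect_linearCombination]
    congr 2 with x
    conv_lhs => rw [stageLaw_eq_jointLaw_of_markov ha, expect_jointLaw, expect_stateLaw]
  induction t with
  | zero => exact of_stateLaw_eq 0 (by rw [hplay.init, hm.init])
  | succ t ih => exact of_stateLaw_eq (t + 1) (by rw [hplay.step, hm.step, ih])

lemma payoff_eq_playPayoff (q : S → A → (S →₀ ℝ)) (g : S → A → ℝ) (θ : ℕ → ℝ)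
    (σ : List (S × A) → S → (A →₀ ℝ)) (x : S) :
    payoff q g θ σ x = playPayoff g θ (stageLaw q σ x) := by
  simp only [payoff, playPayoff, meanReward, expect_stageLaw]
  simp only [stagePay, expect_apply, Finsupp.sum, Finset.mul_sum, mul_assoc]

end Strategies

section Value

variable {S A : Type*} {q : S → A → (S →₀ ℝ)} {g : S → A → ℝ} {θ θ' : ℕ → ℝ}
  {u : S →₀ ℝ} {m : ℕ → (S × A →₀ ℝ)}

lemma payoff_mem_Icc (h : IsMDP q g) (hθ : IsStageWeight θ) {σ : List (S × A) → S → (A →₀ ℝ)}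
    (hσ : IsStrat σ) (x : S) : payoff q g θ σ x ∈ Icc 0 (∑' t, θ t) := by
  have hmem := (isPlay_stageLaw h.trans_mem hσ x).mem
  rw [payoff_eq_playPayoff]
  exact ⟨playPayoff_nonneg hθ h.reward_mem hmem, playPayoff_le_tsum hθ h.reward_mem hmem⟩

lemma value_const_mul {c : ℝ} (hc : 0 ≤ c) (θ : ℕ → ℝ) (x : S) :
    value q g (fun t => c * θ t) x = c * value q g θ x := by
  rw [value, value, ← smul_eq_mul, ← Real.sSup_smul_of_nonneg hc]
  congr 1 with y
  simp [mem_smul_set, payoff, mul_assoc, tsum_mul_left, eq_comm (a := y), and_comm,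
    ← exists_and_left]

lemma payoff_le_value (h : IsMDP q g) (hθ : IsStageWeight θ) {σ : List (S × A) → S → (A →₀ ℝ)}
    (hσ : IsStrat σ) (x : S) : payoff q g θ σ x ≤ value q g θ x :=
  le_csSup ⟨_, by rintro _ ⟨σ, hσ, rfl⟩; exact (payoff_mem_Icc h hθ hσ x).2⟩ ⟨σ, hσ, rfl⟩

/-- The value of drawing the current state and action from `k` and playing optimally afterwards. -/
noncomputable def stepValue (q : S → A → (S →₀ ℝ)) (g : S → A → ℝ) (θ : ℕ → ℝ) :
    (S × A →₀ ℝ) →ₗ[ℝ] ℝ :=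
  θ 0 • meanReward g + expect (value q g (shift 1 θ)) ∘ₗ nextLaw q

lemma stepValue_apply (q : S → A → (S →₀ ℝ)) (g : S → A → ℝ) (θ : ℕ → ℝ) (k : S × A →₀ ℝ) :
    stepValue q g θ k = θ 0 * meanReward g k + expect (value q g (shift 1 θ)) (nextLaw q k) := rfl

lemma stepValue_eq_expect (q : S → A → (S →₀ ℝ)) (g : S → A → ℝ) (θ : ℕ → ℝ)
    (k : S × A →₀ ℝ) : stepValue q g θ k =
      expect (fun p => θ 0 * g p.1 p.2 + expect (value q g (shift 1 θ)) (q p.1 p.2)) k := by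
  rw [stepValue_apply, meanReward, expect_nextLaw, ← expect_const_mul, ← expect_add]

variable [Nonempty A]

lemma exists_isStrat (S A : Type*) [Nonempty A] :
    ∃ σ : List (S × A) → S → (A →₀ ℝ), IsStrat σ :=
  ‹Nonempty A›.elim fun b => ⟨fun _ _ => Finsupp.single b 1, fun _ _ => single_mem_Δf b⟩

lemma exists_isStrat_value_sub_lt_payoff (q : S → A → (S →₀ ℝ)) (g : S → A → ℝ) (θ : ℕ → ℝ) (x : S)
    {η : ℝ} (hη : 0 < η) : ∃ σ, IsStrat σ ∧ value q g θ x - η < payoff q g θ σ x := by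
  obtain ⟨σ₀, hσ₀⟩ := exists_isStrat S A
  obtain ⟨_, ⟨σ, hσ, rfl⟩, hlt⟩ := exists_lt_of_lt_csSup
    (s := {c : ℝ | ∃ σ, IsStrat σ ∧ c = payoff q g θ σ x}) ⟨_, σ₀, hσ₀, rfl⟩
    (sub_lt_self (value q g θ x) hη)
  exact ⟨σ, hσ, hlt⟩

lemma value_nonneg (h : IsMDP q g) (hθ : IsStageWeight θ) (x : S) : 0 ≤ value q g θ x := by
  obtain ⟨σ, hσ⟩ := exists_isStrat S A
  exact (payoff_mem_Icc h hθ hσ x).1.trans (payoff_le_value h hθ hσ x)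

lemma value_le_tsum (h : IsMDP q g) (hθ : IsStageWeight θ) (x : S) :
    value q g θ x ≤ ∑' t, θ t := by
  refine le_of_forall_pos_lt_add fun η hη => ?_
  obtain ⟨σ, hσ, hlt⟩ := exists_isStrat_value_sub_lt_payoff q g θ x hη
  linarith [(payoff_mem_Icc h hθ hσ x).2]

lemma IsPlay.playPayoff_le_expect_value (h : IsMDP q g) (hθ : IsStageWeight θ) (hu : u ∈ Δf S)
    (hm : IsPlay q u m) : playPayoff g θ m ≤ expect (value q g θ) u := by
  obtain ⟨σ, hσ, hlaw⟩ := hm.exists_isStrat h.trans_mem hu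
  calc playPayoff g θ m
      = expect (fun x => playPayoff g θ (stageLaw q σ x)) u := by
        rw [← playPayoff_linearCombination hθ h.reward_mem fun x =>
          (isPlay_stageLaw h.trans_mem hσ x).mem]
        simp only [hlaw]
    _ ≤ expect (value q g θ) u := expect_mono hu fun x => by
        rw [← payoff_eq_playPayoff]
        exact payoff_le_value h hθ hσ x

lemma exists_isPlay_expect_value_sub_le (h : IsMDP q g) (hθ : IsStageWeight θ) (hu : u ∈ Δf S)
    {η : ℝ} (hη : 0 < η) :
    ∃ m, IsPlay q u m ∧ expect (value q g θ) u - η ≤ playPayoff g θ m := by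
  choose σ hσ hlt using fun x => exists_isStrat_value_sub_lt_payoff q g θ x hη
  have hplay := fun x => isPlay_stageLaw h.trans_mem (hσ x) x
  refine ⟨_, IsPlay.linearCombination hu hplay, ?_⟩
  rw [playPayoff_linearCombination hθ h.reward_mem fun x => (hplay x).mem, sub_le_iff_le_add,
    ← expect_add_const hu]
  refine expect_mono hu fun x => ?_
  rw [← payoff_eq_playPayoff, ← sub_le_iff_le_add]
  exact (hlt x).le

lemma expect_value_le_of_forall_isPlay (h : IsMDP q g) (hθ : IsStageWeight θ) (hu : u ∈ Δf S)
    {c : ℝ} (hc : ∀ m, IsPlay q u m → playPayoff g θ m ≤ c) : expect (value q g θ) u ≤ c := by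
  refine le_of_forall_pos_le_add fun η hη => ?_
  obtain ⟨m, hm, hle⟩ := exists_isPlay_expect_value_sub_le h hθ hu hη
  linarith [hc m hm]

lemma stepValue_le_expect_value (h : IsMDP q g) (hθ : IsStageWeight θ) {k : S × A →₀ ℝ}
    (hk : k ∈ Δf (S × A)) : stepValue q g θ k ≤ expect (value q g θ) (stateLaw k) := by
  rw [stepValue_apply, ← le_sub_iff_add_le']
  refine expect_value_le_of_forall_isPlay h (hθ.shift 1) (nextLaw_mem_Δf h.trans_mem hk)
    fun m hm => ?_
  have hcons := hm.cons hk
  have := hcons.playPayoff_le_expect_value h hθ (stateLaw_mem_Δf hk)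
  rw [playPayoff_succ hθ h.reward_mem hcons.mem] at this
  rwa [le_sub_iff_add_le']

lemma IsPlay.playPayoff_le_stepValue (h : IsMDP q g) (hθ : IsStageWeight θ) (hm : IsPlay q u m) :
    playPayoff g θ m ≤ stepValue q g θ (m 0) := by
  rw [playPayoff_succ hθ h.reward_mem hm.mem, stepValue_apply]
  exact add_le_add_right (hm.tail.playPayoff_le_expect_value h (hθ.shift 1)
    (nextLaw_mem_Δf h.trans_mem (hm.mem 0))) _

lemma exists_expect_value_sub_le_stepValue (h : IsMDP q g) (hθ : IsStageWeight θ) (hu : u ∈ Δf S)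
    {η : ℝ} (hη : 0 < η) : ∃ k ∈ Δf (S × A), stateLaw k = u ∧
      expect (value q g θ) u - η ≤ stepValue q g θ k := by
  obtain ⟨m, hm, hle⟩ := exists_isPlay_expect_value_sub_le h hθ hu hη
  exact ⟨m 0, hm.mem 0, hm.init, hle.trans (hm.playPayoff_le_stepValue h hθ)⟩

lemma value_le_add_tsum_abs_sub (h : IsMDP q g) (hθ : IsStageWeight θ) (hθ' : IsStageWeight θ')
    (x : S) : value q g θ x ≤ value q g θ' x + ∑' t, |θ t - θ' t| := by
  have hu := single_mem_Δf x
  have : expect (value q g θ) (Finsupp.single x 1) ≤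
      expect (value q g θ') (Finsupp.single x 1) + ∑' t, |θ t - θ' t| :=
    expect_value_le_of_forall_isPlay h hθ hu fun m hm =>
      (playPayoff_le_add_tsum_abs_sub hθ hθ' h.reward_mem hm.mem).trans
        (add_le_add_left (hm.playPayoff_le_expect_value h hθ' hu) _)
  simpa using this

lemma action_le_value (h : IsMDP q g) (hθ : IsStageWeight θ) (x : S) (a : A) :
    θ 0 * g x a + expect (value q g (shift 1 θ)) (q x a) ≤ value q g θ x := by
  simpa [stepValue_eq_expect, stateLaw] using
    stepValue_le_expect_value h hθ (single_mem_Δf (x, a))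

lemma value_le_of_forall_action_le (h : IsMDP q g) (hθ : IsStageWeight θ) (x : S) {c : ℝ}
    (hc : ∀ a, θ 0 * g x a + expect (value q g (shift 1 θ)) (q x a) ≤ c) :
    value q g θ x ≤ c := by
  suffices expect (value q g θ) (Finsupp.single x 1) ≤ c by simpa using this
  refine expect_value_le_of_forall_isPlay h hθ (single_mem_Δf x) fun m hm => ?_
  obtain ⟨b, hb, hjoint⟩ := exists_jointLaw_stateLaw_eq (hm.mem 0)
  refine (hm.playPayoff_le_stepValue h hθ).trans ?_
  rw [stepValue_eq_expect, ← hjoint, hm.init, expect_jointLaw, expect_single, one_mul]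
  exact expect_le_of_le (hb x) hc

lemma tendsto_value_indicator_Iio (h : IsMDP q g) (hθ : IsStageWeight θ) (x : S) :
    Tendsto (fun n => value q g ((Iio n).indicator θ) x) atTop (𝓝 (value q g θ x)) := by
  have hdist : ∀ n, ∑' t, |θ t - (Iio n).indicator θ t| = ∑' t, θ (t + n) := fun n => by
    rw [← (hθ.summable.sub (hθ.indicator (Iio n)).summable).abs.sum_add_tsum_nat_add n,
      Finset.sum_eq_zero fun t ht => by simp [Finset.mem_range.1 ht], zero_add]
    simp [abs_of_nonneg (hθ.nonneg _)]
  refine tendsto_iff_dist_tendsto_zero.2 (squeeze_zero (fun _ => dist_nonneg) (fun n => ?_)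
    (tendsto_sum_nat_add θ))
  rw [Real.dist_eq, abs_sub_le_iff, ← hdist]
  have h₁ := value_le_add_tsum_abs_sub h hθ (hθ.indicator (Iio n)) x
  have h₂ := value_le_add_tsum_abs_sub h (hθ.indicator (Iio n)) hθ x
  simp only [abs_sub_comm (θ _)] at h₁ ⊢
  constructor <;> linarith

end Value

section ConeLipschitz

variable {E : Type*} [AddCommGroup E] [Module ℝ E] {X : Set E}

/-- The positively homogeneous extension of `f` to the cone over `X` is `c`-Lipschitz for `p`.
For the ℓ¹ norm and `c = 1` this is the inequality defining `D₁`. -/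
def IsConeLipschitz (p : Seminorm ℝ E) (c : ℝ) (f : X → ℝ) : Prop :=
  ∀ (x y : X) (α β : ℝ), 0 ≤ α → 0 ≤ β →
    α * f x - β * f y ≤ c * p (α • (x : E) - β • (y : E))

variable {p : Seminorm ℝ E} {c : ℝ} {f : X → ℝ}

lemma isConeLipschitz_zero_iff : IsConeLipschitz p 0 f ↔ f = 0 := by
  refine ⟨fun hf => funext fun x => le_antisymm ?_ ?_, fun hf => ?_⟩
  · simpa using hf x x 1 0 zero_le_one le_rfl
  · simpa using hf x x 0 1 le_rfl zero_le_one
  · simp [IsConeLipschitz, hf]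

lemma IsConeLipschitz.const_mul {r : ℝ} (hr : 0 ≤ r) (hf : IsConeLipschitz p c f) :
    IsConeLipschitz p (r * c) fun x => r * f x := fun x y α β hα hβ => by
  linarith [mul_le_mul_of_nonneg_left (hf x y α β hα hβ) hr]

lemma IsConeLipschitz.abs_sub_le (hf : IsConeLipschitz p 1 f) (x y : X) :
    |f x - f y| ≤ p ((x : E) - y) := by
  refine abs_sub_le_iff.2 ⟨?_, ?_⟩
  · simpa using hf x y 1 1 zero_le_one zero_le_one
  · simpa [map_sub_rev p (x : E)] using hf y x 1 1 zero_le_one zero_le_one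

lemma IsConeLipschitz.le_apply_add (hf : IsConeLipschitz p 1 f) (e : E) {s : ℝ} (hs : 0 ≤ s)
    (z : X) : -p e ≤ s * f z + p (e - s • (z : E)) := by
  have hz : -(s * f z) ≤ p (s • (z : E)) := by simpa using hf z z 0 s le_rfl hs
  have htri : p (s • (z : E)) ≤ p e + p (e - s • (z : E)) := by
    simpa using map_sub_le_add p e (e - s • (z : E))
  linarith

/-- McShane's extension formula, with the infimum taken over the whole cone generated by `X`. -/
noncomputable def coneExtension (p : Seminorm ℝ E) (f : X → ℝ) (e : E) : ℝ :=
  ⨅ z : X × ℝ≥0, z.2 * f z.1 + p (e - (z.2 : ℝ) • (z.1 : E))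

lemma IsConeLipschitz.mul_coneExtension_le (hf : IsConeLipschitz p 1 f) (e : E) {α s : ℝ}
    (hα : 0 ≤ α) (hs : 0 ≤ s) (z : X) :
    α * coneExtension p f e ≤ s * f z + p (α • e - s • (z : E)) := by
  rcases hα.eq_or_lt with rfl | hpos
  · simpa using hf.le_apply_add 0 hs z
  · have hinf : coneExtension p f e ≤ s / α * f z + p (e - (s / α) • (z : E)) :=
      ciInf_le ⟨-p e, forall_mem_range.2 fun z : X × ℝ≥0 => hf.le_apply_add e z.2.2 z.1⟩
        (z, ⟨s / α, by positivity⟩)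
    have hscale : α * p (e - (s / α) • (z : E)) = p (α • e - s • (z : E)) := by
      rw [← Real.norm_of_nonneg hα, ← map_smul_eq_mul p, Real.norm_of_nonneg hα, smul_sub,
        smul_smul, mul_div_cancel₀ s hpos.ne']
    calc α * coneExtension p f e ≤ α * (s / α * f z + p (e - (s / α) • (z : E))) :=
          mul_le_mul_of_nonneg_left hinf hα
      _ = s * f z + p (α • e - s • (z : E)) := by rw [mul_add, hscale]; field_simp

lemma isConeLipschitz_coneExtension [Nonempty X] (hf : IsConeLipschitz p 1 f) (Y : Set E) :
    IsConeLipschitz p 1 fun y : Y => coneExtension p f (y : E) := fun x y α β hα hβ => by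
  suffices α * coneExtension p f (x : E) - p (α • (x : E) - β • (y : E)) ≤
      β * coneExtension p f (y : E) by linarith
  rw [coneExtension.eq_1 p f y, Real.mul_iInf_of_nonneg hβ]
  refine le_ciInf fun z => ?_
  have hx := hf.mul_coneExtension_le (x : E) hα (mul_nonneg hβ z.2.2) z.1
  have htri := map_add_le_add p (α • (x : E) - β • (y : E)) (β • ((y : E) - (z.2 : ℝ) • (z.1 : E)))
  rw [map_smul_eq_mul p, Real.norm_of_nonneg hβ, smul_sub, smul_smul, sub_add_sub_cancel] at htri
  have hcoe : z.2.1 = (z.2 : ℝ) := rfl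
  rw [hcoe] at hx
  linarith

lemma coneExtension_coe (hf : IsConeLipschitz p 1 f) (x : X) :
    coneExtension p f (x : E) = f x := by
  have : Nonempty X := ⟨x⟩
  refine le_antisymm ?_ (le_ciInf fun z => ?_)
  · simpa using hf.mul_coneExtension_le (x : E) zero_le_one zero_le_one x
  · simpa [sub_le_iff_le_add', add_comm] using hf x z.1 1 z.2 zero_le_one z.2.2

lemma equicontinuous_of_isConeLipschitz [TopologicalSpace E] [ContinuousSub E] (hp : Continuous p)
    {ι : Type*} {F : ι → X → ℝ} (hF : ∀ i, IsConeLipschitz p 1 (F i)) : Equicontinuous F := by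
  refine fun x => Metric.equicontinuousAt_of_continuity_modulus (fun y : X => p ((x : E) - y)) ?_ F
    (Eventually.of_forall fun y i => (hF i).abs_sub_le x y)
  have hcont : Continuous fun y : X => p ((x : E) - y) := by fun_prop
  simpa using hcont.tendsto x

variable {A : Type*} {q : X → A → (X →₀ ℝ)} {g : X → A → ℝ} {θ : ℕ → ℝ}

lemma IsConeLipschitz.expect_trans (hf : IsConeLipschitz p c f) (hc : 0 ≤ c)
    (hq : ∀ f, IsConeLipschitz p 1 f → ∀ a, IsConeLipschitz p 1 fun x => expect f (q x a)) (a : A) :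
    IsConeLipschitz p c fun x => expect f (q x a) := by
  rcases hc.eq_or_lt with rfl | hpos
  · rw [isConeLipschitz_zero_iff] at hf ⊢
    ext x
    simp [hf, expect_apply]
  · have hunit : IsConeLipschitz p 1 fun x => c⁻¹ * f x := by
      simpa [hpos.ne'] using hf.const_mul (inv_nonneg.2 hc)
    have := (hq _ hunit a).const_mul hc
    simpa only [expect_const_mul, mul_inv_cancel_left₀ hpos.ne', mul_one] using this

variable [Nonempty A]

lemma isConeLipschitz_value_of_eq_zero (h : IsMDP q g)
    (hq : ∀ f, IsConeLipschitz p 1 f → ∀ a, IsConeLipschitz p 1 fun x => expect f (q x a))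
    (hg : ∀ a, IsConeLipschitz p 1 fun x => g x a) {n : ℕ} (hθ : IsStageWeight θ)
    (hn : ∀ t ≥ n, θ t = 0) : IsConeLipschitz p (∑' t, θ t) (value q g θ) := by
  induction n generalizing θ with
  | zero =>
    have hzero : ∀ x, value q g θ x = 0 := fun x =>
      (value_nonneg h hθ x).antisymm' ((value_le_tsum h hθ x).trans_eq (by simp [hn]))
    intro x y α β _ _
    simp [hzero, hn]
  | succ n ih =>
    have hih := ih (hθ.shift 1) fun t ht => hn (t + 1) (by lia)
    have hsum : ∑' t, θ t = θ 0 + ∑' t, shift 1 θ t := hθ.summable.tsum_eq_zero_add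
    intro x y α β hα hβ
    have haction : ∀ a, α * (θ 0 * g x a + expect (value q g (shift 1 θ)) (q x a)) ≤
        β * value q g θ y + (∑' t, θ t) * p (α • (x : E) - β • (y : E)) := fun a => by
      have hreward := mul_le_mul_of_nonneg_left (hg a x y α β hα hβ) (hθ.nonneg 0)
      have hnext := hih.expect_trans (tsum_nonneg (hθ.shift 1).nonneg) hq a x y α β hα hβ
      have hvalue := mul_le_mul_of_nonneg_left (action_le_value h hθ y a) hβ
      rw [hsum]
      linarith
    rcases hα.eq_or_lt with rfl | hpos
    · have := haction (Classical.arbitrary A)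
      linarith
    · rw [sub_le_iff_le_add', ← le_div_iff₀' hpos]
      exact value_le_of_forall_action_le h hθ x fun a => (le_div_iff₀' hpos).2 (haction a)

lemma isConeLipschitz_value (h : IsMDP q g)
    (hq : ∀ f, IsConeLipschitz p 1 f → ∀ a, IsConeLipschitz p 1 fun x => expect f (q x a))
    (hg : ∀ a, IsConeLipschitz p 1 fun x => g x a) (hθ : IsStageWeight θ) :
    IsConeLipschitz p (∑' t, θ t) (value q g θ) := fun x y α β hα hβ => by
  have hle : ∀ n, ∑' t, (Iio n).indicator θ t ≤ ∑' t, θ t := fun n =>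
    (hθ.indicator _).summable.tsum_le_tsum (indicator_le_self' fun t _ => hθ.nonneg t) hθ.summable
  have hlip : ∀ n, α * value q g ((Iio n).indicator θ) x - β * value q g ((Iio n).indicator θ) y ≤
      (∑' t, θ t) * p (α • (x : E) - β • (y : E)) := fun n =>
    (isConeLipschitz_value_of_eq_zero h hq hg (hθ.indicator (Iio n))
      (fun t ht => indicator_of_notMem (notMem_Iio.2 ht) θ) x y α β hα hβ).trans
      (mul_le_mul_of_nonneg_right (hle n) (apply_nonneg p _))
  exact le_of_tendsto' (((tendsto_value_indicator_Iio h hθ x).const_mul α).sub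
    ((tendsto_value_indicator_Iio h hθ y).const_mul β)) hlip

end ConeLipschitz

section Minimax

lemma exists_finite_subset_forall_stdSimplex {ι : Type*} [Fintype ι] {C : Set (ι → ℝ)} {b : ℝ}
    (h : ∀ l ∈ stdSimplex ℝ ι, ∃ c ∈ C, b < l ⬝ᵥ c) :
    ∃ s ⊆ C, s.Finite ∧ ∀ l ∈ stdSimplex ℝ ι, ∃ c ∈ s, b < l ⬝ᵥ c := by
  obtain ⟨s, hsC, hs, hcover⟩ := (isCompact_stdSimplex ℝ ι).elim_finite_subcover_image
    (b := C) (c := fun c => {l | b < l ⬝ᵥ c}) (fun c _ => isOpen_lt (by fun_prop) (by fun_prop))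
    fun l hl => by simpa using h l hl
  exact ⟨s, hsC, hs, fun l hl => by simpa using hcover hl⟩

lemma exists_forall_lt_of_forall_stdSimplex {ι : Type*} [Fintype ι] {C : Set (ι → ℝ)}
    (hC : Convex ℝ C) (hne : C.Nonempty) {b : ℝ}
    (h : ∀ l ∈ stdSimplex ℝ ι, ∃ c ∈ C, b < l ⬝ᵥ c) : ∃ c ∈ C, ∀ i, b < c i := by
  classical
  rcases isEmpty_or_nonempty ι with _ | _
  · exact ⟨hne.some, hne.some_mem, isEmptyElim⟩
  obtain ⟨s, hsC, hs, hcover⟩ := exists_finite_subset_forall_stdSimplex h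
  let B : (ι → ℝ) →ₗ[ℝ] (ι → ℝ) →ₗ[ℝ] ℝ := dotProductBilin ℝ ℝ
  have hcont : ∀ c, Continuous fun l : ι → ℝ => l ⬝ᵥ c := fun c => by fun_prop
  have hcont' : ∀ l, Continuous fun c : ι → ℝ => l ⬝ᵥ c := fun l => by fun_prop
  obtain ⟨c, hc, hlt⟩ := Sion.exists_lt_iInf_of_lt_iInf_of_finite
    (X := stdSimplex ℝ ι) (f := fun l c => l ⬝ᵥ c)
    ⟨_, single_mem_stdSimplex ℝ (Classical.arbitrary ι)⟩ (isCompact_stdSimplex ℝ ι)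
    (fun c _ => (hcont c).lowerSemicontinuous.lowerSemicontinuousOn _)
    (fun c _ => ((B.flip c).convexOn (convex_stdSimplex ℝ ι)).quasiconvexOn) hC
    (fun l _ => (hcont' l).upperSemicontinuous.upperSemicontinuousOn _)
    (fun l _ => ((B l).concaveOn hC).quasiconcaveOn) (convex_stdSimplex ℝ ι) hs hsC hcover
  exact ⟨c, hc, fun i => by simpa using hlt _ (single_mem_stdSimplex ℝ i)⟩

end Minimax

section UniformPlays

variable {S A : Type*} {q : S → A → (S →₀ ℝ)} {g : S → A → ℝ} {u : S →₀ ℝ}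

lemma exists_isPlay_of_invariant {E : Type*} (acc : ℕ → E → (S × A →₀ ℝ) → E)
    (P : ℕ → E → (S →₀ ℝ) → Prop) {e₀ : E} (hzero : P 0 e₀ u)
    (hsucc : ∀ t e v, P t e v →
      ∃ k ∈ Δf (S × A), stateLaw k = v ∧ P (t + 1) (acc t e k) (nextLaw q k)) :
    ∃ (m : ℕ → (S × A →₀ ℝ)) (e : ℕ → E), IsPlay q u m ∧ e 0 = e₀ ∧
      (∀ t, e (t + 1) = acc t (e t) (m t)) ∧ ∀ t, P t (e t) (stateLaw (m t)) := by
  choose! k hk hstate hP using hsucc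
  let z : ℕ → E × (S →₀ ℝ) := fun t => t.rec (e₀, u) fun t z =>
    (acc t z.1 (k t z.1 z.2), nextLaw q (k t z.1 z.2))
  have hz : ∀ t, P t (z t).1 (z t).2 := fun t => by
    induction t with
    | zero => exact hzero
    | succ t ih => exact hP t _ _ ih
  refine ⟨fun t => k t (z t).1 (z t).2, fun t => (z t).1,
    ⟨fun t => hk t _ _ (hz t), hstate 0 _ _ (hz 0), fun t => hstate (t + 1) _ _ (hz (t + 1))⟩,
    rfl, fun t => rfl, fun t => ?_⟩
  rw [hstate t _ _ (hz t)]
  exact hz t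

lemma shift_one_shift (n : ℕ) (θ : ℕ → ℝ) : shift 1 (shift n θ) = shift (n + 1) θ :=
  funext fun t => congrArg θ (by ring)

lemma stepValue_le_add {θ θ' : ℕ → ℝ} {η : ℝ} (h : IsMDP q g) {k : S × A →₀ ℝ} (hk : k ∈ Δf (S × A))
    (hzero : θ 0 ≤ θ' 0 + η) (hsucc : ∀ x, value q g (shift 1 θ) x ≤ value q g (shift 1 θ') x + η)
    (hη : 0 ≤ η) : stepValue q g θ k ≤ stepValue q g θ' k + 2 * η := by
  have hG := meanReward_mem_Icc h.reward_mem hk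
  have hnext := nextLaw_mem_Δf h.trans_mem hk
  have hvalue := (expect_mono hnext hsucc).trans_eq (expect_add_const hnext _ η)
  have hreward := mul_le_mul_of_nonneg_right hzero hG.1
  rw [stepValue_apply, stepValue_apply]
  linarith [mul_le_of_le_one_right hη hG.2]

lemma shift_sum {ι : Type*} (s : Finset ι) (l : ι → ℝ) (Θ : ι → ℕ → ℝ) (n : ℕ) :
    shift n (∑ i ∈ s, l i • Θ i) = ∑ i ∈ s, l i • shift n (Θ i) := by
  ext t
  simp [shift]

lemma IsStageWeight.sum {ι : Type*} {s : Finset ι} {l : ι → ℝ} {Θ : ι → ℕ → ℝ}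
    (hl : ∀ i, 0 ≤ l i) (hΘ : ∀ i, IsStageWeight (Θ i)) : IsStageWeight (∑ i ∈ s, l i • Θ i) where
  nonneg t := by
    simpa using Finset.sum_nonneg fun i _ => mul_nonneg (hl i) ((hΘ i).nonneg t)
  summable := by
    simpa [Finset.sum_fn] using
      summable_sum (s := s) fun i _ => (hΘ i).summable.mul_left (l i)

lemma playPayoff_sum {ι : Type*} {s : Finset ι} {l : ι → ℝ} {Θ : ι → ℕ → ℝ}
    (hΘ : ∀ i, IsStageWeight (Θ i)) (hg : ∀ x a, g x a ∈ Icc (0 : ℝ) 1)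
    {m : ℕ → (S × A →₀ ℝ)} (hm : ∀ t, m t ∈ Δf (S × A)) :
    playPayoff g (∑ i ∈ s, l i • Θ i) m = ∑ i ∈ s, l i * playPayoff g (Θ i) m := by
  simp only [playPayoff, ← tsum_mul_left]
  rw [← Summable.tsum_finsetSum fun i _ => ((hΘ i).summable_mul_meanReward hg hm).mul_left (l i)]
  simp [Finset.sum_mul, mul_assoc]

lemma exists_finite_net [TopologicalSpace S] {𝒦 : Set (S →ᵇ ℝ)} {𝒯 : Set (ℕ → ℝ)} {η : ℝ}
    (hcompact : IsCompact 𝒦)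
    (hvalue : ∀ θ, IsStageWeight θ → ∑' t, θ t ≤ 1 → ∃ F ∈ 𝒦, ⇑F = value q g θ)
    (h𝒯 : ∀ θ ∈ 𝒯, IsStageWeight θ ∧ ∑' t, θ t ≤ 1) (t : ℕ) {c : (ℕ → ℝ) → ℝ} {C : ℝ}
    (hc : ∀ θ ∈ 𝒯, |c θ| ≤ C) (hη : 0 < η) :
    ∃ T ⊆ 𝒯, T.Finite ∧ ∀ θ ∈ 𝒯, ∃ θ' ∈ T, c θ' ≤ c θ + η ∧ θ' t ≤ θ t + η ∧
      ∀ x, value q g (shift (t + 1) θ') x ≤ value q g (shift (t + 1) θ) x + η := by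
  choose! F hF𝒦 hF using fun θ (hθ : θ ∈ 𝒯) => hvalue _ ((h𝒯 θ hθ).1.shift (t + 1))
    (((h𝒯 θ hθ).1.tsum_shift_le (t + 1)).trans (h𝒯 θ hθ).2)
  let Φ : (ℕ → ℝ) → ℝ × ℝ × (S →ᵇ ℝ) := fun θ => (c θ, θ t, F θ)
  have hsub : Φ '' 𝒯 ⊆ Icc (-C) C ×ˢ Icc 0 1 ×ˢ 𝒦 := by
    rintro _ ⟨θ, hθ, rfl⟩
    obtain ⟨hw, hmass⟩ := h𝒯 θ hθ
    exact ⟨abs_le.1 (hc θ hθ), ⟨hw.nonneg t,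
      (hw.summable.le_tsum t fun s _ => hw.nonneg s).trans hmass⟩, hF𝒦 θ hθ⟩
  have hbdd : TotallyBounded (Φ '' 𝒯) :=
    (isCompact_Icc.prod (isCompact_Icc.prod hcompact)).totallyBounded.subset hsub
  obtain ⟨N, hN, hfin, hcover⟩ := Metric.finite_approx_of_totallyBounded hbdd η hη
  obtain ⟨T, hT, hTfin, rfl⟩ := exists_subset_image_finite_and.1 ⟨N, hN, hfin, rfl⟩
  refine ⟨T, hT, hTfin, fun θ hθ => ?_⟩
  obtain ⟨_, ⟨θ', hθ', rfl⟩, hdist⟩ := mem_iUnion₂.1 (hcover (mem_image_of_mem Φ hθ))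
  simp only [Φ, Metric.mem_ball, Prod.dist_eq, max_lt_iff, Real.dist_eq] at hdist
  refine ⟨θ', hθ', by linarith [(abs_lt.1 hdist.1).1], by linarith [(abs_lt.1 hdist.2.1).1],
    fun x => ?_⟩
  have := (BoundedContinuousFunction.dist_coe_le_dist x).trans_lt hdist.2.2
  rw [Real.dist_eq, hF θ hθ, hF θ' (hT hθ')] at this
  linarith [(abs_lt.1 this).1]

variable [Nonempty A]

lemma expect_value_sum_le {ι : Type*} {s : Finset ι} {l : ι → ℝ} {Θ : ι → ℕ → ℝ}
    (h : IsMDP q g) (hl : ∀ i, 0 ≤ l i) (hΘ : ∀ i, IsStageWeight (Θ i)) (hu : u ∈ Δf S) :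
    expect (value q g (∑ i ∈ s, l i • Θ i)) u ≤ ∑ i ∈ s, l i * expect (value q g (Θ i)) u := by
  refine expect_value_le_of_forall_isPlay h (.sum hl hΘ) hu fun m hm => ?_
  rw [playPayoff_sum hΘ h.reward_mem hm.mem]
  exact Finset.sum_le_sum fun i _ =>
    mul_le_mul_of_nonneg_left (hm.playPayoff_le_expect_value h (hΘ i) hu) (hl i)

lemma stepValue_sum_le {ι : Type*} {s : Finset ι} {l : ι → ℝ} {Θ : ι → ℕ → ℝ}
    (h : IsMDP q g) (hl : ∀ i, 0 ≤ l i) (hΘ : ∀ i, IsStageWeight (Θ i)) {k : S × A →₀ ℝ}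
    (hk : k ∈ Δf (S × A)) :
    stepValue q g (∑ i ∈ s, l i • Θ i) k ≤ ∑ i ∈ s, l i * stepValue q g (Θ i) k := by
  have hnext := expect_value_sum_le (s := s) h hl (fun i => (hΘ i).shift 1)
    (nextLaw_mem_Δf h.trans_mem hk)
  simp only [stepValue_apply, shift_sum, mul_add, Finset.sum_add_distrib]
  simpa [Finset.sum_mul, mul_assoc] using hnext

lemma exists_forall_lt_add_stepValue {ι : Type*} [Fintype ι] {Θ : ι → ℕ → ℝ} (h : IsMDP q g)
    (hΘ : ∀ i, IsStageWeight (Θ i)) (hu : u ∈ Δf S) {c : ι → ℝ} {b : ℝ}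
    (hb : ∀ l ∈ stdSimplex ℝ ι, b < l ⬝ᵥ c + expect (value q g (∑ i, l i • Θ i)) u) :
    ∃ k ∈ Δf (S × A), stateLaw k = u ∧ ∀ i, b < c i + stepValue q g (Θ i) k := by
  obtain ⟨a⟩ := ‹Nonempty A›
  let L : (S × A →₀ ℝ) →ₗ[ℝ] ι → ℝ := LinearMap.pi fun i => stepValue q g (Θ i)
  let 𝒜 : Set (S × A →₀ ℝ) := {k | k ∈ Δf (S × A) ∧ stateLaw k = u}
  have hconv : Convex ℝ 𝒜 := convex_Δf.inter ((convex_singleton u).linear_preimage stateLaw)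
  have hne : 𝒜.Nonempty := ⟨_, jointLaw_mem_Δf hu fun _ => single_mem_Δf a,
    stateLaw_jointLaw u fun _ => single_mem_Δf a⟩
  obtain ⟨_, ⟨_, ⟨k, hk, rfl⟩, rfl⟩, hlt⟩ := exists_forall_lt_of_forall_stdSimplex (b := b)
    ((hconv.linear_image L).translate c) ((hne.image L).image _) fun l hl => by
      obtain ⟨k, hk, hstate, hle⟩ := exists_expect_value_sub_le_stepValue h
        (.sum (s := .univ) hl.1 hΘ) hu (half_pos (sub_pos.2 (hb l hl)))
      have hsum := hle.trans (stepValue_sum_le h hl.1 hΘ hk)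
      refine ⟨_, mem_image_of_mem _ (mem_image_of_mem L (show k ∈ 𝒜 from ⟨hk, hstate⟩)), ?_⟩
      have hdot : l ⬝ᵥ L k = ∑ i, l i * stepValue q g (Θ i) k := rfl
      rw [dotProduct_add, hdot]
      linarith [hb l hl]
  exact ⟨k, hk.1, hk.2, hlt⟩

variable [TopologicalSpace S] {𝒦 : Set (S →ᵇ ℝ)} {𝒯 : Set (ℕ → ℝ)} {b η : ℝ}

lemma exists_forall_sub_le_add_stepValue (h : IsMDP q g) (hcompact : IsCompact 𝒦)
    (hvalue : ∀ θ, IsStageWeight θ → ∑' t, θ t ≤ 1 → ∃ F ∈ 𝒦, ⇑F = value q g θ)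
    (hconv : Convex ℝ 𝒯) (h𝒯 : ∀ θ ∈ 𝒯, IsStageWeight θ ∧ ∑' t, θ t ≤ 1) (t : ℕ)
    {c : (ℕ → ℝ) →ₗ[ℝ] ℝ} {C : ℝ} (hc : ∀ θ ∈ 𝒯, |c θ| ≤ C) (hu : u ∈ Δf S)
    (hb : ∀ θ ∈ 𝒯, b ≤ c θ + expect (value q g (shift t θ)) u) (hη : 0 < η) :
    ∃ k ∈ Δf (S × A), stateLaw k = u ∧ ∀ θ ∈ 𝒯, b - η ≤ c θ + stepValue q g (shift t θ) k := by
  obtain ⟨T, hT, hfin, hnet⟩ :=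
    exists_finite_net hcompact hvalue h𝒯 t hc (η := η / 4) (by positivity)
  have : Fintype T := hfin.fintype
  have hΘ : ∀ i : T, IsStageWeight (shift t i.1) := fun i => (h𝒯 _ (hT i.2)).1.shift t
  obtain ⟨k, hk, hstate, hlt⟩ := exists_forall_lt_add_stepValue (b := b - η / 4) h hΘ hu
    (c := fun i => c i.1) fun l hl => by
      have hmix := hb _ (hconv.sum_mem (fun i _ => hl.1 i) hl.2 fun i _ => hT i.2)
      rw [map_sum, shift_sum] at hmix
      simp only [map_smul, smul_eq_mul] at hmix
      rw [dotProduct]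
      linarith
  refine ⟨k, hk, hstate, fun θ hθ => ?_⟩
  obtain ⟨θ', hθ', hcle, htle, hvle⟩ := hnet θ hθ
  have hstep : stepValue q g (shift t θ') k ≤ stepValue q g (shift t θ) k + 2 * (η / 4) :=
    stepValue_le_add h hk (by simpa [shift] using htle)
      (by simpa only [shift_one_shift] using hvle) (by positivity)
  linarith [hlt ⟨θ', hθ'⟩]

lemma exists_isPlay_forall_partial_sum (h : IsMDP q g) (hcompact : IsCompact 𝒦)
    (hvalue : ∀ θ, IsStageWeight θ → ∑' t, θ t ≤ 1 → ∃ F ∈ 𝒦, ⇑F = value q g θ)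
    (hconv : Convex ℝ 𝒯) (h𝒯 : ∀ θ ∈ 𝒯, IsStageWeight θ ∧ ∑' t, θ t ≤ 1) (hu : u ∈ Δf S)
    (hb : ∀ θ ∈ 𝒯, b ≤ expect (value q g θ) u) (hη : 0 < η) :
    ∃ m, IsPlay q u m ∧ ∀ t, ∀ θ ∈ 𝒯, b - ∑ s ∈ Finset.range t, η / 2 / 2 ^ s ≤
      ∑ s ∈ Finset.range t, θ s * meanReward g (m s) +
        expect (value q g (shift t θ)) (stateLaw (m t)) := by
  obtain ⟨m, c, hm, hzero, hsucc, hP⟩ := exists_isPlay_of_invariant (q := q) (u := u) (e₀ := 0)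
    (fun t (c : (ℕ → ℝ) →ₗ[ℝ] ℝ) k => c + meanReward g k • LinearMap.proj t)
    (fun t c v => v ∈ Δf S ∧ ∀ θ ∈ 𝒯, |c θ| ≤ t ∧
      b - ∑ s ∈ Finset.range t, η / 2 / 2 ^ s ≤ c θ + expect (value q g (shift t θ)) v)
    ⟨hu, fun θ hθ => ⟨by simp, by
      simpa [show shift 0 θ = θ from rfl] using hb θ hθ⟩⟩ fun t c v ⟨hv, hc⟩ => by
      obtain ⟨k, hk, hstate, hle⟩ := exists_forall_sub_le_add_stepValue h hcompact hvalue hconv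
        h𝒯 t (fun θ hθ => (hc θ hθ).1) hv (fun θ hθ => (hc θ hθ).2) (η := η / 2 / 2 ^ t)
        (by positivity)
      refine ⟨k, hk, hstate, nextLaw_mem_Δf h.trans_mem hk, fun θ hθ => ⟨?_, ?_⟩⟩
      · have hG := meanReward_mem_Icc h.reward_mem hk
        obtain ⟨hw, hmass⟩ := h𝒯 θ hθ
        have hθt : θ t ≤ 1 := (hw.summable.le_tsum t fun s _ => hw.nonneg s).trans hmass
        calc |c θ + meanReward g k * θ t| ≤ |c θ| + |meanReward g k * θ t| := abs_add_le _ _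
          _ ≤ t + 1 := add_le_add (hc θ hθ).1 <| by
              rw [abs_of_nonneg (mul_nonneg hG.1 (hw.nonneg t))]
              exact mul_le_one₀ hG.2 (hw.nonneg t) hθt
          _ = _ := by push_cast; ring
      · have := hle θ hθ
        rw [stepValue_apply, shift_one_shift] at this
        simp only [shift, zero_add, Finset.sum_range_succ, LinearMap.add_apply,
          LinearMap.smul_apply, LinearMap.proj_apply, smul_eq_mul] at this ⊢
        linarith
  refine ⟨m, hm, fun t θ hθ => ?_⟩
  have hpast : c t θ = ∑ s ∈ Finset.range t, θ s * meanReward g (m s) := by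
    clear hθ
    induction t with
    | zero => simp [hzero]
    | succ t ih => simp [hsucc, ih, Finset.sum_range_succ, mul_comm]
  exact hpast ▸ ((hP t).2 θ hθ).2

lemma exists_isPlay_forall_sub_le_playPayoff (h : IsMDP q g) (hcompact : IsCompact 𝒦)
    (hvalue : ∀ θ, IsStageWeight θ → ∑' t, θ t ≤ 1 → ∃ F ∈ 𝒦, ⇑F = value q g θ)
    (hconv : Convex ℝ 𝒯) (h𝒯 : ∀ θ ∈ 𝒯, IsStageWeight θ ∧ ∑' t, θ t ≤ 1) (hu : u ∈ Δf S)
    (hb : ∀ θ ∈ 𝒯, b ≤ expect (value q g θ) u) (hη : 0 < η) :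
    ∃ m, IsPlay q u m ∧ ∀ θ ∈ 𝒯, b - η ≤ playPayoff g θ m := by
  obtain ⟨m, hm, hpartial⟩ :=
    exists_isPlay_forall_partial_sum h hcompact hvalue hconv h𝒯 hu hb hη
  refine ⟨m, hm, fun θ hθ => ?_⟩
  obtain ⟨hw, -⟩ := h𝒯 θ hθ
  have hlim := (hw.summable_mul_meanReward h.reward_mem hm.mem).hasSum.tendsto_sum_nat.add
    (tendsto_sum_nat_add θ)
  rw [add_zero] at hlim
  refine ge_of_tendsto' hlim fun t => ?_
  have hstate := stateLaw_mem_Δf (hm.mem t)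
  have htail := expect_le_of_le hstate (value_le_tsum h (hw.shift t))
  have herror := sum_le_hasSum (Finset.range t) (fun s _ => by positivity) (hasSum_geometric_two' η)
  have := hpartial t θ hθ
  simp only [shift] at htail this
  linarith

lemma exists_isStrat_forall_sub_le_payoff (h : IsMDP q g) (hcompact : IsCompact 𝒦)
    (hvalue : ∀ θ, IsStageWeight θ → ∑' t, θ t ≤ 1 → ∃ F ∈ 𝒦, ⇑F = value q g θ)
    (hconv : Convex ℝ 𝒯) (h𝒯 : ∀ θ ∈ 𝒯, IsStageWeight θ ∧ ∑' t, θ t ≤ 1) {x : S}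
    (hb : ∀ θ ∈ 𝒯, b ≤ value q g θ x) (hη : 0 < η) :
    ∃ σ, IsStrat σ ∧ ∀ θ ∈ 𝒯, b - η ≤ payoff q g θ σ x := by
  obtain ⟨m, hm, hle⟩ := exists_isPlay_forall_sub_le_playPayoff h hcompact hvalue hconv h𝒯
    (single_mem_Δf x) (fun θ hθ => by simpa using hb θ hθ) hη
  obtain ⟨σ, hσ, hlaw⟩ := hm.exists_isStrat h.trans_mem (single_mem_Δf x)
  have hσm : stageLaw q σ x = m := funext fun t => by simpa using hlaw t
  exact ⟨σ, hσ, fun θ hθ => by rw [payoff_eq_playPayoff, hσm]; exact hle θ hθ⟩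

end UniformPlays

section SimplexLipschitz

variable {K : Type*} [Fintype K]

/-- The ℓ¹ norm on `K → ℝ`. -/
noncomputable def l1Seminorm (K : Type*) [Fintype K] : Seminorm ℝ (K → ℝ) :=
  ∑ k, (normSeminorm ℝ ℝ).comp (LinearMap.proj k)

lemma l1Seminorm_apply (x : K → ℝ) : l1Seminorm K x = ∑ k, |x k| := by
  simp [l1Seminorm]

lemma continuous_l1Seminorm : Continuous (l1Seminorm K) := by
  simp only [funext l1Seminorm_apply]
  fun_prop

lemma mem_D1_iff {F : (K → ℝ) → ℝ} :
    F ∈ D1 K ↔ IsConeLipschitz (l1Seminorm K) 1 fun y : ΔK K => F y := by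
  refine ⟨fun hF x y α β hα hβ => ?_, fun hF => ⟨?_, fun x hx y hy a b ha hb => ?_⟩⟩
  · simpa [l1Seminorm_apply] using hF.2 x x.2 y y.2 α β hα hβ
  · exact continuousOn_iff_continuous_domRestrict.2 ((equicontinuous_of_isConeLipschitz
      continuous_l1Seminorm (F := fun _ : Unit => _) fun _ => hF).continuous ())
  · simpa [l1Seminorm_apply] using hF ⟨x, hx⟩ ⟨y, hy⟩ a b ha hb

variable {A : Type*} {X : Set (K → ℝ)} {q : X → A → (X →₀ ℝ)} {g : X → A → ℝ}

lemma isConeLipschitz_expect_of_forall_mem_D1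
    (hq : ∀ (x y : X) a, ∀ F ∈ D1 K, ∀ α β : ℝ, 0 ≤ α → 0 ≤ β →
      |α * fExt F (q x a) - β * fExt F (q y a)| ≤ ∑ k, |α * (x : K → ℝ) k - β * (y : K → ℝ) k|)
    {f : X → ℝ} (hf : IsConeLipschitz (l1Seminorm K) 1 f) (a : A) :
    IsConeLipschitz (l1Seminorm K) 1 fun x => expect f (q x a) := fun x y α β hα hβ => by
  have : Nonempty X := ⟨x⟩
  have hF := mem_D1_iff.2 (isConeLipschitz_coneExtension hf (ΔK K))
  have hfExt : ∀ u, fExt (coneExtension (l1Seminorm K) f) u = expect f u := fun u => by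
    simp only [fExt, expect_apply, coneExtension_coe hf]
  simpa [hfExt, l1Seminorm_apply] using (le_abs_self _).trans (hq x y a _ hF α β hα hβ)

lemma equicontinuous_value_of_forall_mem_D1 [Nonempty A] (h : IsMDP q g)
    (hlip : ∀ (x y : X) (a : A), ∀ F ∈ D1 K, ∀ α β : ℝ, 0 ≤ α → 0 ≤ β →
      |α * fExt F (q x a) - β * fExt F (q y a)| ≤
        ∑ k, |α * (x : K → ℝ) k - β * (y : K → ℝ) k| ∧
      |α * g x a - β * g y a| ≤ ∑ k, |α * (x : K → ℝ) k - β * (y : K → ℝ) k|) :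
    Equicontinuous fun θ : {θ // IsEval θ} => value q g θ.1 := by
  have hzero : 0 ∈ D1 K := mem_D1_iff.2 fun x y α β _ _ => by simp
  refine equicontinuous_of_isConeLipschitz continuous_l1Seminorm fun θ => ?_
  rw [← θ.2.2]
  refine isConeLipschitz_value h (fun f hf => isConeLipschitz_expect_of_forall_mem_D1
    (fun x y a F hF α β hα hβ => (hlip x y a F hF α β hα hβ).1) hf)
    (fun a x y α β hα hβ => ?_) θ.2.isStageWeight
  simpa [l1Seminorm_apply] using (le_abs_self _).trans (hlip x y a 0 hzero α β hα hβ).2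

end SimplexLipschitz

section CompactValues

variable {S A : Type*} [Nonempty A] {q : S → A → (S →₀ ℝ)} {g : S → A → ℝ} {θ : ℕ → ℝ}

lemma dist_value_le_of_forall_isEval (h : IsMDP q g) {x y : S} {ε : ℝ} (hε : 0 ≤ ε)
    (hle : ∀ θ, IsEval θ → dist (value q g θ x) (value q g θ y) ≤ ε) (hθ : IsStageWeight θ)
    (hmass : ∑' t, θ t ≤ 1) : dist (value q g θ x) (value q g θ y) ≤ ε := by
  rcases (tsum_nonneg hθ.nonneg).eq_or_lt with hzero | hpos
  · have hvalue : ∀ z, value q g θ z = 0 := fun z =>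
      le_antisymm (hzero ▸ value_le_tsum h hθ z) (value_nonneg h hθ z)
    simpa [hvalue] using hε
  · set r := ∑' t, θ t
    have heval : IsEval fun t => r⁻¹ * θ t :=
      ⟨fun t => mul_nonneg (inv_nonneg.2 hpos.le) (hθ.nonneg t),
        by rw [tsum_mul_left, inv_mul_cancel₀ hpos.ne']⟩
    have hvalue : ∀ z, value q g θ z = r * value q g (fun t => r⁻¹ * θ t) z := fun z => by
      rw [← value_const_mul hpos.le]
      simp only [mul_inv_cancel_left₀ hpos.ne']
    rw [hvalue, hvalue, Real.dist_eq, ← mul_sub, abs_mul, abs_of_pos hpos]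
    exact (mul_le_of_le_one_left (abs_nonneg _) hmass).trans (hle _ heval)

lemma equicontinuous_value_of_mass_le_one [TopologicalSpace S] (h : IsMDP q g)
    (heq : Equicontinuous fun θ : {θ // IsEval θ} => value q g θ.1) :
    Equicontinuous fun θ : {θ // IsStageWeight θ ∧ ∑' t, θ t ≤ 1} => value q g θ.1 := by
  refine fun x => Metric.equicontinuousAt_iff_right.2 fun ε hε => ?_
  filter_upwards [Metric.equicontinuousAt_iff_right.1 (heq x) (ε / 2) (by positivity)] with y hy θ
  exact (dist_value_le_of_forall_isEval h (by positivity) (fun θ hθ => (hy ⟨θ, hθ⟩).le)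
    θ.2.1 θ.2.2).trans_lt (by linarith)

lemma exists_isCompact_forall_value [TopologicalSpace S] [CompactSpace S] (h : IsMDP q g)
    (heq : Equicontinuous fun θ : {θ // IsEval θ} => value q g θ.1) :
    ∃ 𝒦 : Set (S →ᵇ ℝ), IsCompact 𝒦 ∧
      ∀ θ, IsStageWeight θ → ∑' t, θ t ≤ 1 → ∃ F ∈ 𝒦, ⇑F = value q g θ := by
  have hequi := equicontinuous_value_of_mass_le_one h heq
  let V : {θ // IsStageWeight θ ∧ ∑' t, θ t ≤ 1} → S →ᵇ ℝ := fun θ =>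
    .mkOfCompact ⟨value q g θ.1, hequi.continuous θ⟩
  refine ⟨closure (range V), BoundedContinuousFunction.arzela_ascoli (Icc 0 1) isCompact_Icc _ ?_
    ?_, fun θ hθ hmass => ⟨V ⟨θ, hθ, hmass⟩, subset_closure (mem_range_self _), rfl⟩⟩
  · rintro _ x ⟨⟨θ, hθ, hmass⟩, rfl⟩
    exact ⟨value_nonneg h hθ x, (value_le_tsum h hθ x).trans hmass⟩
  · exact fun x U hU => (hequi x U hU).mono fun y hy ⟨_, θ, hθ⟩ => hθ ▸ hy θ

end CompactValues

section Impatience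

variable {θ θ' : ℕ → ℝ}

lemma IsStageWeight.abs_sub (hθ : IsStageWeight θ) :
    IsStageWeight fun t => |θ (t + 1) - θ t| where
  nonneg _ := abs_nonneg _
  summable := (((summable_nat_add_iff 1).2 hθ.summable).sub hθ.summable).abs

lemma IsStageWeight.le_impatience (hθ : IsStageWeight θ) (t : ℕ) : θ t ≤ impatience θ := by
  have hdist := dist_le_tsum_of_dist_le_of_tendsto (fun t => |θ (t + 1) - θ t|)
    (fun t => by rw [Nat.succ_eq_add_one, dist_comm, Real.dist_eq]) hθ.abs_sub.summable
    hθ.summable.tendsto_atTop_zero t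
  rw [Real.dist_0_eq_abs, abs_of_nonneg (hθ.nonneg t)] at hdist
  simp only [add_comm t] at hdist
  exact hdist.trans (hθ.abs_sub.tsum_shift_le t)

lemma impatience_pos (hθ : IsEval θ) : 0 < impatience θ := by
  by_contra! hle
  have hzero : ∀ t, θ t = 0 := fun t =>
    le_antisymm ((hθ.isStageWeight.le_impatience t).trans hle) (hθ.1 t)
  simpa [hzero] using hθ.2

lemma abs_sum_mul_sub_le (hθ : IsStageWeight θ) {e : ℕ → ℝ} {M : ℝ} (he : ∀ t, |e t| ≤ M)
    (n : ℕ) : |∑ t ∈ Finset.range n, θ t * (e (t + 1) - e t)| ≤ 3 * impatience θ * M := by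
  have hM : 0 ≤ M := (abs_nonneg _).trans (he 0)
  have hparts : ∑ t ∈ Finset.range n, θ t * (e (t + 1) - e t) =
      θ n * e n - θ 0 * e 0 - ∑ t ∈ Finset.range n, (θ (t + 1) - θ t) * e (t + 1) := by
    rw [eq_sub_iff_add_eq, ← Finset.sum_add_distrib, ← Finset.sum_range_sub fun t => θ t * e t]
    exact Finset.sum_congr rfl fun t _ => by ring
  have hboundary : ∀ t, |θ t * e t| ≤ impatience θ * M := fun t => by
    rw [abs_mul, abs_of_nonneg (hθ.nonneg t)]
    exact mul_le_mul (hθ.le_impatience t) (he t) (abs_nonneg _)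
      ((hθ.nonneg t).trans (hθ.le_impatience t))
  have hvar : |∑ t ∈ Finset.range n, (θ (t + 1) - θ t) * e (t + 1)| ≤ impatience θ * M := calc
    _ ≤ ∑ t ∈ Finset.range n, |θ (t + 1) - θ t| * M :=
        (Finset.abs_sum_le_sum_abs _ _).trans <| Finset.sum_le_sum fun t _ => by
          rw [abs_mul]
          exact mul_le_mul_of_nonneg_left (he _) (abs_nonneg _)
    _ ≤ impatience θ * M := by
        rw [← Finset.sum_mul]
        exact mul_le_mul_of_nonneg_right
          (hθ.abs_sub.summable.sum_le_tsum _ fun _ _ => abs_nonneg _) hM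
  rw [hparts]
  linarith [abs_sub (θ n * e n - θ 0 * e 0)
    (∑ t ∈ Finset.range n, (θ (t + 1) - θ t) * e (t + 1)), abs_sub (θ n * e n) (θ 0 * e 0),
    hboundary n, hboundary 0]

lemma impatience_combo_le (hθ : IsStageWeight θ) (hθ' : IsStageWeight θ') {c d : ℝ} (hc : 0 ≤ c)
    (hd : 0 ≤ d) : impatience (c • θ + d • θ') ≤ c * impatience θ + d * impatience θ' := by
  have hsum := (hθ.abs_sub.summable.mul_left c).add (hθ'.abs_sub.summable.mul_left d)
  have hle : ∀ t, |(c • θ + d • θ') (t + 1) - (c • θ + d • θ') t| ≤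
      c * |θ (t + 1) - θ t| + d * |θ' (t + 1) - θ' t| := fun t => calc
    _ = |c * (θ (t + 1) - θ t) + d * (θ' (t + 1) - θ' t)| := by simp; ring_nf
    _ ≤ _ := abs_add_le _ _
    _ = _ := by rw [abs_mul, abs_mul, abs_of_nonneg hc, abs_of_nonneg hd]
  rw [impatience, impatience, impatience, ← tsum_mul_left, ← tsum_mul_left,
    ← (hθ.abs_sub.summable.mul_left c).tsum_add (hθ'.abs_sub.summable.mul_left d)]
  exact (Summable.of_nonneg_of_le (fun _ => abs_nonneg _) hle hsum).tsum_le_tsum hle hsum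

lemma convex_setOf_isEval : Convex ℝ {θ : ℕ → ℝ | IsEval θ} := by
  rintro θ hθ θ' hθ' c d hc hd hcd
  refine ⟨fun t => add_nonneg (mul_nonneg hc (hθ.1 t)) (mul_nonneg hd (hθ'.1 t)), ?_⟩
  have hsum := hθ.isStageWeight.summable.mul_left c |>.tsum_add
    (hθ'.isStageWeight.summable.mul_left d)
  simpa [tsum_mul_left, hθ.2, hθ'.2, hcd] using hsum

lemma convex_setOf_impatience_le (α : ℝ) :
    Convex ℝ {θ : ℕ → ℝ | IsEval θ ∧ impatience θ ≤ α} := by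
  rintro θ ⟨hθ, hle⟩ θ' ⟨hθ', hle'⟩ c d hc hd hcd
  refine ⟨convex_setOf_isEval hθ hθ' hc hd hcd, ?_⟩
  calc _ ≤ c * impatience θ + d * impatience θ' :=
        impatience_combo_le hθ.isStageWeight hθ'.isStageWeight hc hd
    _ ≤ c * α + d * α := by gcongr
    _ = α := by rw [← add_mul, hcd, one_mul]

lemma isEval_geometric {l : ℝ} (hl : l ∈ Ioo (0 : ℝ) 1) : IsEval fun t => l * (1 - l) ^ t := by
  refine ⟨fun t => mul_nonneg hl.1.le (pow_nonneg (sub_nonneg.2 hl.2.le) _), ?_⟩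
  rw [tsum_mul_left, tsum_geometric_of_lt_one (sub_nonneg.2 hl.2.le) (by linarith [hl.1]),
    sub_sub_cancel, mul_inv_cancel₀ hl.1.ne']

lemma impatience_geometric {l : ℝ} (hl : l ∈ Ioo (0 : ℝ) 1) :
    impatience (fun t => l * (1 - l) ^ t) = l := by
  have heval := isEval_geometric hl
  have hdiff : ∀ t : ℕ, |l * (1 - l) ^ (t + 1) - l * (1 - l) ^ t| = l * (l * (1 - l) ^ t) :=
    fun t => by
      rw [show l * (1 - l) ^ (t + 1) - l * (1 - l) ^ t = -(l * (l * (1 - l) ^ t)) by ring, abs_neg,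
        abs_of_nonneg (mul_nonneg hl.1.le (heval.1 t))]
  simp only [impatience, hdiff]
  rw [tsum_mul_left, heval.2, mul_one]

/-- The filter along which evaluations become infinitely patient, so that a statement holding for
all evaluations of small impatience is an eventual one. -/
noncomputable def patient : Filter {θ : ℕ → ℝ // IsEval θ} := comap (fun θ => impatience θ) (𝓝 0)

instance patient_neBot : patient.NeBot := by
  refine comap_neBot fun s hs => ?_
  have hs' : ∀ᶠ l in 𝓝[>] (0 : ℝ), l ∈ s := nhdsWithin_le_nhds hs
  obtain ⟨l, hls, hl⟩ := (hs'.and (Ioo_mem_nhdsGT zero_lt_one)).exists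
  exact ⟨⟨_, isEval_geometric hl⟩, (impatience_geometric hl).symm ▸ hls⟩

lemma exists_pos_of_eventually_patient {P : {θ : ℕ → ℝ // IsEval θ} → Prop}
    (h : ∀ᶠ θ in patient, P θ) :
    ∃ α > (0 : ℝ), ∀ θ : {θ : ℕ → ℝ // IsEval θ}, impatience θ ≤ α → P θ := by
  obtain ⟨α, hα, hP⟩ := Metric.eventually_nhds_iff.1 (eventually_comap.1 h)
  refine ⟨α / 2, by positivity, fun θ hle => hP ?_ θ rfl⟩
  rw [Real.dist_0_eq_abs, abs_of_pos (impatience_pos θ.2)]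
  linarith

end Impatience

section FinitelySupportedMeasures

variable {S : Type*} [MeasurableSpace S] {u v : S →₀ ℝ}

lemma toMeas_eq_sum {T : Finset S} (h : u.support ⊆ T) :
    toMeas u = ∑ x ∈ T, ENNReal.ofReal (u x) • Measure.dirac x :=
  Finsupp.sum_of_support_subset _ h _ (by simp)

lemma toMeas_single (x : S) : toMeas (Finsupp.single x 1) = Measure.dirac x := by
  simp [toMeas]

lemma isProbabilityMeasure_toMeas (hu : u ∈ Δf S) : IsProbabilityMeasure (toMeas u) := by
  have hsum : ∑ x ∈ u.support, u x = 1 := hu.2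
  refine ⟨?_⟩
  simp only [toMeas_eq_sum subset_rfl, Measure.finsetSum_apply, Measure.smul_apply, measure_univ,
    smul_eq_mul, mul_one]
  rw [← ENNReal.ofReal_sum_of_nonneg fun x _ => hu.1 x, hsum, ENNReal.ofReal_one]

lemma toMeas_combo (hu : u ∈ Δf S) (hv : v ∈ Δf S) {a b : ℝ} (ha : 0 ≤ a) (hb : 0 ≤ b) :
    toMeas (a • u + b • v) = ENNReal.ofReal a • toMeas u + ENNReal.ofReal b • toMeas v := by
  classical
  have hsupp : (a • u + b • v).support ⊆ u.support ∪ v.support := Finsupp.support_add.trans <|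
    Finset.union_subset_union Finsupp.support_smul Finsupp.support_smul
  rw [toMeas_eq_sum (u := u) Finset.subset_union_left,
    toMeas_eq_sum (u := v) Finset.subset_union_right, toMeas_eq_sum hsupp, Finset.smul_sum,
    Finset.smul_sum, ← Finset.sum_add_distrib]
  refine Finset.sum_congr rfl fun x _ => ?_
  rw [smul_smul, smul_smul, ← add_smul, ← ENNReal.ofReal_mul ha, ← ENNReal.ofReal_mul hb,
    ← ENNReal.ofReal_add (mul_nonneg ha (hu.1 x)) (mul_nonneg hb (hv.1 x)), Finsupp.add_apply,
    Finsupp.smul_apply, Finsupp.smul_apply, smul_eq_mul, smul_eq_mul]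

/-- `toMeas` as a map from `Δf S` to probability measures. -/
noncomputable def toProb (u : Δf S) : ProbabilityMeasure S :=
  ⟨toMeas u.1, isProbabilityMeasure_toMeas u.2⟩

lemma toProb_single (x : S) : toProb ⟨Finsupp.single x 1, single_mem_Δf x⟩ = diracProba x :=
  Subtype.ext (toMeas_single x)

/- A function on the convex set `Δf S` that respects convex combinations is both convex and concave,
and the two Jensen inequalities together compute it from its values at the Dirac masses. -/
lemma IsAffine.toProb_eq_expect {w : ProbabilityMeasure S → ℝ} (hw : IsAffine w) (u : Δf S) :
    w (toProb u) = expect (fun x => w (diracProba x)) u := by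
  classical
  let W : (S →₀ ℝ) → ℝ := fun u => if hu : u ∈ Δf S then w (toProb ⟨u, hu⟩) else 0
  have hW : ∀ u : Δf S, W u = w (toProb u) := fun u => dif_pos u.2
  have hcombo : ∀ ⦃u⦄, u ∈ Δf S → ∀ ⦃v⦄, v ∈ Δf S → ∀ ⦃a b : ℝ⦄, 0 ≤ a → 0 ≤ b → a + b = 1 →
      W (a • u + b • v) = a • W u + b • W v := fun u hu v hv a b ha hb hab => by
    obtain rfl : b = 1 - a := by linarith
    rw [hW ⟨u, hu⟩, hW ⟨v, hv⟩, hW ⟨_, convex_Δf hu hv ha hb hab⟩]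
    exact hw _ _ _ a ⟨ha, by linarith⟩ (toMeas_combo hu hv ha hb)
  have hconvex : ConvexOn ℝ (Δf S) W :=
    ⟨convex_Δf, fun _ hu _ hv _ _ ha hb hab => (hcombo hu hv ha hb hab).le⟩
  have hconcave : ConcaveOn ℝ (Δf S) W :=
    ⟨convex_Δf, fun _ hu _ hv _ _ ha hb hab => (hcombo hu hv ha hb hab).ge⟩
  have hsum : ∑ x ∈ u.1.support, u.1 x • Finsupp.single x (1 : ℝ) = u.1 := by
    simpa [Finsupp.sum] using Finsupp.sum_single u.1
  have hle := hconvex.map_sum_le (fun x _ => u.2.1 x) u.2.2 fun x _ => single_mem_Δf x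
  have hge := hconcave.le_map_sum (fun x _ => u.2.1 x) u.2.2 fun x _ => single_mem_Δf x
  rw [hsum, hW u] at hle hge
  have hdirac : ∀ x, W (Finsupp.single x 1) = w (diracProba x) := fun x => by
    rw [← toProb_single, ← hW]
  simp only [hdirac, smul_eq_mul] at hle hge
  exact (expect_apply _ u.1).symm ▸ hle.antisymm hge

variable [TopologicalSpace S] [OpensMeasurableSpace S]

lemma integral_diracProba (f : S →ᵇ ℝ) (x : S) : ∫ y, f y ∂(diracProba x : Measure S) = f x :=
  integral_dirac' _ x f.continuous.stronglyMeasurable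

lemma integral_toMeas (hu : u ∈ Δf S) (f : S →ᵇ ℝ) : ∫ x, f x ∂(toMeas u) = expect f u := by
  rw [toMeas_eq_sum subset_rfl, integral_finsetSum_measure, expect_apply]
  · refine Finset.sum_congr rfl fun x _ => ?_
    rw [integral_smul_measure, ENNReal.toReal_ofReal (hu.1 x), smul_eq_mul]
    exact congrArg _ (integral_diracProba f x)
  · exact fun x _ => (f.integrable (Measure.dirac x)).smul_measure ENNReal.ofReal_ne_top

lemma isAffine_integral (f : S →ᵇ ℝ) :
    IsAffine fun μ : ProbabilityMeasure S => ∫ x, f x ∂(μ : Measure S) := fun μ ν ρ α hα hρ => by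
  have hint : ∀ (μ : ProbabilityMeasure S) (c : ℝ),
      Integrable f (ENNReal.ofReal c • (μ : Measure S)) := fun μ _ =>
    (f.integrable _).smul_measure ENNReal.ofReal_ne_top
  simp only [hρ]
  rw [integral_add_measure (hint _ _) (hint _ _), integral_smul_measure, integral_smul_measure,
    ENNReal.toReal_ofReal hα.1, ENNReal.toReal_ofReal (sub_nonneg.2 hα.2), smul_eq_mul, smul_eq_mul]

end FinitelySupportedMeasures

section Occupation

variable {S A : Type*} {q : S → A → (S →₀ ℝ)} {g : S → A → ℝ} {θ : ℕ → ℝ} {u : S →₀ ℝ}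
  {m : ℕ → (S × A →₀ ℝ)}

/-- The `θ`-average of a sequence, truncated at stage `n`: the term at stage `n` receives all the
weight of the stages from `n` on, which keeps the average finitely supported. -/
noncomputable def occupationLaw (θ : ℕ → ℝ) (n : ℕ) (m : ℕ → (S × A →₀ ℝ)) : S × A →₀ ℝ :=
  ∑ t ∈ Finset.range n, θ t • m t + (1 - ∑ t ∈ Finset.range n, θ t) • m n

lemma map_occupationLaw (L : (S × A →₀ ℝ) →ₗ[ℝ] ℝ) (θ : ℕ → ℝ) (n : ℕ)
    (m : ℕ → (S × A →₀ ℝ)) : L (occupationLaw θ n m) =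
      ∑ t ∈ Finset.range n, θ t * L (m t) + (1 - ∑ t ∈ Finset.range n, θ t) * L (m n) := by
  simp [occupationLaw]

lemma IsEval.sum_range_le_one (hθ : IsEval θ) (n : ℕ) : ∑ t ∈ Finset.range n, θ t ≤ 1 :=
  hθ.2 ▸ hθ.isStageWeight.summable.sum_le_tsum _ fun t _ => hθ.1 t

lemma occupationLaw_mem {s : Set (S × A →₀ ℝ)} (hs : Convex ℝ s) (hθ : IsEval θ)
    (hm : ∀ t, m t ∈ s) (n : ℕ) : occupationLaw θ n m ∈ s := by
  let c : ℕ → ℝ := Function.update θ n (1 - ∑ t ∈ Finset.range n, θ t)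
  have hc : ∀ t ∈ Finset.range n, c t = θ t := fun t ht =>
    Function.update_of_ne (Finset.mem_range.1 ht).ne _ _
  have hcn : c n = 1 - ∑ t ∈ Finset.range n, θ t := Function.update_self ..
  have hmem : ∑ t ∈ Finset.range (n + 1), c t • m t ∈ s := by
    refine hs.sum_mem (fun t _ => ?_) ?_ fun t _ => hm t
    · rcases eq_or_ne t n with rfl | ht
      · exact hcn ▸ sub_nonneg.2 (hθ.sum_range_le_one t)
      · exact (hθ.1 t).trans_eq (Function.update_of_ne ht _ θ).symm
    · rw [Finset.sum_range_succ, Finset.sum_congr rfl hc, hcn, add_sub_cancel]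
  rwa [Finset.sum_range_succ, Finset.sum_congr rfl fun t ht => by rw [hc t ht], hcn] at hmem

lemma IsEval.exists_one_sub_sum_range_lt (hθ : IsEval θ) {ε : ℝ} (hε : 0 < ε) :
    ∃ n, 1 - ∑ t ∈ Finset.range n, θ t < ε := by
  have hlim := hθ.isStageWeight.summable.hasSum.tendsto_sum_nat.const_sub 1
  rw [hθ.2, sub_self] at hlim
  exact (hlim.eventually_lt_const hε).exists

lemma playPayoff_le_meanReward_occupationLaw_add (hθ : IsEval θ)
    (hg : ∀ x a, g x a ∈ Icc (0 : ℝ) 1) (hm : ∀ t, m t ∈ Δf (S × A)) (n : ℕ) :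
    playPayoff g θ m ≤
      meanReward g (occupationLaw θ n m) + (1 - ∑ t ∈ Finset.range n, θ t) := by
  have htail := playPayoff_le_tsum (hθ.isStageWeight.shift n) hg fun t => hm (t + n)
  have hsplit := (hθ.isStageWeight.summable_mul_meanReward hg hm).sum_add_tsum_nat_add n
  have hmass := hθ.isStageWeight.summable.sum_add_tsum_nat_add n
  have hlast := mul_nonneg (sub_nonneg.2 (hθ.sum_range_le_one n)) (meanReward_mem_Icc hg (hm n)).1
  rw [hθ.2] at hmass
  rw [map_occupationLaw]
  simp only [playPayoff, shift] at htail hsplit ⊢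
  linarith

/- Along a play, `nextLaw q (m t)` is the state law at stage `t + 1`, so the two averages differ by
a telescoping sum with slowly varying weights. -/
lemma IsPlay.abs_expect_nextLaw_sub_stateLaw_occupationLaw_le (hm : IsPlay q u m)
    (hθ : IsEval θ) {f : S → ℝ} {M : ℝ} (hf : ∀ x, |f x| ≤ M) (n : ℕ) :
    |expect f (nextLaw q (occupationLaw θ n m)) - expect f (stateLaw (occupationLaw θ n m))| ≤
      3 * impatience θ * M + (1 - ∑ t ∈ Finset.range n, θ t) * (2 * M) := by
  let e : ℕ → ℝ := fun t => expect f (stateLaw (m t))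
  have he : ∀ t, |e t| ≤ M := fun t => by
    have hstate := stateLaw_mem_Δf (hm.mem t)
    exact abs_le.2 ⟨le_expect_of_le hstate fun x => (abs_le.1 (hf x)).1,
      expect_le_of_le hstate fun x => (abs_le.1 (hf x)).2⟩
  have hdiff : expect f (nextLaw q (occupationLaw θ n m)) -
      expect f (stateLaw (occupationLaw θ n m)) =
      ∑ t ∈ Finset.range n, θ t * (e (t + 1) - e t) +
        (1 - ∑ t ∈ Finset.range n, θ t) * (e (n + 1) - e n) := by
    have hstate := map_occupationLaw (expect f ∘ₗ stateLaw) θ n m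
    have hnext := map_occupationLaw (expect f ∘ₗ nextLaw q) θ n m
    simp only [LinearMap.comp_apply, ← hm.step] at hstate hnext
    simp only [hstate, hnext, e, mul_sub, Finset.sum_sub_distrib]
    ring
  have hrem := sub_nonneg.2 (hθ.sum_range_le_one n)
  rw [hdiff]
  refine (abs_add_le _ _).trans (add_le_add (abs_sum_mul_sub_le hθ.isStageWeight he n) ?_)
  rw [abs_mul, abs_of_nonneg hrem]
  exact mul_le_mul_of_nonneg_left
    ((abs_sub _ _).trans (by linarith [he n, he (n + 1)])) hrem

lemma exists_almost_invariant_law [Nonempty A] (h : IsMDP q g) (hθ : IsEval θ) (x : S) :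
    ∃ k ∈ Δf (S × A), value q g θ x - 2 * impatience θ ≤ meanReward g k ∧
      (∀ f : S → ℝ, (∀ y a, expect f (q y a) ≤ f y) → expect f (stateLaw k) ≤ f x) ∧
      ∀ (f : S → ℝ) (M : ℝ), (∀ y, |f y| ≤ M) →
        |expect f (nextLaw q k) - expect f (stateLaw k)| ≤ 5 * impatience θ * M := by
  have hI := impatience_pos hθ
  obtain ⟨m, hm, hle⟩ :=
    exists_isPlay_expect_value_sub_le h hθ.isStageWeight (single_mem_Δf x) hI
  obtain ⟨n, hn⟩ := hθ.exists_one_sub_sum_range_lt hI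
  refine ⟨occupationLaw θ n m, occupationLaw_mem convex_Δf hθ hm.mem n, ?_, fun f hf => ?_,
    fun f M hf => ?_⟩
  · have := playPayoff_le_meanReward_occupationLaw_add hθ h.reward_mem hm.mem n
    rw [expect_single, one_mul] at hle
    linarith
  · have hstate : ∀ t, expect f (stateLaw (m t)) ≤ f x := fun t => by
      induction t with
      | zero => simp [hm.init]
      | succ t ih =>
        refine le_trans ?_ ih
        rw [hm.step, expect_nextLaw, expect_stateLaw]
        exact expect_mono (hm.mem t) fun p => hf p.1 p.2
    exact occupationLaw_mem (s := {k | expect f (stateLaw k) ≤ f x})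
      (convex_halfSpace_le (expect f ∘ₗ stateLaw).isLinear _) hθ hstate n
  · have hM : 0 ≤ M := (abs_nonneg _).trans (hf x)
    have := hm.abs_expect_nextLaw_sub_stateLaw_occupationLaw_le hθ hf n
    have := mul_le_mul_of_nonneg_right hn.le (mul_nonneg zero_le_two hM)
    linarith

end Occupation

section InvariantCouples

variable {S A : Type*} [MeasurableSpace S] [TopologicalSpace S] [OpensMeasurableSpace S]
  {q : S → A → (S →₀ ℝ)} {g : S → A → ℝ} {py : ProbabilityMeasure S × ℝ}

lemma mem_RR_iff [Nonempty A] : py ∈ RR q g ↔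
    (py, py) ∈ closure {z : (ProbabilityMeasure S × ℝ) × (ProbabilityMeasure S × ℝ) |
      z.1.2 ∈ Icc (0 : ℝ) 1 ∧ ∃ k ∈ Δf (S × A), (z.1.1 : Measure S) = toMeas (stateLaw k) ∧
        (z.2.1 : Measure S) = toMeas (nextLaw q k) ∧ z.2.2 = meanReward g k} := by
  rw [RR, mem_ofPred_eq]
  congr! 4 with z
  refine and_congr_right fun _ => ⟨?_, ?_⟩
  · rintro ⟨u, hu, a, ha, hstate, hnext, hreward⟩
    refine ⟨jointLaw u a, jointLaw_mem_Δf hu ha, ?_⟩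
    rw [stateLaw_jointLaw u ha, nextLaw_jointLaw, meanReward_jointLaw]
    exact ⟨hstate, hnext, hreward⟩
  · rintro ⟨k, hk, hlaw⟩
    obtain ⟨a, ha, hjoint⟩ := exists_jointLaw_stateLaw_eq hk
    refine ⟨stateLaw k, stateLaw_mem_Δf hk, a, ha, ?_⟩
    rwa [← nextLaw_jointLaw, ← meanReward_jointLaw, hjoint]

lemma mul_add_integral_le_of_mem_RR [Nonempty A] (hpy : py ∈ RR q g)
    (hq : ∀ x a, q x a ∈ Δf S) {c : ℝ} {F F' : S →ᵇ ℝ}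
    (hle : ∀ x a, c * g x a + expect F' (q x a) ≤ F x) :
    c * py.2 + ∫ x, F' x ∂(py.1 : Measure S) ≤ ∫ x, F x ∂(py.1 : Measure S) := by
  have hF := ProbabilityMeasure.continuous_integral_boundedContinuousFunction F
  have hF' := ProbabilityMeasure.continuous_integral_boundedContinuousFunction F'
  have hclosed : IsClosed {z : (ProbabilityMeasure S × ℝ) × (ProbabilityMeasure S × ℝ) |
      c * z.2.2 + ∫ x, F' x ∂(z.2.1 : Measure S) ≤ ∫ x, F x ∂(z.1.1 : Measure S)} :=
    isClosed_le ((continuous_snd.snd.const_mul c).add (hF'.comp continuous_snd.fst))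
      (hF.comp continuous_fst.fst)
  refine closure_minimal ?_ hclosed (mem_RR_iff.1 hpy)
  rintro z ⟨-, k, hk, hstate, hnext, hreward⟩
  rw [mem_ofPred_eq, hstate, hnext, hreward, integral_toMeas (stateLaw_mem_Δf hk),
    integral_toMeas (nextLaw_mem_Δf hq hk), expect_stateLaw, expect_nextLaw, meanReward,
    ← expect_const_mul, ← expect_add]
  exact expect_mono hk fun p => hle p.1 p.2

variable {ι : Type*} {l : Filter ι} {μ : ProbabilityMeasure S}

lemma tendsto_toProb_of_tendsto_expect_sub {u v : ι → Δf S}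
    (hu : Tendsto (fun i => toProb (u i)) l (𝓝 μ))
    (huv : ∀ f : S →ᵇ ℝ, Tendsto (fun i => expect f (v i).1 - expect f (u i).1) l (𝓝 0)) :
    Tendsto (fun i => toProb (v i)) l (𝓝 μ) := by
  rw [ProbabilityMeasure.tendsto_iff_forall_integral_tendsto] at hu ⊢
  intro f
  have hintegral : ∀ w : Δf S, ∫ x, f x ∂(toProb w : Measure S) = expect f w.1 := fun w =>
    integral_toMeas w.2 f
  have hlim := (huv f).add (hu f)
  simp only [hintegral, sub_add_cancel, zero_add] at hlim ⊢
  exact hlim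

end InvariantCouples

section ExcessiveMajorants

variable {S A : Type*} [Nonempty A] {q : S → A → (S →₀ ℝ)} {g : S → A → ℝ}
  {l : Filter {θ : ℕ → ℝ // IsEval θ}} [l.NeBot]

lemma expect_le_of_tendsto_value (h : IsMDP q g) (hl : l ≤ patient) {v : S → ℝ}
    (hv : ∀ x, Tendsto (fun θ => value q g θ.1 x) l (𝓝 (v x))) (x : S) (a : A) :
    expect v (q x a) ≤ v x := by
  have hI : Tendsto (fun θ => impatience θ.1) l (𝓝 0) := tendsto_comap.mono_left hl
  have hlim := (hv x).add hI
  rw [add_zero] at hlim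
  refine le_of_tendsto_of_tendsto' (tendsto_expect hv (q x a)) hlim fun θ => ?_
  have hw := θ.2.isStageWeight
  have hshift : ∑' t, |θ.1 t - shift 1 θ t| = impatience θ :=
    tsum_congr fun t => abs_sub_comm _ _
  calc expect (value q g θ) (q x a)
      ≤ expect (value q g (shift 1 θ)) (q x a) + impatience θ := by
        rw [← expect_add_const (h.trans_mem x a), ← hshift]
        exact expect_mono (h.trans_mem x a) (value_le_add_tsum_abs_sub h hw (hw.shift 1))
    _ ≤ value q g θ x + impatience θ := by
        linarith [action_le_value h hw x a, mul_nonneg (hw.nonneg 0) (h.reward_mem x a).1]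

variable [MeasurableSpace S] [TopologicalSpace S]

/-- The functions over which the infimum is taken in the characterization of the value: continuous
affine `w : Δ(S) → [0, 1]` that are excessive and dominate the payoff of every invariant couple. -/
structure IsExcessiveMajorant [OpensMeasurableSpace S] (q : S → A → (S →₀ ℝ)) (g : S → A → ℝ)
    (w : ProbabilityMeasure S → ℝ) : Prop where
  continuous : Continuous w
  mem_Icc : ∀ μ, w μ ∈ Icc (0 : ℝ) 1
  isAffine : IsAffine w
  excessive : ∀ x a, ∀ μ : ProbabilityMeasure S, (μ : Measure S) = toMeas (q x a) →
    w μ ≤ w (diracProba x)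
  majorant : ∀ py ∈ RR q g, py.2 ≤ w py.1

/- The invariant couple is a limit of the state laws and payoffs of nearly optimal occupation laws,
whose invariance defect is of the order of the impatience. -/
lemma exists_mem_RR_of_tendsto_value [T2Space S] [BorelSpace S] [CompactSpace S] (h : IsMDP q g)
    (hl : l ≤ patient) {x : S} {c : ℝ} (hc : Tendsto (fun θ => value q g θ.1 x) l (𝓝 c)) :
    ∃ py ∈ RR q g, c ≤ py.2 ∧ ∀ w : ProbabilityMeasure S → ℝ, Continuous w → IsAffine w →
      (∀ y a, expect (fun z => w (diracProba z)) (q y a) ≤ w (diracProba y)) →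
      w py.1 ≤ w (diracProba x) := by
  have hI : Tendsto (fun θ => impatience θ.1) l (𝓝 0) := tendsto_comap.mono_left hl
  choose k hk hle hstate hinv using fun θ : {θ // IsEval θ} => exists_almost_invariant_law h θ.2 x
  let uk : {θ : ℕ → ℝ // IsEval θ} → Δf S := fun θ => ⟨_, stateLaw_mem_Δf (hk θ)⟩
  let vk : {θ : ℕ → ℝ // IsEval θ} → Δf S := fun θ => ⟨_, nextLaw_mem_Δf h.trans_mem (hk θ)⟩
  have hreward := fun θ => meanReward_mem_Icc h.reward_mem (hk θ)
  have hcompact : IsCompact ((univ : Set (ProbabilityMeasure S)) ×ˢ Icc (0 : ℝ) 1) :=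
    isCompact_univ.prod isCompact_Icc
  obtain ⟨⟨μ, y⟩, -, hclust⟩ := hcompact.ultrafilter_le_nhds
    ((Ultrafilter.of l).map fun θ => (toProb (uk θ), meanReward g (k θ)))
    (tendsto_principal.2 (.of_forall fun θ => ⟨mem_univ _, hreward θ⟩))
  have hU := Ultrafilter.of_le l
  have hlim : Tendsto (fun θ => (toProb (uk θ), meanReward g (k θ))) (Ultrafilter.of l)
      (𝓝 (μ, y)) := hclust
  have hnext : Tendsto (fun θ => toProb (vk θ)) (Ultrafilter.of l) (𝓝 μ) :=
    tendsto_toProb_of_tendsto_expect_sub hlim.fst_nhds fun f => by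
      refine squeeze_zero_norm (fun θ => hinv θ f ‖f‖ f.norm_coe_le_norm) ?_
      simpa using ((hI.const_mul 5).mul_const ‖f‖).mono_left hU
  refine ⟨(μ, y), mem_RR_iff.2 ?_, ?_, fun w hw haffine hexc => ?_⟩
  · exact mem_closure_of_tendsto (hlim.prodMk_nhds (hnext.prodMk_nhds hlim.snd_nhds)) <|
      .of_forall fun θ => ⟨hreward θ, k θ, hk θ, rfl, rfl, rfl⟩
  · have hlow := (hc.sub (hI.const_mul 2)).mono_left hU
    rw [mul_zero, sub_zero] at hlow
    exact le_of_tendsto_of_tendsto' hlow hlim.snd_nhds hle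
  · refine le_of_tendsto' ((hw.tendsto μ).comp hlim.fst_nhds) fun θ => ?_
    rw [Function.comp_apply, haffine.toProb_eq_expect]
    exact hstate θ _ hexc

lemma IsExcessiveMajorant.le_apply_diracProba [T2Space S] [BorelSpace S] [CompactSpace S]
    {w : ProbabilityMeasure S → ℝ} (hw : IsExcessiveMajorant q g w) (h : IsMDP q g)
    (hl : l ≤ patient) {x : S} {c : ℝ} (hc : Tendsto (fun θ => value q g θ.1 x) l (𝓝 c)) :
    c ≤ w (diracProba x) := by
  obtain ⟨py, hpy, hcy, hwx⟩ := exists_mem_RR_of_tendsto_value h hl hc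
  refine hcy.trans ((hw.majorant py hpy).trans (hwx w hw.continuous hw.isAffine fun y a => ?_))
  rw [← hw.isAffine.toProb_eq_expect ⟨q y a, h.trans_mem y a⟩]
  exact hw.excessive y a _ rfl

/- The dynamic programming inequality for the weight seen from stage `n` passes to invariant
couples; summing over `n` telescopes. -/
lemma le_integral_value_of_mem_RR [OpensMeasurableSpace S] (h : IsMDP q g)
    (hvalue : ∀ θ, IsStageWeight θ → ∑' t, θ t ≤ 1 → ∃ F : S →ᵇ ℝ, ⇑F = value q g θ)
    {py : ProbabilityMeasure S × ℝ} (hpy : py ∈ RR q g) {θ : ℕ → ℝ} (hθ : IsEval θ) :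
    py.2 ≤ ∫ x, value q g θ x ∂(py.1 : Measure S) := by
  have hw := hθ.isStageWeight
  choose F hF using fun n => hvalue (shift n θ) (hw.shift n) ((hw.tsum_shift_le n).trans_eq hθ.2)
  have hstep : ∀ n, θ n * py.2 + ∫ x, F (n + 1) x ∂(py.1 : Measure S) ≤
      ∫ x, F n x ∂(py.1 : Measure S) := fun n =>
    mul_add_integral_le_of_mem_RR hpy h.trans_mem fun x a => by
      simpa [hF, shift_one_shift, shift] using action_le_value h (hw.shift n) x a
  have hsum : ∀ n, (∑ t ∈ Finset.range n, θ t) * py.2 + ∫ x, F n x ∂(py.1 : Measure S) ≤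
      ∫ x, F 0 x ∂(py.1 : Measure S) := fun n => by
    induction n with
    | zero => simp
    | succ n ih => rw [Finset.sum_range_succ, add_mul]; linarith [hstep n]
  have hlim := hw.summable.hasSum.tendsto_sum_nat.mul_const py.2
  rw [hθ.2, one_mul] at hlim
  have hF0 : ⇑(F 0) = value q g θ := hF 0
  rw [← hF0]
  refine le_of_tendsto' hlim fun n => ?_
  have hnonneg : 0 ≤ ∫ x, F n x ∂(py.1 : Measure S) :=
    integral_nonneg fun x => hF n ▸ value_nonneg h (hw.shift n) x
  linarith [hsum n]

lemma isExcessiveMajorant_integral [OpensMeasurableSpace S] (h : IsMDP q g)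
    (hvalue : ∀ θ, IsStageWeight θ → ∑' t, θ t ≤ 1 → ∃ F : S →ᵇ ℝ, ⇑F = value q g θ)
    (hl : l ≤ patient) {v : S →ᵇ ℝ} (hv : TendstoUniformly (fun θ => value q g θ.1) v l) :
    IsExcessiveMajorant q g fun μ => ∫ x, v x ∂(μ : Measure S) := by
  have hmem : ∀ x, v x ∈ Icc (0 : ℝ) 1 := fun x =>
    isClosed_Icc.mem_of_tendsto (hv.tendsto_at x) <| .of_forall fun θ =>
      ⟨value_nonneg h θ.2.isStageWeight x, (value_le_tsum h θ.2.isStageWeight x).trans_eq θ.2.2⟩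
  refine ⟨ProbabilityMeasure.continuous_integral_boundedContinuousFunction v, fun μ => ⟨?_, ?_⟩,
    isAffine_integral v, fun x a μ hμ => ?_, fun py hpy => le_of_forall_pos_le_add fun ε hε => ?_⟩
  · exact integral_nonneg fun x => (hmem x).1
  · calc _ ≤ ∫ _, (1 : ℝ) ∂(μ : Measure S) :=
          integral_mono (v.integrable _) (integrable_const 1) fun x => (hmem x).2
      _ = 1 := by simp
  · rw [hμ, integral_toMeas (h.trans_mem x a), integral_diracProba]
    exact expect_le_of_tendsto_value h hl hv.tendsto_at x a
  · obtain ⟨θ, hθ⟩ := (Metric.tendstoUniformly_iff.1 hv ε hε).exists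
    obtain ⟨F, hF⟩ := hvalue θ θ.2.isStageWeight θ.2.2.le
    calc py.2 ≤ ∫ x, F x ∂(py.1 : Measure S) :=
          hF ▸ le_integral_value_of_mem_RR h hvalue hpy θ.2
      _ ≤ ∫ x, (v x + ε) ∂(py.1 : Measure S) := by
          refine integral_mono (F.integrable _) ((v.integrable _).add (integrable_const ε))
            fun x => ?_
          have hdist := hθ x
          rw [← hF, Real.dist_eq] at hdist
          linarith [(abs_lt.1 hdist).1]
      _ = ∫ x, v x ∂(py.1 : Measure S) + ε := by
          rw [integral_add (v.integrable _) (integrable_const ε)]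
          simp

end ExcessiveMajorants

section UniformValue

variable {S A : Type*} [Nonempty A] [MeasurableSpace S] [TopologicalSpace S] [BorelSpace S]
  [CompactSpace S] [T2Space S] {q : S → A → (S →₀ ℝ)} {g : S → A → ℝ} {𝒦 : Set (S →ᵇ ℝ)}

/- Any two cluster points of the values agree: each is an excessive majorant, hence lies above the
other. -/
lemma exists_tendstoUniformly_value (h : IsMDP q g) (h𝒦 : IsCompact 𝒦)
    (hvalue : ∀ θ, IsStageWeight θ → ∑' t, θ t ≤ 1 → ∃ F ∈ 𝒦, ⇑F = value q g θ) :
    ∃ v : S →ᵇ ℝ, TendstoUniformly (fun θ => value q g θ.1) v patient ∧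
      IsExcessiveMajorant q g fun μ => ∫ x, v x ∂(μ : Measure S) := by
  choose V hV𝒦 hV using fun θ : {θ // IsEval θ} => hvalue θ θ.2.isStageWeight θ.2.2.le
  have hcont : ∀ θ, IsStageWeight θ → ∑' t, θ t ≤ 1 → ∃ F : S →ᵇ ℝ, ⇑F = value q g θ :=
    fun θ hθ hle => (hvalue θ hθ hle).imp fun _ => And.right
  have hunif : ∀ {l : Filter {θ // IsEval θ}} {v : S →ᵇ ℝ}, Tendsto V l (𝓝 v) →
      TendstoUniformly (fun θ => value q g θ.1) v l := fun hv => by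
    simpa only [hV] using BoundedContinuousFunction.tendsto_iff_tendstoUniformly.1 hv
  have hexists : ∀ 𝒰 : Ultrafilter {θ // IsEval θ}, ∃ v ∈ 𝒦, Tendsto V 𝒰 (𝓝 v) := fun 𝒰 =>
    h𝒦.ultrafilter_le_nhds (𝒰.map V) (tendsto_principal.2 (.of_forall hV𝒦))
  have hle : ∀ {𝒰 𝒰' : Ultrafilter {θ // IsEval θ}} {v v' : S →ᵇ ℝ}, ↑𝒰 ≤ patient →
      ↑𝒰' ≤ patient → Tendsto V 𝒰 (𝓝 v) → Tendsto V 𝒰' (𝓝 v') → ∀ x, v x ≤ v' x :=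
    fun h𝒰 h𝒰' hv hv' x => by
      have hmajorant := isExcessiveMajorant_integral h hcont h𝒰' (hunif hv')
      simpa only [integral_diracProba] using
        hmajorant.le_apply_diracProba h h𝒰 ((hunif hv).tendsto_at x)
  obtain ⟨v, -, hv⟩ := hexists (Ultrafilter.of patient)
  have hlim : Tendsto V patient (𝓝 v) := by
    refine (tendsto_iff_ultrafilter _ _ _).2 fun 𝒰 h𝒰 => ?_
    obtain ⟨v', -, hv'⟩ := hexists 𝒰
    have hvv' : v' = v := BoundedContinuousFunction.ext fun x => le_antisymm
      (hle h𝒰 (Ultrafilter.of_le patient) hv' hv x) (hle (Ultrafilter.of_le patient) h𝒰 hv hv' x)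
    exact hvv' ▸ hv'
  exact ⟨v, hunif hlim, isExcessiveMajorant_integral h hcont le_rfl (hunif hlim)⟩

lemma isLeast_excessiveMajorant_apply (h : IsMDP q g) {v : S →ᵇ ℝ}
    (hv : TendstoUniformly (fun θ => value q g θ.1) v patient)
    (hmajorant : IsExcessiveMajorant q g fun μ => ∫ x, v x ∂(μ : Measure S)) (x : S) :
    IsLeast {c | ∃ w, IsExcessiveMajorant q g w ∧ c = w (diracProba x)} (v x) := by
  refine ⟨⟨_, hmajorant, (integral_diracProba v x).symm⟩, ?_⟩
  rintro _ ⟨w, hw, rfl⟩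
  exact hw.le_apply_diracProba h le_rfl (hv.tendsto_at x)

end UniformValue

end Stmt16

theorem stmt16_general {S A : Type*} [TopologicalSpace S] [CompactSpace S] [T2Space S]
    [MeasurableSpace S] [BorelSpace S] [Nonempty A] {q : S → A → (S →₀ ℝ)} {g : S → A → ℝ}
    (h : Stmt16.IsMDP q g)
    (heq : Equicontinuous fun θ : {θ : ℕ → ℝ // Stmt16.IsEval θ} => Stmt16.value q g θ.1) :
    ∃ vstar : S → ℝ,
      (∀ ε > (0 : ℝ), ∃ α > (0 : ℝ), ∀ θ : ℕ → ℝ, Stmt16.IsEval θ → Stmt16.impatience θ ≤ α →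
        ∀ x, |Stmt16.value q g θ x - vstar x| ≤ ε) ∧
      (∀ ε > (0 : ℝ), ∃ α > (0 : ℝ), ∀ x, ∃ σ, Stmt16.IsStrat σ ∧
        ∀ θ : ℕ → ℝ, Stmt16.IsEval θ → Stmt16.impatience θ ≤ α →
          Stmt16.payoff q g θ σ x ≥ vstar x - ε) ∧
      ∀ x, vstar x = sInf {c : ℝ | ∃ w : ProbabilityMeasure S → ℝ, Continuous w ∧
        (∀ μ, w μ ∈ Icc (0 : ℝ) 1) ∧ Stmt16.IsAffine w ∧
        (∀ (x' : S) (a : A), ∀ μ : ProbabilityMeasure S,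
          (μ : Measure S) = Stmt16.toMeas (q x' a) → w (diracProba x') ≥ w μ) ∧
        (∀ py ∈ Stmt16.RR q g, w py.1 ≥ py.2) ∧ c = w (diracProba x)} := by
  obtain ⟨𝒦, h𝒦, hvalue⟩ := Stmt16.exists_isCompact_forall_value h heq
  obtain ⟨v, hv, hmajorant⟩ := Stmt16.exists_tendstoUniformly_value h h𝒦 hvalue
  have hclose : ∀ ε > (0 : ℝ), ∃ α > (0 : ℝ), ∀ θ : ℕ → ℝ, Stmt16.IsEval θ →
      Stmt16.impatience θ ≤ α → ∀ x, |Stmt16.value q g θ x - v x| ≤ ε := fun ε hε => by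
    obtain ⟨α, hα, hdist⟩ :=
      Stmt16.exists_pos_of_eventually_patient (Metric.tendstoUniformly_iff.1 hv ε hε)
    exact ⟨α, hα, fun θ hθ hle x => by
      simpa only [Real.dist_eq, abs_sub_comm] using (hdist ⟨θ, hθ⟩ hle x).le⟩
  refine ⟨v, hclose, fun ε hε => ?_, fun x => ?_⟩
  · obtain ⟨α, hα, hle⟩ := hclose (ε / 2) (half_pos hε)
    refine ⟨α, hα, fun x => ?_⟩
    obtain ⟨σ, hσ, hpayoff⟩ := Stmt16.exists_isStrat_forall_sub_le_payoff h h𝒦 hvalue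
      (Stmt16.convex_setOf_impatience_le α) (fun θ hθ => ⟨hθ.1.isStageWeight, hθ.1.2.le⟩) (x := x)
      (b := v x - ε / 2) (fun θ hθ => by linarith [(abs_le.1 (hle θ hθ.1 hθ.2 x)).1]) (half_pos hε)
    exact ⟨σ, hσ, fun θ hθ himp => by linarith [hpayoff θ ⟨hθ, himp⟩]⟩
  · rw [← (Stmt16.isLeast_excessiveMajorant_apply h hv hmajorant x).csInf_eq]
    refine congrArg sInf (Set.ext fun c => exists_congr fun w => ?_)
    exact ⟨fun ⟨⟨hcont, hIcc, haff, hexc, hmaj⟩, hc⟩ => ⟨hcont, hIcc, haff, hexc, hmaj, hc⟩,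
      fun ⟨hcont, hIcc, haff, hexc, hmaj, hc⟩ => ⟨⟨hcont, hIcc, haff, hexc, hmaj⟩, hc⟩⟩

/-- **Theorem 4 (Renault–Venel).** A standard MDP `Ψ = (X,A,q,g)`, with `X` a compact
subset of a simplex `Δ(K)` and `q`, `g` satisfying the `D₁`-non-expansiveness
assumptions, has a general uniform value `v*`, characterized as the infimum over
continuous affine `w : Δ(X) → [0,1]` that are (1) excessive and (2) above the payoff on
invariant couples, of `w(δ_x)`. -/
theorem stmt16 (K : Type*) [Fintype K] [Nonempty K]
    (X : Set (K → ℝ)) (hX : IsCompact X) (hXΔ : X ⊆ Stmt16.ΔK K)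
    (A : Type*) [Nonempty A]
    (q : X → A → (X →₀ ℝ)) (hq : ∀ x a, q x a ∈ Stmt16.Δf X)
    (g : X → A → ℝ) (hg : ∀ x a, g x a ∈ Icc (0:ℝ) 1)
    (hlip : ∀ (x y : X) (a : A), ∀ f ∈ Stmt16.D1 K, ∀ α β : ℝ, 0 ≤ α → 0 ≤ β →
      |α * Stmt16.fExt f (q x a) - β * Stmt16.fExt f (q y a)| ≤
        ∑ k, |α * (x : K → ℝ) k - β * (y : K → ℝ) k| ∧
      |α * g x a - β * g y a| ≤ ∑ k, |α * (x : K → ℝ) k - β * (y : K → ℝ) k|) :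
    ∃ vstar : X → ℝ,
      -- general limit value
      (∀ ε > (0:ℝ), ∃ α > (0:ℝ), ∀ θ : ℕ → ℝ, Stmt16.IsEval θ →
        Stmt16.impatience θ ≤ α →
        ∀ x : X, |Stmt16.value q g θ x - vstar x| ≤ ε) ∧
      -- general uniform value
      (∀ ε > (0:ℝ), ∃ α > (0:ℝ), ∀ x : X, ∃ σ, Stmt16.IsStrat σ ∧
        ∀ θ : ℕ → ℝ, Stmt16.IsEval θ → Stmt16.impatience θ ≤ α →
          Stmt16.payoff q g θ σ x ≥ vstar x - ε) ∧
      -- characterization of `v*`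
      (∀ x : X, vstar x =
        sInf {c : ℝ | ∃ w : ProbabilityMeasure X → ℝ, Continuous w ∧
          (∀ μ, w μ ∈ Icc (0:ℝ) 1) ∧ Stmt16.IsAffine w ∧
          (∀ (x' : X) (a : A), ∀ μ : ProbabilityMeasure X,
            (μ : Measure X) = Stmt16.toMeas (q x' a) →
            w ⟨Measure.dirac x', inferInstance⟩ ≥ w μ) ∧
          (∀ py ∈ Stmt16.RR q g, w py.1 ≥ py.2) ∧
          c = w ⟨Measure.dirac x, inferInstance⟩}) := by
  have : CompactSpace X := isCompact_iff_compactSpace.1 hX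
  exact stmt16_general ⟨hq, hg⟩ (Stmt16.equicontinuous_value_of_forall_mem_D1 ⟨hq, hg⟩ hlip)
end

section
/- Every standard MDP (K, A, q, g) with a finite nonempty set of states K has a general uniform value v*, and for each state k, v*(k) is the infimum of w(k) over all affine functions w : Δ(K) → [0,1] such that (1) w(δ_{k'}) ≥ sup_{a ∈ A} w(q(k',a)) for all k' ∈ K, and (2) w(p) ≥ y for all (p,y) ∈ RR, where RR = {(p,y) ∈ Δ(K)×[0,1] : ((p,y),(p,y)) ∈ cl(conv(Graph F))} with F(k,y) = {(q(k,a), g(k,a)) : a ∈ A}. -/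
open Set

namespace Stmt17

variable {K A : Type*} [Fintype K]

/-- The simplex `Δ(K)` of probability vectors on `K`. -/
def ΔK (K : Type*) [Fintype K] : Set (K → ℝ) := {p | (∀ k, 0 ≤ p k) ∧ ∑ k, p k = 1}

/-- `Δ_f(A)`: finitely supported probability measures on `A`, as weight functions. -/
def Δf (A : Type*) : Set (A →₀ ℝ) := {u | (∀ a, 0 ≤ u a) ∧ u.sum (fun _ r => r) = 1}

/-- The Dirac probability vector `δ_k`. -/
def dirac [DecidableEq K] (k : K) : K → ℝ := fun k' => if k' = k then 1 else 0

/-- Behavioral strategies: given the past history and the current state, play a finitely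
supported mixed action. -/
def IsStrat (σ : List (K × A) → K → (A →₀ ℝ)) : Prop := ∀ h k, σ h k ∈ Δf A

/-- The (finitely supported) distribution at time `t` of the pair
(history of states and actions up to stage `t`, state at stage `t+1`),
for initial state `k₁` and strategy `σ`. -/
noncomputable def hist (q : K → A → (K → ℝ)) (σ : List (K × A) → K → (A →₀ ℝ))
    (k₁ : K) : ℕ → (List (K × A) × K →₀ ℝ)
  | 0 => Finsupp.single ([], k₁) 1
  | t + 1 => (hist q σ k₁ t).sum fun hk w =>
      (σ hk.1 hk.2).sum fun a pa =>
        ∑ k', Finsupp.single (hk.1 ++ [(hk.2, a)], k') (w * pa * q hk.2 a k')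

/-- The expected payoff `E_{k₁,σ}(g(k_{t+1}, a_{t+1}))` at stage `t+1`. -/
noncomputable def stagePay (q : K → A → (K → ℝ)) (g : K → A → ℝ)
    (σ : List (K × A) → K → (A →₀ ℝ)) (k₁ : K) (t : ℕ) : ℝ :=
  (hist q σ k₁ t).sum fun hk w => (σ hk.1 hk.2).sum fun a pa => w * pa * g hk.2 a

/-- An evaluation: a probability distribution `θ = (θ_t)_{t ≥ 1}` over stages
(indexed here by `t : ℕ`, `t` standing for stage `t+1`). -/
def IsEval (θ : ℕ → ℝ) : Prop := (∀ t, 0 ≤ θ t) ∧ ∑' t, θ t = 1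

/-- The impatience `I(θ) = Σ_{t≥1} |θ_{t+1} − θ_t|`. -/
noncomputable def impatience (θ : ℕ → ℝ) : ℝ := ∑' t, |θ (t + 1) - θ t|

/-- The `θ`-payoff `γ_θ(k₁,σ) = E_{k₁,σ}(Σ_t θ_t g(k_t,a_t))`. -/
noncomputable def payoff (q : K → A → (K → ℝ)) (g : K → A → ℝ)
    (θ : ℕ → ℝ) (σ : List (K × A) → K → (A →₀ ℝ)) (k₁ : K) : ℝ :=
  ∑' t, θ t * stagePay q g σ k₁ t

/-- The `θ`-value `v_θ(k₁) = sup_σ γ_θ(k₁,σ)`. -/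
noncomputable def value (q : K → A → (K → ℝ)) (g : K → A → ℝ)
    (θ : ℕ → ℝ) (k₁ : K) : ℝ :=
  sSup {c : ℝ | ∃ σ, IsStrat σ ∧ c = payoff q g θ σ k₁}

/-- `w : Δ(K) → ℝ` is affine. -/
def IsAffineOn (w : (K → ℝ) → ℝ) : Prop :=
  ∀ p ∈ ΔK K, ∀ p' ∈ ΔK K, ∀ α : ℝ, α ∈ Icc (0:ℝ) 1 →
    w (α • p + (1 - α) • p') = α * w p + (1 - α) * w p'

/-- The graph of the correspondence `F(k,y) = {(q(k,a), g(k,a)) : a ∈ A}`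
at Dirac points. -/
def GraphF [DecidableEq K] (q : K → A → (K → ℝ)) (g : K → A → ℝ) :
    Set (((K → ℝ) × ℝ) × ((K → ℝ) × ℝ)) :=
  {z | ∃ (k : K) (a : A) (y : ℝ), y ∈ Icc (0:ℝ) 1 ∧
    z = ((dirac k, y), (q k a, g k a))}

/-- `RR = {(p,y) ∈ Δ(K)×[0,1] : ((p,y),(p,y)) ∈ cl(conv(Graph F))}`. -/
def RR [DecidableEq K] (q : K → A → (K → ℝ)) (g : K → A → ℝ) :
    Set ((K → ℝ) × ℝ) :=
  {py | py.1 ∈ ΔK K ∧ py.2 ∈ Icc (0:ℝ) 1 ∧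
    (py, py) ∈ closure (convexHull ℝ (GraphF q g))}

end Stmt17

/-!
Let `u k` be the largest rate `c` for which some strategy from `k` has stage payoffs at least `c` at
every stage, up to a bounded coboundary `R (t + 1) - R t`. Summation by parts bounds the
contribution of the coboundary to a `θ`-payoff by a multiple of `I(θ)`, so a strategy guaranteeing
such a rate is near optimal for all patient evaluations simultaneously.

The function `u` is excessive. It is above the payoff on an invariant couple `(p, y) ∈ RR`: the
couple disintegrates into limits `(P k, r k)` of mixed outcomes with `p ᵥ* P = p` and `p ⬝ᵥ r = y`;
since `P` is nonexpansive, `r = ρ + (h - P *ᵥ h)` with `P *ᵥ ρ = ρ`, so that `p ⬝ᵥ ρ = y`; and a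
Markov strategy approximating `P` with summable errors guarantees the rate `ρ`, its coboundary being
the expectation of `h`.

Conversely, let `w` be excessive and above the payoff on `RR`. Separating the closed convex hull of
the graph of `F` from the couples that are stationary and exceed `w` by `ε` gives a bias vector `h`
with `g k a + q k a ⬝ᵥ h ≤ w k + ε + h k`, hence every strategy has stage payoffs at most `w + ε` up
to a uniformly bounded coboundary. So `u ≤ w`, and for `w = u` no strategy does asymptotically
better than `u`.
-/

namespace Stmt17

open scoped Matrix

/-! ### Rates of real sequences up to bounded coboundaries -/

/-- The sequence `z` has lower rate `c` with bias bound `B`: up to a coboundary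
`R (n + 1) - R n` with `|R| ≤ B`, every term of `z` is at least `c`. Asking for the bound term by
term, rather than for Cesàro means, is what makes it pass to all patient evaluations. -/
def HasLowerRate (z : ℕ → ℝ) (c B : ℝ) : Prop :=
  ∃ R : ℕ → ℝ, (∀ n, |R n| ≤ B) ∧ ∀ n, c + R (n + 1) - R n ≤ z n

lemma nonpos_of_forall_nat_mul_le {x B : ℝ} (h : ∀ n : ℕ, n * x ≤ B) : x ≤ 0 := by
  by_contra! hx
  obtain ⟨n, hn⟩ := exists_nat_gt (B / x)
  exact (h n).not_gt ((div_lt_iff₀ hx).1 hn)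

lemma hasLowerRate_of_le {z : ℕ → ℝ} {c : ℝ} (h : ∀ n, c ≤ z n) : HasLowerRate z c 0 :=
  ⟨0, by simp, by simpa using h⟩

namespace HasLowerRate

variable {z z' : ℕ → ℝ} {c c' B B' : ℝ}

lemma mono (h : HasLowerRate z c B) (hc : c' ≤ c) (hB : B ≤ B') : HasLowerRate z c' B' :=
  let ⟨R, hR, hz⟩ := h
  ⟨R, fun n => (hR n).trans hB, fun n => by linarith [hz n]⟩

lemma add (h : HasLowerRate z c B) (h' : HasLowerRate z' c' B') :
    HasLowerRate (z + z') (c + c') (B + B') := by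
  obtain ⟨R, hR, hz⟩ := h
  obtain ⟨R', hR', hz'⟩ := h'
  refine ⟨R + R', fun n => (abs_add_le _ _).trans (add_le_add (hR n) (hR' n)), fun n => ?_⟩
  simp only [Pi.add_apply]
  linarith [hz n, hz' n]

lemma nonpos (h : HasLowerRate 0 c B) : c ≤ 0 := by
  obtain ⟨R, hR, hz⟩ := h
  have telescope (n : ℕ) : n * c ≤ R 0 - R n := by
    induction n with
    | zero => simp
    | succ n ih =>
      have : c + R (n + 1) - R n ≤ 0 := hz n
      push_cast
      linarith
  refine nonpos_of_forall_nat_mul_le (B := B + B) fun n => (telescope n).trans ?_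
  linarith [(abs_le.1 (hR 0)).2, (abs_le.1 (hR n)).1]

lemma le (h : HasLowerRate z c B) (h' : HasLowerRate (-z) (-c') B') : c ≤ c' := by
  have hsum := h.add h'
  rw [add_neg_cancel] at hsum
  linarith [hsum.nonpos]

lemma of_tail (h : HasLowerRate (fun n => z (n + 1)) c B) :
    HasLowerRate z c (B + |c - z 0|) := by
  obtain ⟨R, hR, hz⟩ := h
  refine ⟨fun | 0 => R 0 + (c - z 0) | n + 1 => R n, ?_, ?_⟩
  · rintro (_ | n)
    · exact (abs_add_le _ _).trans (by gcongr; exact hR 0)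
    · exact (hR n).trans (le_add_of_nonneg_right (abs_nonneg _))
  · rintro (_ | n)
    · exact (by ring : c + R 0 - (R 0 + (c - z 0)) = z 0).le
    · exact hz n

end HasLowerRate

variable {θ : ℕ → ℝ}

lemma IsEval.summable (hθ : IsEval θ) : Summable θ := by
  by_contra h
  exact zero_ne_one ((tsum_eq_zero_of_not_summable h).symm.trans hθ.2)

lemma summable_mul_of_abs_le {y : ℕ → ℝ} {D : ℝ} (hθ : Summable θ) (hy : ∀ n, |y n| ≤ D) :
    Summable fun n => θ n * y n :=
  .of_norm_bounded (hθ.abs.mul_right D) fun n => by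
    rw [Real.norm_eq_abs, abs_mul]
    gcongr
    exact hy n

lemma tsum_mul_sub_eq_tsum_sub_mul {Q : ℕ → ℝ} {D : ℝ} (hθ : Summable θ) (hQ : ∀ n, |Q n| ≤ D)
    (hQ0 : Q 0 = 0) :
    ∑' n, θ n * (Q (n + 1) - Q n) = ∑' n, (θ n - θ (n + 1)) * Q (n + 1) := by
  have hs := summable_mul_of_abs_le hθ hQ
  have hs' := summable_mul_of_abs_le hθ fun n => hQ (n + 1)
  have hshift : ∑' n, θ n * Q n = ∑' n, θ (n + 1) * Q (n + 1) := by
    rw [hs.tsum_eq_zero_add, hQ0, mul_zero, zero_add]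
  simp only [mul_sub, sub_mul]
  rw [hs'.tsum_sub hs, hs'.tsum_sub ((summable_nat_add_iff 1).2 hs), hshift]

lemma abs_tsum_mul_sub_le {R : ℕ → ℝ} {B : ℝ} (hθ : Summable θ) (hR : ∀ n, |R n| ≤ B) :
    |∑' n, θ n * (R (n + 1) - R n)| ≤ 2 * B * impatience θ := by
  -- Recentring `R` at `R 0` removes the boundary term of the summation by parts.
  set Q : ℕ → ℝ := fun n => R n - R 0
  have hQ (n : ℕ) : |Q n| ≤ 2 * B := by
    linarith [abs_sub (R n) (R 0), hR n, hR 0]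
  have hI : Summable fun n => |θ (n + 1) - θ n| := (((summable_nat_add_iff 1).2 hθ).sub hθ).abs
  calc |∑' n, θ n * (R (n + 1) - R n)| = |∑' n, (θ n - θ (n + 1)) * Q (n + 1)| := by
        rw [← tsum_mul_sub_eq_tsum_sub_mul hθ hQ (sub_self _)]
        simp only [Q, sub_sub_sub_cancel_right]
    _ ≤ ∑' n, 2 * B * |θ (n + 1) - θ n| := by
        rw [← Real.norm_eq_abs]
        refine tsum_of_norm_bounded (hI.mul_left _).hasSum fun n => ?_
        rw [Real.norm_eq_abs, abs_mul, abs_sub_comm, mul_comm]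
        gcongr
        exact hQ (n + 1)
    _ = 2 * B * impatience θ := tsum_mul_left

lemma HasLowerRate.sub_impatience_le_tsum {z : ℕ → ℝ} {c B C : ℝ} (h : HasLowerRate z c B)
    (hθ : IsEval θ) (hz : ∀ n, |z n| ≤ C) :
    c - 2 * B * impatience θ ≤ ∑' n, θ n * z n := by
  obtain ⟨R, hR, hRz⟩ := h
  have hsR : Summable fun n => θ n * (R (n + 1) - R n) :=
    summable_mul_of_abs_le hθ.summable fun n =>
      (abs_sub _ _).trans (add_le_add (hR (n + 1)) (hR n))
  have hsc := hθ.summable.mul_right c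
  calc c - 2 * B * impatience θ ≤ c + ∑' n, θ n * (R (n + 1) - R n) := by
        linarith [neg_le_of_abs_le (abs_tsum_mul_sub_le hθ.summable hR)]
    _ = ∑' n, (θ n * c + θ n * (R (n + 1) - R n)) := by
        rw [hsc.tsum_add hsR, tsum_mul_right, hθ.2, one_mul]
    _ ≤ ∑' n, θ n * z n := by
        refine (hsc.add hsR).tsum_le_tsum (fun n => ?_) (summable_mul_of_abs_le hθ.summable hz)
        rw [← mul_add]
        exact mul_le_mul_of_nonneg_left (by linarith [hRz n]) (hθ.1 n)

/-! ### Ergodic decomposition, mixtures of convex sets, and separation -/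

theorem isCompl_ker_range_one_sub {V : Type*} [NormedAddCommGroup V] [NormedSpace ℝ V]
    [FiniteDimensional ℝ V] {T : Module.End ℝ V} (hT : ∀ x, ‖T x‖ ≤ ‖x‖) :
    IsCompl (LinearMap.ker (1 - T)) (LinearMap.range (1 - T)) := by
  rw [Submodule.isCompl_iff_disjoint _ _
    (by rw [add_comm, LinearMap.finrank_range_add_finrank_ker]), Submodule.disjoint_def]
  rintro x hx ⟨z, rfl⟩
  -- If `x = z - T z` is fixed then `T ^ n z = z - n • x`, so boundedness of the orbit kills `x`.
  set x := (1 - T) z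
  have hTx : T x = x := (sub_eq_zero.1 hx).symm
  have hTz : T z = z - x := (sub_sub_cancel z (T z)).symm
  have horbit (n : ℕ) : ‖z - (n : ℝ) • x‖ ≤ ‖z‖ := by
    induction n with
    | zero => simp
    | succ n ih =>
      refine le_trans (le_of_eq ?_) ((hT (z - (n : ℝ) • x)).trans ih)
      rw [map_sub, map_smul, hTx, hTz, Nat.cast_succ, add_smul, one_smul]
      congr 1
      abel
  refine norm_le_zero_iff.1 (nonpos_of_forall_nat_mul_le (B := ‖z‖ + ‖z‖) fun n => ?_)
  calc n * ‖x‖ = ‖z - (z - (n : ℝ) • x)‖ := by simp [norm_smul]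
    _ ≤ ‖z‖ + ‖z‖ := (norm_sub_le _ _).trans (by gcongr; exact horbit n)

/-- The graph of the correspondence `p ↦ ∑ k, p k • C k` from `Δ(K)` to mixtures of the sets
`C k`. -/
def mixtureGraph {K E : Type*} [Fintype K] [AddCommGroup E] [Module ℝ E] (C : K → Set E) :
    Set ((K → ℝ) × E) :=
  (fun x : (K → ℝ) × (K → E) => (x.1, ∑ k, x.1 k • x.2 k)) '' (ΔK K ×ˢ univ.pi C)

section Mixtures

variable {K E : Type*} [Fintype K] [AddCommGroup E] [Module ℝ E] {C : K → Set E}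

lemma isCompact_ΔK : IsCompact (ΔK K) := isCompact_stdSimplex ℝ K

lemma convex_ΔK : Convex ℝ (ΔK K) := convex_stdSimplex ℝ K

lemma isCompact_mixtureGraph [TopologicalSpace E] [ContinuousAdd E] [ContinuousSMul ℝ E]
    (hC : ∀ k, IsCompact (C k)) : IsCompact (mixtureGraph C) :=
  (isCompact_ΔK.prod (isCompact_univ_pi hC)).image (by fun_prop)

open scoped Pointwise in
lemma convex_mixtureGraph (hC : ∀ k, Convex ℝ (C k)) : Convex ℝ (mixtureGraph C) := by
  rintro _ ⟨⟨p, c⟩, ⟨hp, hc⟩, rfl⟩ _ ⟨⟨p', c'⟩, ⟨hp', hc'⟩, rfl⟩ a b ha hb hab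
  have hmix (k : K) : ∃ d ∈ C k,
      (a * p k + b * p' k) • d = (a * p k) • c k + (b * p' k) • c' k := by
    have : (a * p k) • c k + (b * p' k) • c' k ∈ (a * p k + b * p' k) • C k := by
      rw [(hC k).add_smul (mul_nonneg ha (hp.1 k)) (mul_nonneg hb (hp'.1 k))]
      exact add_mem_add (smul_mem_smul_set (hc k trivial)) (smul_mem_smul_set (hc' k trivial))
    exact this
  choose d hd hmix using hmix
  refine ⟨(a • p + b • p', d), ⟨convex_ΔK hp hp' ha hb hab, fun k _ => hd k⟩, ?_⟩
  simp [hmix, Finset.sum_add_distrib, Finset.smul_sum, mul_smul]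

end Mixtures

lemma strongDual_prod_apply {V : Type*} [AddCommGroup V] [TopologicalSpace V] [Module ℝ V]
    (F : StrongDual ℝ (V × ℝ)) (x : V) (y : ℝ) :
    F (x, y) = F.comp (.inl ℝ V ℝ) x + F (0, 1) * y := by
  have hsplit : (x, y) = (x, 0) + y • ((0 : V), (1 : ℝ)) := by simp
  rw [hsplit, map_add, map_smul, smul_eq_mul, mul_comm]
  rfl

lemma exists_dual_snd_lt_add {V : Type*} [AddCommGroup V] [TopologicalSpace V] [T1Space V]
    [IsTopologicalAddGroup V] [Module ℝ V] [ContinuousSMul ℝ V] [LocallyConvexSpace ℝ V]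
    {X : Set (V × ℝ)} (hX : Convex ℝ X) (hXc : IsCompact X) {ε : ℝ}
    (hε : ∀ y, (0, y) ∈ X → y < ε) (hslater : ∀ f : StrongDual ℝ V, ∃ x ∈ X, 0 ≤ f x.1) :
    ∃ f : StrongDual ℝ V, ∀ x ∈ X, x.2 < ε + f x.1 := by
  have hdisj : Disjoint X ({(0 : V)} ×ˢ Ici ε) := by
    rw [Set.disjoint_left]
    rintro ⟨_, y⟩ hx ⟨rfl, hy⟩
    exact (hε y hx).not_ge hy
  obtain ⟨F, s, t, hs, hst, ht⟩ := geometric_hahn_banach_compact_closed hX hXc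
    ((convex_singleton 0).prod (convex_Ici ε)) (isClosed_singleton.prod isClosed_Ici) hdisj
  set f : StrongDual ℝ V := F.comp (.inl ℝ V ℝ)
  set c : ℝ := F (0, 1)
  have hF (x : V) (y : ℝ) : F (x, y) = f x + c * y := strongDual_prod_apply F x y
  have hray (y : ℝ) (hy : ε ≤ y) : t < c * y := by
    simpa [hF] using ht (0, y) ⟨rfl, hy⟩
  have hc0 : 0 ≤ c := by
    by_contra! hneg
    have hle := mul_le_mul_of_nonpos_left (le_max_right ε (t / c)) hneg.le
    rw [mul_div_cancel₀ _ hneg.ne] at hle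
    exact (hray _ (le_max_left _ _)).not_ge hle
  -- A vertical separating hyperplane would contradict the Slater condition `hslater`.
  have hcne : c ≠ 0 := by
    intro hc
    obtain ⟨x, hx, hfx⟩ := hslater f
    have hlt := hs x hx
    have ht0 := hray ε le_rfl
    rw [hF x.1 x.2, hc, zero_mul] at hlt
    rw [hc, zero_mul] at ht0
    linarith
  refine ⟨-(c⁻¹ • f), fun x hx => ?_⟩
  have hlt : f x.1 + c * x.2 < c * ε := by
    rw [← hF]
    exact (hs x hx).trans (hst.trans (hray ε le_rfl))
  refine lt_of_mul_lt_mul_left ?_ hc0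
  simp only [neg_apply, smul_apply, smul_eq_mul, mul_add,
    mul_neg, mul_inv_cancel_left₀ hcne]
  linarith

/-! ### Averages -/

section Averages

variable {X K : Type*} [Fintype K]

/-- The mean `∑ a, u a * f a` of a function under a finitely supported weight, as a linear form in
the function. -/
noncomputable def mean (u : X →₀ ℝ) : (X → ℝ) →ₗ[ℝ] ℝ := ∑ a ∈ u.support, u a • LinearMap.proj a

lemma mean_apply (u : X →₀ ℝ) (f : X → ℝ) : mean u f = u.sum fun a p => p * f a := by
  simp [mean, Finsupp.sum]

lemma mean_eq_linearCombination (u : X →₀ ℝ) (f : X → ℝ) :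
    mean u f = Finsupp.linearCombination ℝ f u := by
  simp [mean_apply, Finsupp.linearCombination_apply]

lemma mean_single (a : X) (f : X → ℝ) : mean (Finsupp.single a 1) f = f a := by
  simp [mean_apply]

lemma mean_const {u : X →₀ ℝ} (hu : u ∈ Δf X) (c : ℝ) : mean u (fun _ => c) = c := by
  rw [mean_apply, Finsupp.sum, ← Finset.sum_mul]
  exact (congrArg (· * c) hu.2).trans (one_mul c)

lemma mean_mono {u : X →₀ ℝ} (hu : u ∈ Δf X) {f f' : X → ℝ} (h : ∀ a, f a ≤ f' a) :
    mean u f ≤ mean u f' := by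
  rw [mean_apply, mean_apply]
  exact Finset.sum_le_sum fun a _ => mul_le_mul_of_nonneg_left (h a) (hu.1 a)

lemma le_mean {u : X →₀ ℝ} (hu : u ∈ Δf X) {f : X → ℝ} {c : ℝ} (h : ∀ a, c ≤ f a) :
    c ≤ mean u f :=
  (mean_const hu c).symm.trans_le (mean_mono hu h)

lemma mean_dotProduct (u : X →₀ ℝ) (v : X → K → ℝ) (f : K → ℝ) :
    mean u (fun a => v a ⬝ᵥ f) = (Finsupp.linearCombination ℝ v u) ⬝ᵥ f := by
  simp [mean_apply, Finsupp.linearCombination_apply, Finsupp.sum, sum_dotProduct]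

lemma single_mem_Δf (a : X) : Finsupp.single a (1 : ℝ) ∈ Δf X :=
  ⟨fun _ => Finsupp.single_nonneg.2 zero_le_one _, by simp⟩

lemma convex_Δf : Convex ℝ (Δf X) := by
  intro u hu v hv a b ha hb hab
  refine ⟨fun x => add_nonneg (mul_nonneg ha (hu.1 x)) (mul_nonneg hb (hv.1 x)), ?_⟩
  have hsum (w : X →₀ ℝ) :
      (w.sum fun _ r => r) = Finsupp.linearCombination ℝ (fun _ => (1 : ℝ)) w := by
    simp [Finsupp.linearCombination_apply]
  rw [hsum, map_add, map_smul, map_smul, ← hsum, ← hsum, hu.2, hv.2, smul_eq_mul, smul_eq_mul,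
    mul_one, mul_one, hab]

lemma convexHull_range_subset_image_Δf {E : Type*} [AddCommGroup E] [Module ℝ E] (v : X → E) :
    convexHull ℝ (range v) ⊆ Finsupp.linearCombination ℝ v '' Δf X := by
  refine convexHull_min ?_ (convex_Δf.linear_image _)
  rintro _ ⟨a, rfl⟩
  exact ⟨Finsupp.single a 1, single_mem_Δf a, by simp⟩

lemma dotProduct_const_of_mem_ΔK {p : K → ℝ} (hp : p ∈ ΔK K) (c : ℝ) :
    p ⬝ᵥ (fun _ => c) = c := by
  rw [dotProduct, ← Finset.sum_mul, hp.2, one_mul]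

lemma dotProduct_sub_const_of_mem_ΔK {p : K → ℝ} (hp : p ∈ ΔK K) (f : K → ℝ) (c : ℝ) :
    (p ⬝ᵥ fun k => f k - c) = p ⬝ᵥ f - c :=
  (dotProduct_sub _ _ _).trans (congrArg _ (dotProduct_const_of_mem_ΔK hp c))

lemma dotProduct_mono_of_mem_ΔK {p : K → ℝ} (hp : p ∈ ΔK K) {f f' : K → ℝ}
    (h : ∀ k, f k ≤ f' k) : p ⬝ᵥ f ≤ p ⬝ᵥ f' :=
  dotProduct_le_dotProduct_of_nonneg_left h hp.1

lemma dotProduct_mem_Icc_of_mem_ΔK {p : K → ℝ} (hp : p ∈ ΔK K) {f : K → ℝ} {a b : ℝ}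
    (hf : ∀ k, f k ∈ Icc a b) : p ⬝ᵥ f ∈ Icc a b :=
  ⟨(dotProduct_const_of_mem_ΔK hp a).symm.trans_le
      (dotProduct_mono_of_mem_ΔK hp fun k => (hf k).1),
    (dotProduct_mono_of_mem_ΔK hp fun k => (hf k).2).trans_eq (dotProduct_const_of_mem_ΔK hp b)⟩

lemma abs_dotProduct_le_of_mem_ΔK {p : K → ℝ} (hp : p ∈ ΔK K) {f : K → ℝ} {B : ℝ}
    (hf : ∀ k, |f k| ≤ B) : |p ⬝ᵥ f| ≤ B :=
  abs_le.2 (dotProduct_mem_Icc_of_mem_ΔK hp fun k => abs_le.1 (hf k))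

lemma HasLowerRate.dotProduct {p : K → ℝ} (hp : p ∈ ΔK K) {z : K → ℕ → ℝ} {c : K → ℝ} {B : ℝ}
    (h : ∀ j, HasLowerRate (z j) (c j) B) :
    HasLowerRate (fun n => p ⬝ᵥ fun j => z j n) (p ⬝ᵥ c) B := by
  choose R hR hz using h
  refine ⟨fun n => p ⬝ᵥ fun j => R j n, fun n => abs_dotProduct_le_of_mem_ΔK hp fun j => hR j n,
    fun n => ?_⟩
  rw [← dotProduct_add, ← dotProduct_sub]
  exact dotProduct_mono_of_mem_ΔK hp fun j => hz j n

lemma norm_mulVec_le_of_mem_ΔK {P : Matrix K K ℝ} (hP : ∀ k, P k ∈ ΔK K) (f : K → ℝ) :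
    ‖P *ᵥ f‖ ≤ ‖f‖ :=
  (pi_norm_le_iff_of_nonneg (norm_nonneg f)).2 fun k =>
    abs_dotProduct_le_of_mem_ΔK (hP k) (norm_le_pi_norm f)

lemma exists_fixed_add_coboundary {P : Matrix K K ℝ} (hP : ∀ k, P k ∈ ΔK K) (r : K → ℝ) :
    ∃ ρ h : K → ℝ, P *ᵥ ρ = ρ ∧ r = ρ + (h - P *ᵥ h) := by
  have hcompl := isCompl_ker_range_one_sub (T := P.mulVecLin) (norm_mulVec_le_of_mem_ΔK hP)
  obtain ⟨ρ, hρ, _, ⟨h, rfl⟩, hr⟩ := Submodule.mem_sup.1 (hcompl.sup_eq_top ▸ Submodule.mem_top)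
  exact ⟨ρ, h, (sub_eq_zero.1 hρ).symm, hr.symm⟩

lemma dirac_dotProduct [DecidableEq K] (k : K) (f : K → ℝ) : dirac k ⬝ᵥ f = f k := by
  simp [dirac, dotProduct]

lemma dirac_mem_ΔK [DecidableEq K] (k : K) : dirac k ∈ ΔK K :=
  ⟨fun j => by unfold dirac; positivity, by simp [dirac]⟩

lemma sum_smul_dirac [DecidableEq K] (p : K → ℝ) : ∑ k, p k • (dirac k : K → ℝ) = p := by
  funext j
  simp [dirac]

lemma isAffineOn_dotProduct (w : K → ℝ) : IsAffineOn fun p => p ⬝ᵥ w := by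
  intro p _ p' _ α _
  simp [add_dotProduct]

lemma IsAffineOn.apply_eq_dotProduct [DecidableEq K] {w : (K → ℝ) → ℝ} (hw : IsAffineOn w)
    {p : K → ℝ} (hp : p ∈ ΔK K) : w p = p ⬝ᵥ fun k => w (dirac k) := by
  have haff ⦃x⦄ (hx : x ∈ ΔK K) ⦃y⦄ (hy : y ∈ ΔK K) ⦃a b : ℝ⦄ (ha : 0 ≤ a) (hb : 0 ≤ b)
      (hab : a + b = 1) : w (a • x + b • y) = a • w x + b • w y := by
    obtain rfl : b = 1 - a := by linarith
    exact hw x hx y hy a ⟨ha, by linarith⟩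
  have hconvex : ConvexOn ℝ (ΔK K) w :=
    ⟨convex_ΔK, fun _ hx _ hy _ _ ha hb hab => (haff hx hy ha hb hab).le⟩
  have hconcave : ConcaveOn ℝ (ΔK K) w :=
    ⟨convex_ΔK, fun _ hx _ hy _ _ ha hb hab => (haff hx hy ha hb hab).ge⟩
  have hle := hconvex.map_sum_le (fun k _ => hp.1 k) hp.2 fun k _ => dirac_mem_ΔK k
  have hge := hconcave.le_map_sum (fun k _ => hp.1 k) hp.2 fun k _ => dirac_mem_ΔK k
  rw [sum_smul_dirac] at hle hge
  exact hle.antisymm hge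

end Averages

/-! ### Stage payoffs -/

section StagePayoffs

variable {K A : Type*}

/-- The strategy induced by `σ` after a first stage with state and action `x`. -/
def continuation (σ : List (K × A) → K → A →₀ ℝ) (x : K × A) : List (K × A) → K → A →₀ ℝ :=
  fun l => σ (x :: l)

/-- The strategy that plays the action `a` at the first stage and then, if the next state is `j`,
forgets that stage and plays `σ j`. -/
noncomputable def playThen (a : A) (σ : K → List (K × A) → K → A →₀ ℝ) :
    List (K × A) → K → A →₀ ℝ
  | [], _ => Finsupp.single a 1
  | [_], j => σ j [] j
  | _ :: x :: l, j => σ x.1 (x :: l) j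

lemma isStrat_playThen (a : A) {σ : K → List (K × A) → K → A →₀ ℝ} (hσ : ∀ k, IsStrat (σ k)) :
    IsStrat (playThen a σ)
  | [], _ => single_mem_Δf a
  | [_], j => hσ j [] j
  | _ :: x :: l, j => hσ x.1 (x :: l) j

variable [Fintype K] {q : K → A → K → ℝ} {g : K → A → ℝ} {σ : List (K × A) → K → A →₀ ℝ}

/-- The conditional expectation of `F` at the next stage, given the current history and state. -/
noncomputable def nextMean (q : K → A → K → ℝ) (σ : List (K × A) → K → A →₀ ℝ)
    (F : List (K × A) × K → ℝ) (x : List (K × A) × K) : ℝ :=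
  mean (σ x.1 x.2) fun a => q x.2 a ⬝ᵥ fun j => F (x.1 ++ [(x.2, a)], j)

lemma mean_hist_zero (k : K) (F : List (K × A) × K → ℝ) : mean (hist q σ k 0) F = F ([], k) :=
  mean_single _ F

lemma mean_hist_succ (k : K) (t : ℕ) (F : List (K × A) × K → ℝ) :
    mean (hist q σ k (t + 1)) F = mean (hist q σ k t) (nextMean q σ F) := by
  rw [mean_eq_linearCombination, hist, map_finsuppSum, mean_apply]
  refine Finsupp.sum_congr fun x _ => ?_
  rw [map_finsuppSum, nextMean, mean_apply, Finsupp.mul_sum]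
  refine Finsupp.sum_congr fun a _ => ?_
  simp only [map_sum, Finsupp.linearCombination_single, smul_eq_mul, dotProduct, Finset.mul_sum,
    mul_assoc]

lemma mean_hist_succ_eq_mean_continuation (k : K) (t : ℕ) (F : List (K × A) × K → ℝ) :
    mean (hist q σ k (t + 1)) F = mean (σ [] k) fun a => q k a ⬝ᵥ fun j =>
      mean (hist q (continuation σ (k, a)) j t) fun x => F ((k, a) :: x.1, x.2) := by
  induction t generalizing F with
  | zero => simp only [mean_hist_succ, mean_hist_zero, nextMean, List.nil_append]
  | succ t ih =>
    rw [mean_hist_succ, ih]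
    simp only [mean_hist_succ]
    rfl

lemma stagePay_eq_mean_hist (k : K) (t : ℕ) :
    stagePay q g σ k t = mean (hist q σ k t) fun x => mean (σ x.1 x.2) (g x.2) := by
  simp only [stagePay, mean_apply, Finsupp.mul_sum, mul_assoc]

lemma stagePay_zero (k : K) : stagePay q g σ k 0 = mean (σ [] k) (g k) := by
  rw [stagePay_eq_mean_hist, mean_hist_zero]

lemma stagePay_succ (k : K) (t : ℕ) :
    stagePay q g σ k (t + 1) =
      mean (σ [] k) fun a => q k a ⬝ᵥ fun j => stagePay q g (continuation σ (k, a)) j t := by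
  simp only [stagePay_eq_mean_hist, mean_hist_succ_eq_mean_continuation]
  rfl

lemma stagePay_congr {τ : List (K × A) → K → A →₀ ℝ} {j : K} (hnil : σ [] j = τ [] j)
    (hcons : ∀ a, continuation σ (j, a) = continuation τ (j, a)) (t : ℕ) :
    stagePay q g σ j t = stagePay q g τ j t := by
  cases t with
  | zero => rw [stagePay_zero, stagePay_zero, hnil]
  | succ t => simp only [stagePay_succ, hnil, hcons]

lemma stagePay_playThen_succ (a : A) (σ : K → List (K × A) → K → A →₀ ℝ) (k : K) (t : ℕ) :
    stagePay q g (playThen a σ) k (t + 1) = q k a ⬝ᵥ fun j => stagePay q g (σ j) j t := by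
  rw [stagePay_succ, playThen, mean_single]
  have hnil (j : K) : continuation (playThen a σ) (k, a) [] j = σ j [] j := rfl
  have hcons (j : K) (b : A) :
      continuation (continuation (playThen a σ) (k, a)) (j, b) = continuation (σ j) (j, b) := rfl
  exact congrArg _ (funext fun j => stagePay_congr (hnil j) (hcons j) t)

lemma stagePay_add (f f' : K → A → ℝ) (k : K) (t : ℕ) :
    stagePay q (fun j a => f j a + f' j a) σ k t = stagePay q f σ k t + stagePay q f' σ k t := by
  simp only [stagePay, Finsupp.sum, mul_add, Finset.sum_add_distrib]

lemma stagePay_neg (f : K → A → ℝ) (k : K) :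
    stagePay q (fun j a => -f j a) σ k = -stagePay q f σ k := by
  funext t
  simp only [stagePay, Finsupp.sum, mul_neg, Finset.sum_neg_distrib, Pi.neg_apply]

lemma stagePay_mono (hq : ∀ k a, q k a ∈ ΔK K) (hσ : IsStrat σ) {f f' : K → A → ℝ} {t : ℕ}
    (h : ∀ l, l.length = t → ∀ j, mean (σ l j) (f j) ≤ mean (σ l j) (f' j)) (k : K) :
    stagePay q f σ k t ≤ stagePay q f' σ k t := by
  induction t generalizing σ k with
  | zero =>
    rw [stagePay_zero, stagePay_zero]
    exact h [] rfl k
  | succ t ih =>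
    rw [stagePay_succ, stagePay_succ]
    exact mean_mono (hσ [] k) fun a => dotProduct_mono_of_mem_ΔK (hq k a) fun j =>
      ih (fun l => hσ ((k, a) :: l)) (fun l hl => h ((k, a) :: l) (by simpa using hl)) j

lemma stagePay_const (hq : ∀ k a, q k a ∈ ΔK K) (hσ : IsStrat σ) (c : ℝ) (k : K) (t : ℕ) :
    stagePay q (fun _ _ => c) σ k t = c := by
  induction t generalizing σ k with
  | zero => rw [stagePay_zero, mean_const (hσ [] k)]
  | succ t ih =>
    have hcont (a : A) : IsStrat (continuation σ (k, a)) := fun l => hσ ((k, a) :: l)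
    simp only [stagePay_succ, ih (hcont _), dotProduct_const_of_mem_ΔK (hq k _),
      mean_const (hσ [] k)]

lemma stagePay_mem_Icc (hq : ∀ k a, q k a ∈ ΔK K) (hσ : IsStrat σ) {f : K → A → ℝ} {b b' : ℝ}
    (hf : ∀ k a, f k a ∈ Icc b b') (k : K) (t : ℕ) : stagePay q f σ k t ∈ Icc b b' :=
  ⟨(stagePay_const hq hσ b k t).symm.trans_le
      (stagePay_mono hq hσ (fun l _ j => mean_mono (hσ l j) fun a => (hf j a).1) k),
    (stagePay_mono hq hσ (fun l _ j => mean_mono (hσ l j) fun a => (hf j a).2) k).trans_eq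
      (stagePay_const hq hσ b' k t)⟩

lemma abs_stagePay_le_one (hq : ∀ k a, q k a ∈ ΔK K) (hg : ∀ k a, g k a ∈ Icc (0 : ℝ) 1)
    (hσ : IsStrat σ) (k : K) (t : ℕ) : |stagePay q g σ k t| ≤ 1 := by
  have h := stagePay_mem_Icc hq hσ hg k t
  rw [abs_of_nonneg h.1]
  exact h.2

/-- The expectation `E_{k,σ}(h(k_{t+1}))` of a function of the state, written as the stage payoff
of a reward that ignores the action. -/
noncomputable def stateMean (q : K → A → K → ℝ) (h : K → ℝ) (σ : List (K × A) → K → A →₀ ℝ)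
    (k : K) (t : ℕ) : ℝ :=
  stagePay q (fun j _ => h j) σ k t

lemma stateMean_zero (hσ : IsStrat σ) (h : K → ℝ) (k : K) : stateMean q h σ k 0 = h k := by
  rw [stateMean, stagePay_zero, mean_const (hσ [] k)]

lemma stateMean_succ (hσ : IsStrat σ) (h : K → ℝ) (k : K) (t : ℕ) :
    stateMean q h σ k (t + 1) = stagePay q (fun j a => q j a ⬝ᵥ h) σ k t := by
  simp only [stateMean, stagePay_eq_mean_hist, mean_hist_succ, mean_const (hσ _ _)]
  rfl

lemma abs_stateMean_le (hq : ∀ k a, q k a ∈ ΔK K) (hσ : IsStrat σ) {h : K → ℝ} {B : ℝ}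
    (hB : ∀ k, |h k| ≤ B) (k : K) (t : ℕ) : |stateMean q h σ k t| ≤ B :=
  abs_le.2 (stagePay_mem_Icc hq hσ (fun j _ => abs_le.1 (hB j)) k t)

end StagePayoffs

/-! ### Guaranteed values -/

section Guarantee

variable {K A : Type*} [Fintype K] {q : K → A → K → ℝ} {g : K → A → ℝ}
  {σ : List (K × A) → K → A →₀ ℝ}

lemma sub_sum_le_stateMean (hq : ∀ k a, q k a ∈ ΔK K) (hσ : IsStrat σ) {ρ : K → ℝ} {δ : ℕ → ℝ}
    (hρ : ∀ l k, ρ k - δ l.length ≤ mean (σ l k) fun a => q k a ⬝ᵥ ρ) (k : K) (t : ℕ) :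
    ρ k - ∑ i ∈ Finset.range t, δ i ≤ stateMean q ρ σ k t := by
  induction t with
  | zero => simp [stateMean_zero hσ]
  | succ t ih =>
    have hstep : stateMean q ρ σ k t + -δ t ≤ stateMean q ρ σ k (t + 1) := by
      rw [stateMean_succ hσ, stateMean, ← stagePay_const hq hσ (-δ t) k t, ← stagePay_add]
      refine stagePay_mono hq hσ (fun l hl j => ?_) k
      rw [mean_const (hσ l j), ← sub_eq_add_neg, ← hl]
      exact hρ l j
    rw [Finset.sum_range_succ]
    linarith

lemma hasLowerRate_stagePay (hq : ∀ k a, q k a ∈ ΔK K) (hσ : IsStrat σ) {ρ h : K → ℝ}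
    {δ : ℕ → ℝ} {ε B : ℝ} (hδ : ∀ n, ∑ i ∈ Finset.range n, δ i ≤ ε)
    (hρ : ∀ l k, ρ k - δ l.length ≤ mean (σ l k) fun a => q k a ⬝ᵥ ρ)
    (hh : ∀ l k, ρ k + h k - δ l.length ≤ mean (σ l k) fun a => g k a + q k a ⬝ᵥ h)
    (hB : ∀ k, |h k| ≤ B) (k : K) : HasLowerRate (stagePay q g σ k) (ρ k - ε) B := by
  refine ⟨fun t => -stateMean q h σ k t,
    fun t => (abs_neg _).trans_le (abs_stateMean_le hq hσ hB k t), fun t => ?_⟩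
  have hstep : stateMean q ρ σ k t + stateMean q h σ k t + -δ t ≤
      stagePay q g σ k t + stateMean q h σ k (t + 1) := by
    rw [stateMean_succ hσ, stateMean, stateMean, ← stagePay_const hq hσ (-δ t) k t,
      ← stagePay_add, ← stagePay_add, ← stagePay_add]
    refine stagePay_mono hq hσ (fun l hl j => ?_) k
    rw [mean_const (hσ l j), ← sub_eq_add_neg, ← hl]
    exact hh l j
  have hrate := sub_sum_le_stateMean hq hσ hρ k t
  have hbudget := hδ (t + 1)
  rw [Finset.sum_range_succ] at hbudget
  linarith

/-- The levels guaranteed from `k`: those which the stage payoffs of some strategy have as lower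
rate. -/
def guaranteedLevels (q : K → A → K → ℝ) (g : K → A → ℝ) (k : K) : Set ℝ :=
  {c | ∃ σ, IsStrat σ ∧ ∃ B, HasLowerRate (stagePay q g σ k) c B}

/-- The candidate for the general uniform value: the supremum of the guaranteed levels. -/
noncomputable def guaranteedValue (q : K → A → K → ℝ) (g : K → A → ℝ) (k : K) : ℝ :=
  sSup (guaranteedLevels q g k)

lemma le_one_of_mem_guaranteedLevels (hq : ∀ k a, q k a ∈ ΔK K)
    (hg : ∀ k a, g k a ∈ Icc (0 : ℝ) 1) {k : K} {c : ℝ} (hc : c ∈ guaranteedLevels q g k) :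
    c ≤ 1 := by
  obtain ⟨σ, hσ, B, hB⟩ := hc
  exact hB.le (hasLowerRate_of_le fun n => neg_le_neg (stagePay_mem_Icc hq hσ hg k n).2)

lemma zero_mem_guaranteedLevels [Nonempty A] (hq : ∀ k a, q k a ∈ ΔK K)
    (hg : ∀ k a, g k a ∈ Icc (0 : ℝ) 1) (k : K) : 0 ∈ guaranteedLevels q g k := by
  inhabit A
  have hσ : IsStrat fun (_ : List (K × A)) (_ : K) => Finsupp.single default (1 : ℝ) :=
    fun _ _ => single_mem_Δf default
  exact ⟨_, hσ, 0, hasLowerRate_of_le fun n => (stagePay_mem_Icc hq hσ hg k n).1⟩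

lemma le_guaranteedValue (hq : ∀ k a, q k a ∈ ΔK K) (hg : ∀ k a, g k a ∈ Icc (0 : ℝ) 1) {k : K}
    {c : ℝ} (hc : c ∈ guaranteedLevels q g k) : c ≤ guaranteedValue q g k :=
  le_csSup ⟨1, fun _ => le_one_of_mem_guaranteedLevels hq hg⟩ hc

lemma guaranteedValue_mem_Icc [Nonempty A] (hq : ∀ k a, q k a ∈ ΔK K)
    (hg : ∀ k a, g k a ∈ Icc (0 : ℝ) 1) (k : K) : guaranteedValue q g k ∈ Icc (0 : ℝ) 1 :=
  have h0 := zero_mem_guaranteedLevels hq hg k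
  ⟨le_guaranteedValue hq hg h0, csSup_le ⟨0, h0⟩ fun _ => le_one_of_mem_guaranteedLevels hq hg⟩

lemma exists_hasLowerRate_guaranteedValue_sub [Nonempty A] (hq : ∀ k a, q k a ∈ ΔK K)
    (hg : ∀ k a, g k a ∈ Icc (0 : ℝ) 1) {ε : ℝ} (hε : 0 < ε) :
    ∃ B, 0 ≤ B ∧ ∀ k, ∃ σ, IsStrat σ ∧
      HasLowerRate (stagePay q g σ k) (guaranteedValue q g k - ε) B := by
  have hnear (k : K) := exists_lt_of_lt_csSup ⟨0, zero_mem_guaranteedLevels hq hg k⟩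
    (sub_lt_self (guaranteedValue q g k) hε)
  choose c hc hlt using hnear
  choose σ hσ b hb using hc
  refine ⟨∑ k, |b k|, Finset.sum_nonneg fun k _ => abs_nonneg _, fun k => ⟨σ k, hσ k, ?_⟩⟩
  exact (hb k).mono (hlt k).le ((le_abs_self _).trans
    (Finset.single_le_sum (fun j _ => abs_nonneg (b j)) (Finset.mem_univ k)))

lemma dotProduct_guaranteedValue_le [Nonempty A] (hq : ∀ k a, q k a ∈ ΔK K)
    (hg : ∀ k a, g k a ∈ Icc (0 : ℝ) 1) (k : K) (a : A) :
    q k a ⬝ᵥ guaranteedValue q g ≤ guaranteedValue q g k := by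
  refine le_of_forall_pos_sub_le fun ε hε => ?_
  obtain ⟨B, -, h⟩ := exists_hasLowerRate_guaranteedValue_sub hq hg hε
  choose σ hσ hrate using h
  have htail := HasLowerRate.dotProduct (hq k a) hrate
  simp only [← stagePay_playThen_succ] at htail
  rw [dotProduct_sub_const_of_mem_ΔK (hq k a)] at htail
  exact le_guaranteedValue hq hg ⟨_, isStrat_playThen a hσ, _, htail.of_tail⟩

end Guarantee

/-! ### Invariant couples -/

section InvariantCouples

variable {K A : Type*} {q : K → A → K → ℝ} {g : K → A → ℝ}

/-- The outcomes (law of the next state, payoff) reachable from the state `k` in the limit of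
randomised actions. -/
def outcomeHull (q : K → A → K → ℝ) (g : K → A → ℝ) (k : K) : Set ((K → ℝ) × ℝ) :=
  closure (convexHull ℝ (range fun a => (q k a, g k a)))

lemma convex_outcomeHull (k : K) : Convex ℝ (outcomeHull q g k) :=
  (convex_convexHull ℝ _).closure

variable [Fintype K]

lemma outcomeHull_subset (hq : ∀ k a, q k a ∈ ΔK K) (hg : ∀ k a, g k a ∈ Icc (0 : ℝ) 1) (k : K) :
    outcomeHull q g k ⊆ ΔK K ×ˢ Icc 0 1 := by
  refine closure_minimal (convexHull_min ?_ (convex_ΔK.prod (convex_Icc 0 1)))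
    (isCompact_ΔK.isClosed.prod isClosed_Icc)
  rintro _ ⟨a, rfl⟩
  exact ⟨hq k a, hg k a⟩

lemma isCompact_outcomeHull (hq : ∀ k a, q k a ∈ ΔK K) (hg : ∀ k a, g k a ∈ Icc (0 : ℝ) 1)
    (k : K) : IsCompact (outcomeHull q g k) :=
  (isCompact_ΔK.prod isCompact_Icc).of_isClosed_subset isClosed_closure
    (outcomeHull_subset hq hg k)

lemma exists_mean_gt_of_mem_outcomeHull {k : K} {c : (K → ℝ) × ℝ} (hc : c ∈ outcomeHull q g k)
    (ρ h : K → ℝ) {δ : ℝ} (hδ : 0 < δ) :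
    ∃ u ∈ Δf A, c.1 ⬝ᵥ ρ - δ < mean u (fun a => q k a ⬝ᵥ ρ) ∧
      c.2 + c.1 ⬝ᵥ h - δ < mean u fun a => g k a + q k a ⬝ᵥ h := by
  let O : Set ((K → ℝ) × ℝ) := {d | c.1 ⬝ᵥ ρ - δ < d.1 ⬝ᵥ ρ ∧ c.2 + c.1 ⬝ᵥ h - δ < d.2 + d.1 ⬝ᵥ h}
  have hO : IsOpen O :=
    .and (isOpen_lt (by fun_prop) (by fun_prop)) (isOpen_lt (by fun_prop) (by fun_prop))
  obtain ⟨d, hdO, hd⟩ := mem_closure_iff.1 hc O hO ⟨sub_lt_self _ hδ, sub_lt_self _ hδ⟩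
  obtain ⟨u, hu, rfl⟩ := convexHull_range_subset_image_Δf _ hd
  refine ⟨u, hu, ?_⟩
  have hadd : (mean u fun a => g k a + q k a ⬝ᵥ h) = mean u (g k) + mean u fun a => q k a ⬝ᵥ h :=
    map_add (mean u) _ _
  rw [hadd, mean_dotProduct, mean_dotProduct, mean_eq_linearCombination]
  simpa [O, Finsupp.linearCombination_apply, Finsupp.sum, Prod.fst_sum, Prod.snd_sum] using hdO

lemma fixed_le_guaranteedValue (hq : ∀ k a, q k a ∈ ΔK K) (hg : ∀ k a, g k a ∈ Icc (0 : ℝ) 1)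
    {P : Matrix K K ℝ} {ρ h : K → ℝ} (hρ : P *ᵥ ρ = ρ)
    (hP : ∀ k, (P k, (ρ + (h - P *ᵥ h)) k) ∈ outcomeHull q g k) (k : K) :
    ρ k ≤ guaranteedValue q g k := by
  refine le_of_forall_pos_sub_le fun ε hε => ?_
  set δ : ℕ → ℝ := fun n => ε / 2 / 2 ^ n
  have hδ (n : ℕ) : 0 < δ n := by positivity
  have hsum (n : ℕ) : ∑ i ∈ Finset.range n, δ i ≤ ε :=
    sum_le_hasSum _ (fun i _ => (hδ i).le) (hasSum_geometric_two' ε)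
  choose μ hμ hμρ hμh using fun n j => exists_mean_gt_of_mem_outcomeHull (hP j) ρ h (hδ n)
  have hPρ (j : K) : P j ⬝ᵥ ρ = ρ j := congrFun hρ j
  refine le_guaranteedValue hq hg ⟨fun l => μ l.length, fun l j => hμ _ j, ‖h‖,
    hasLowerRate_stagePay hq (fun l j => hμ _ j) hsum (fun l j => ?_) (fun l j => ?_)
      (norm_le_pi_norm h) k⟩
  · rw [← hPρ j]
    exact (hμρ l.length j).le
  · refine le_of_eq_of_le ?_ (hμh l.length j).le
    simp only [Pi.add_apply, Pi.sub_apply, Matrix.mulVec]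
    ring

lemma dotProduct_le_dotProduct_guaranteedValue_of_vecMul_eq (hq : ∀ k a, q k a ∈ ΔK K)
    (hg : ∀ k a, g k a ∈ Icc (0 : ℝ) 1) {P : Matrix K K ℝ} {r p : K → ℝ}
    (hP : ∀ k, (P k, r k) ∈ outcomeHull q g k) (hp : p ∈ ΔK K) (hpP : p ᵥ* P = p) :
    p ⬝ᵥ r ≤ p ⬝ᵥ guaranteedValue q g := by
  have hPΔ (k : K) : P k ∈ ΔK K := (outcomeHull_subset hq hg k (hP k)).1
  obtain ⟨ρ, h, hρ, rfl⟩ := exists_fixed_add_coboundary hPΔ r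
  have hinv : p ⬝ᵥ (ρ + (h - P *ᵥ h)) = p ⬝ᵥ ρ := by
    rw [dotProduct_add, dotProduct_sub, Matrix.dotProduct_mulVec, hpP, sub_self, add_zero]
  rw [hinv]
  exact dotProduct_mono_of_mem_ΔK hp (fixed_le_guaranteedValue hq hg hρ hP)

variable [DecidableEq K]

lemma graphF_subset (hq : ∀ k a, q k a ∈ ΔK K) (hg : ∀ k a, g k a ∈ Icc (0 : ℝ) 1) :
    GraphF q g ⊆ (ΔK K ×ˢ Icc 0 1) ×ˢ (ΔK K ×ˢ Icc 0 1) := by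
  rintro _ ⟨k, a, y, hy, rfl⟩
  exact ⟨⟨dirac_mem_ΔK k, hy⟩, hq k a, hg k a⟩

lemma closure_convexHull_graphF_subset (hq : ∀ k a, q k a ∈ ΔK K)
    (hg : ∀ k a, g k a ∈ Icc (0 : ℝ) 1) :
    closure (convexHull ℝ (GraphF q g)) ⊆ (ΔK K ×ˢ Icc 0 1) ×ˢ (ΔK K ×ˢ Icc 0 1) :=
  closure_minimal
    (convexHull_min (graphF_subset hq hg)
      ((convex_ΔK.prod (convex_Icc 0 1)).prod (convex_ΔK.prod (convex_Icc 0 1))))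
    ((isCompact_ΔK.isClosed.prod isClosed_Icc).prod (isCompact_ΔK.isClosed.prod isClosed_Icc))

lemma isCompact_closure_convexHull_graphF (hq : ∀ k a, q k a ∈ ΔK K)
    (hg : ∀ k a, g k a ∈ Icc (0 : ℝ) 1) : IsCompact (closure (convexHull ℝ (GraphF q g))) :=
  ((isCompact_ΔK.prod isCompact_Icc).prod (isCompact_ΔK.prod isCompact_Icc)).of_isClosed_subset
    isClosed_closure (closure_convexHull_graphF_subset hq hg)

lemma mem_mixtureGraph_of_mem_closure_convexHull_graphF [Nonempty A] (hq : ∀ k a, q k a ∈ ΔK K)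
    (hg : ∀ k a, g k a ∈ Icc (0 : ℝ) 1) {z : ((K → ℝ) × ℝ) × ((K → ℝ) × ℝ)}
    (hz : z ∈ closure (convexHull ℝ (GraphF q g))) :
    (z.1.1, z.2) ∈ mixtureGraph (outcomeHull q g) := by
  let forget : ((K → ℝ) × ℝ) × ((K → ℝ) × ℝ) →ₗ[ℝ] (K → ℝ) × ((K → ℝ) × ℝ) :=
    (LinearMap.fst ℝ _ _).prodMap LinearMap.id
  have hmem (k : K) (a : A) : (q k a, g k a) ∈ outcomeHull q g k :=
    subset_closure (subset_convexHull ℝ _ ⟨a, rfl⟩)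
  refine closure_minimal (t := forget ⁻¹' mixtureGraph (outcomeHull q g))
    (convexHull_min ?_ ((convex_mixtureGraph convex_outcomeHull).linear_preimage _))
    ((isCompact_mixtureGraph (isCompact_outcomeHull hq hg)).isClosed.preimage
      forget.continuous_of_finiteDimensional) hz
  rintro _ ⟨k, a, y, -, rfl⟩
  inhabit A
  refine ⟨(dirac k, Function.update (fun j => (q j default, g j default)) k (q k a, g k a)),
    ⟨dirac_mem_ΔK k, fun j _ => ?_⟩, ?_⟩
  · rcases eq_or_ne j k with rfl | hj
    · simpa using hmem j a
    · simpa [hj] using hmem j default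
  · simp [dirac, forget]

lemma le_dotProduct_guaranteedValue_of_mem_RR [Nonempty A] (hq : ∀ k a, q k a ∈ ΔK K)
    (hg : ∀ k a, g k a ∈ Icc (0 : ℝ) 1) {p : K → ℝ} {y : ℝ} (hpy : (p, y) ∈ RR q g) :
    y ≤ p ⬝ᵥ guaranteedValue q g := by
  obtain ⟨hp, -, hcl⟩ := hpy
  obtain ⟨⟨p', c⟩, ⟨-, hc⟩, heq⟩ := mem_mixtureGraph_of_mem_closure_convexHull_graphF hq hg hcl
  obtain ⟨hp', hsum⟩ := Prod.ext_iff.1 heq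
  obtain rfl : p = p' := hp'.symm
  obtain ⟨hP, hr⟩ := Prod.ext_iff.1 hsum
  let P : Matrix K K ℝ := fun k => (c k).1
  have hpP : p ᵥ* P = p := by
    rw [Matrix.vecMul_eq_sum]
    simpa [Prod.fst_sum] using hP
  have hpr : p ⬝ᵥ (fun k => (c k).2) = y := by
    simpa [Prod.snd_sum, dotProduct] using hr
  rw [← hpr]
  exact dotProduct_le_dotProduct_guaranteedValue_of_vecMul_eq hq hg (P := P)
    (fun k => hc k trivial) hp hpP

/-- The conditions of the characterization for the affine function on `Δ(K)` with the values `w` at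
Dirac masses: it is excessive and above the payoff on the invariant couples. -/
structure IsExcessiveMajorant (q : K → A → K → ℝ) (g : K → A → ℝ) (w : K → ℝ) : Prop where
  excessive : ∀ k a, q k a ⬝ᵥ w ≤ w k
  le_of_mem_RR : ∀ py ∈ RR q g, py.2 ≤ py.1 ⬝ᵥ w

lemma isExcessiveMajorant_guaranteedValue [Nonempty A] (hq : ∀ k a, q k a ∈ ΔK K)
    (hg : ∀ k a, g k a ∈ Icc (0 : ℝ) 1) : IsExcessiveMajorant q g (guaranteedValue q g) :=
  ⟨dotProduct_guaranteedValue_le hq hg, fun _ => le_dotProduct_guaranteedValue_of_mem_RR hq hg⟩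

end InvariantCouples

/-! ### Bias vectors and upper bounds -/

section UpperBound

variable {K A : Type*} [DecidableEq K] {q : K → A → K → ℝ} {g : K → A → ℝ}

lemma mem_closure_convexHull_graphF_of_fst_eq {p : K → ℝ} {y y' : ℝ} {z : (K → ℝ) × ℝ}
    (h : ((p, y), z) ∈ closure (convexHull ℝ (GraphF q g))) (hy' : y' ∈ Icc (0 : ℝ) 1) :
    ((p, y'), z) ∈ closure (convexHull ℝ (GraphF q g)) := by
  let reset : ((K → ℝ) × ℝ) × ((K → ℝ) × ℝ) → ((K → ℝ) × ℝ) × ((K → ℝ) × ℝ) :=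
    fun x => ((x.1.1, y'), x.2)
  have hconv : Convex ℝ (reset ⁻¹' closure (convexHull ℝ (GraphF q g))) := by
    intro x hx x' hx' a b ha hb hab
    have hy : a * y' + b * y' = y' := by rw [← add_mul, hab, one_mul]
    simpa [reset, hy] using (convex_convexHull ℝ _).closure hx hx' ha hb hab
  refine closure_minimal (t := reset ⁻¹' closure (convexHull ℝ (GraphF q g)))
    (convexHull_min ?_ hconv) (isClosed_closure.preimage (by fun_prop)) h
  rintro _ ⟨k, a, _, -, rfl⟩
  exact subset_closure (subset_convexHull ℝ _ ⟨k, a, y', hy', rfl⟩)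

variable [Fintype K] {w : K → ℝ} {ε : ℝ}

lemma linearMap_apply_eq_dotProduct (f : (K → ℝ) →ₗ[ℝ] ℝ) (p : K → ℝ) :
    f p = p ⬝ᵥ fun k => f (dirac k) := by
  conv_lhs => rw [← sum_smul_dirac p]
  simp [dotProduct]

/-- The drift `p - p'` of a couple `((p, y), (p', y'))`, together with the excess `y' - p ⬝ᵥ w` of
its payoff over `w`. -/
def driftExcess (w : K → ℝ) : ((K → ℝ) × ℝ) × ((K → ℝ) × ℝ) →ₗ[ℝ] (K → ℝ) × ℝ where
  toFun z := (z.1.1 - z.2.1, z.2.2 - z.1.1 ⬝ᵥ w)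
  map_add' z z' := by ext <;> simp [add_dotProduct] <;> ring
  map_smul' c z := by ext <;> simp [mul_sub]

lemma driftExcess_graph (k : K) (a : A) (y : ℝ) :
    driftExcess w ((dirac k, y), (q k a, g k a)) = (dirac k - q k a, g k a - w k) := by
  simp [driftExcess, dirac_dotProduct]

lemma nonpos_of_mem_driftExcess_image (hq : ∀ k a, q k a ∈ ΔK K)
    (hg : ∀ k a, g k a ∈ Icc (0 : ℝ) 1) (hw : ∀ py ∈ RR q g, py.2 ≤ py.1 ⬝ᵥ w) {y : ℝ}
    (hy : (0, y) ∈ driftExcess w '' closure (convexHull ℝ (GraphF q g))) : y ≤ 0 := by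
  obtain ⟨⟨⟨p, y₀⟩, p', y'⟩, hz, hL⟩ := hy
  obtain ⟨hp, rfl⟩ := Prod.ext_iff.1 hL
  obtain rfl : p = p' := sub_eq_zero.1 hp
  obtain ⟨⟨hpΔ, -⟩, -, hy'⟩ := closure_convexHull_graphF_subset hq hg hz
  have hRR : (p, y') ∈ RR q g := ⟨hpΔ, hy', mem_closure_convexHull_graphF_of_fst_eq hz hy'⟩
  exact sub_nonpos.2 (hw _ hRR)

lemma exists_bias [Nonempty K] [Nonempty A] (hq : ∀ k a, q k a ∈ ΔK K)
    (hg : ∀ k a, g k a ∈ Icc (0 : ℝ) 1) (hw : ∀ py ∈ RR q g, py.2 ≤ py.1 ⬝ᵥ w) (hε : 0 < ε) :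
    ∃ h : K → ℝ, ∀ k a, g k a + q k a ⬝ᵥ h ≤ w k + ε + h k := by
  set S := closure (convexHull ℝ (GraphF q g))
  have hgraph (k : K) (a : A) : (dirac k - q k a, g k a - w k) ∈ driftExcess w '' S :=
    ⟨_, subset_closure (subset_convexHull ℝ _ ⟨k, a, 0, ⟨le_rfl, zero_le_one⟩, rfl⟩),
      driftExcess_graph k a 0⟩
  have hf_eq (f : StrongDual ℝ (K → ℝ)) (k : K) (a : A) :
      f (dirac k - q k a) = f (dirac k) - q k a ⬝ᵥ fun j => f (dirac j) := by
    rw [map_sub]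
    exact congrArg _ (linearMap_apply_eq_dotProduct f.toLinearMap (q k a))
  -- At a state maximizing `f`, no action increases `f` in expectation.
  have hslater (f : StrongDual ℝ (K → ℝ)) : ∃ x ∈ driftExcess w '' S, 0 ≤ f x.1 := by
    obtain ⟨k, hk⟩ := Finite.exists_max fun k => f (dirac k)
    inhabit A
    refine ⟨_, hgraph k default, ?_⟩
    rw [hf_eq, sub_nonneg]
    exact (dotProduct_mono_of_mem_ΔK (hq k default) hk).trans_eq
      (dotProduct_const_of_mem_ΔK (hq k default) _)
  obtain ⟨f, hf⟩ := exists_dual_snd_lt_add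
    ((convex_convexHull ℝ _).closure.linear_image (driftExcess w))
    ((isCompact_closure_convexHull_graphF hq hg).image
      (driftExcess w).continuous_of_finiteDimensional)
    (fun y hy => (nonpos_of_mem_driftExcess_image hq hg hw hy).trans_lt hε) hslater
  refine ⟨fun k => f (dirac k), fun k a => ?_⟩
  have hlt : g k a - w k < ε + f (dirac k - q k a) := hf _ (hgraph k a)
  rw [hf_eq] at hlt
  linarith

lemma exists_hasLowerRate_neg_stagePay [Nonempty K] [Nonempty A] (hq : ∀ k a, q k a ∈ ΔK K)
    (hg : ∀ k a, g k a ∈ Icc (0 : ℝ) 1) (hw : IsExcessiveMajorant q g w) (hε : 0 < ε) :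
    ∃ B, 0 ≤ B ∧ ∀ σ, IsStrat σ → ∀ k, HasLowerRate (-stagePay q g σ k) (-w k - ε) B := by
  obtain ⟨h, hh⟩ := exists_bias hq hg hw.le_of_mem_RR hε
  refine ⟨‖h‖, norm_nonneg h, fun σ hσ k => ?_⟩
  have hwε (j : K) (a : A) : -w j - ε ≤ q j a ⬝ᵥ fun i => (-w) i - ε := by
    rw [dotProduct_sub_const_of_mem_ΔK (hq j a), dotProduct_neg]
    linarith [hw.excessive j a]
  have hbias (j : K) (a : A) : -w j - ε + -h j ≤ -g j a + q j a ⬝ᵥ -h := by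
    rw [dotProduct_neg]
    linarith [hh j a]
  have hrate := hasLowerRate_stagePay (g := fun j a => -g j a) (ρ := fun i => (-w) i - ε) (h := -h)
    (δ := 0) (ε := 0) hq hσ (by simp)
    (fun l j => (sub_zero _).trans_le (le_mean (hσ l j) (hwε j)))
    (fun l j => (sub_zero _).trans_le (le_mean (hσ l j) (hbias j)))
    (fun j => (abs_neg _).trans_le (norm_le_pi_norm h j)) k
  simpa only [sub_zero, stagePay_neg, Pi.neg_apply] using hrate

lemma guaranteedValue_le [Nonempty K] [Nonempty A] (hq : ∀ k a, q k a ∈ ΔK K)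
    (hg : ∀ k a, g k a ∈ Icc (0 : ℝ) 1) (hw : IsExcessiveMajorant q g w) (k : K) :
    guaranteedValue q g k ≤ w k := by
  refine le_of_forall_pos_le_add fun ε hε => ?_
  obtain ⟨B, -, hB⟩ := exists_hasLowerRate_neg_stagePay hq hg hw hε
  refine csSup_le ⟨0, zero_mem_guaranteedLevels hq hg k⟩ ?_
  rintro c ⟨σ, hσ, B', hB'⟩
  exact hB'.le (by simpa only [neg_add'] using hB σ hσ k)

end UpperBound

/-! ### Patient evaluations -/

section PatientEvaluations

variable {K A : Type*} [Fintype K] [Nonempty A] {q : K → A → K → ℝ} {g : K → A → ℝ} {ε : ℝ}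

lemma exists_forall_impatience_le_sub_le_payoff (hq : ∀ k a, q k a ∈ ΔK K)
    (hg : ∀ k a, g k a ∈ Icc (0 : ℝ) 1) (hε : 0 < ε) :
    ∃ α > 0, ∀ k, ∃ σ, IsStrat σ ∧ ∀ θ, IsEval θ → impatience θ ≤ α →
      guaranteedValue q g k - ε ≤ payoff q g θ σ k := by
  obtain ⟨B, hB, h⟩ := exists_hasLowerRate_guaranteedValue_sub hq hg (half_pos hε)
  obtain ⟨α, hα, hαε⟩ := exists_pos_mul_lt (half_pos hε) (2 * B)
  refine ⟨α, hα, fun k => ?_⟩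
  obtain ⟨σ, hσ, hrate⟩ := h k
  refine ⟨σ, hσ, fun θ hθ hθα => ?_⟩
  have hcost : 2 * B * impatience θ ≤ 2 * B * α := by gcongr
  calc guaranteedValue q g k - ε ≤ guaranteedValue q g k - ε / 2 - 2 * B * impatience θ := by
        linarith
    _ ≤ payoff q g θ σ k := hrate.sub_impatience_le_tsum hθ (abs_stagePay_le_one hq hg hσ k)

variable [Nonempty K]

lemma exists_forall_impatience_le_payoff_le_add [DecidableEq K] {w : K → ℝ}
    (hq : ∀ k a, q k a ∈ ΔK K) (hg : ∀ k a, g k a ∈ Icc (0 : ℝ) 1)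
    (hw : IsExcessiveMajorant q g w) (hε : 0 < ε) :
    ∃ α > 0, ∀ θ, IsEval θ → impatience θ ≤ α → ∀ σ, IsStrat σ → ∀ k,
      payoff q g θ σ k ≤ w k + ε := by
  obtain ⟨B, hB, h⟩ := exists_hasLowerRate_neg_stagePay hq hg hw (half_pos hε)
  obtain ⟨α, hα, hαε⟩ := exists_pos_mul_lt (half_pos hε) (2 * B)
  refine ⟨α, hα, fun θ hθ hθα σ hσ k => ?_⟩
  have hcost : 2 * B * impatience θ ≤ 2 * B * α := by gcongr
  have hneg := (h σ hσ k).sub_impatience_le_tsum hθ fun n =>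
    (abs_neg _).trans_le (abs_stagePay_le_one hq hg hσ k n)
  simp only [Pi.neg_apply, mul_neg, tsum_neg] at hneg
  rw [payoff]
  linarith

theorem exists_forall_impatience_le_abs_value_sub_le (hq : ∀ k a, q k a ∈ ΔK K)
    (hg : ∀ k a, g k a ∈ Icc (0 : ℝ) 1) (hε : 0 < ε) :
    ∃ α > 0, ∀ θ, IsEval θ → impatience θ ≤ α → ∀ k,
      |value q g θ k - guaranteedValue q g k| ≤ ε := by
  classical
  obtain ⟨α, hα, hlower⟩ := exists_forall_impatience_le_sub_le_payoff hq hg hε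
  obtain ⟨α', hα', hupper⟩ := exists_forall_impatience_le_payoff_le_add hq hg
    (isExcessiveMajorant_guaranteedValue hq hg) hε
  refine ⟨min α α', lt_min hα hα', fun θ hθ hθα k => ?_⟩
  have hbound : ∀ c ∈ {c | ∃ σ, IsStrat σ ∧ c = payoff q g θ σ k},
      c ≤ guaranteedValue q g k + ε := by
    rintro _ ⟨σ, hσ, rfl⟩
    exact hupper θ hθ (hθα.trans (min_le_right _ _)) σ hσ k
  obtain ⟨σ, hσ, hpay⟩ := hlower k
  refine abs_sub_le_iff.2 ⟨sub_le_iff_le_add'.2 (csSup_le ⟨_, σ, hσ, rfl⟩ hbound), ?_⟩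
  have hle : payoff q g θ σ k ≤ value q g θ k := le_csSup ⟨_, hbound⟩ ⟨σ, hσ, rfl⟩
  linarith [hpay θ hθ (hθα.trans (min_le_left _ _))]

theorem isLeast_guaranteedValue [DecidableEq K] (hq : ∀ k a, q k a ∈ ΔK K)
    (hg : ∀ k a, g k a ∈ Icc (0 : ℝ) 1) (k : K) :
    IsLeast {c : ℝ | ∃ w : (K → ℝ) → ℝ, IsAffineOn w ∧ (∀ p ∈ ΔK K, w p ∈ Icc (0 : ℝ) 1) ∧
      (∀ (k' : K) (a : A), w (dirac k') ≥ w (q k' a)) ∧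
      (∀ py ∈ RR q g, w py.1 ≥ py.2) ∧ c = w (dirac k)} (guaranteedValue q g k) := by
  constructor
  · have hmajorant := isExcessiveMajorant_guaranteedValue hq hg
    refine ⟨fun p => p ⬝ᵥ guaranteedValue q g, isAffineOn_dotProduct _,
      fun p hp => dotProduct_mem_Icc_of_mem_ΔK hp (guaranteedValue_mem_Icc hq hg), fun j a => ?_,
      hmajorant.le_of_mem_RR, (dirac_dotProduct k _).symm⟩
    exact (hmajorant.excessive j a).trans_eq (dirac_dotProduct j _).symm
  · rintro _ ⟨w, haff, -, hexc, hRR, rfl⟩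
    refine guaranteedValue_le (w := fun j => w (dirac j)) hq hg ⟨fun j a => ?_, fun py hpy => ?_⟩ k
    · rw [← haff.apply_eq_dotProduct (hq j a)]
      exact hexc j a
    · rw [← haff.apply_eq_dotProduct hpy.1]
      exact hRR py hpy

end PatientEvaluations

end Stmt17

/-- **Corollary 11 (Renault–Venel).** Every standard MDP with a finite nonempty set of
states has a general uniform value `v*`, characterized via affine functions
`w : Δ(K) → [0,1]` which are (1) excessive and (2) above the payoff on the invariant
couples `RR`. -/
theorem stmt17 (K A : Type*) [Fintype K] [Nonempty K] [DecidableEq K] [Nonempty A]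
    (q : K → A → (K → ℝ)) (hq : ∀ k a, q k a ∈ Stmt17.ΔK K)
    (g : K → A → ℝ) (hg : ∀ k a, g k a ∈ Icc (0:ℝ) 1) :
    ∃ vstar : K → ℝ,
      -- general limit value
      (∀ ε > (0:ℝ), ∃ α > (0:ℝ), ∀ θ : ℕ → ℝ, Stmt17.IsEval θ →
        Stmt17.impatience θ ≤ α →
        ∀ k : K, |Stmt17.value q g θ k - vstar k| ≤ ε) ∧
      -- general uniform value
      (∀ ε > (0:ℝ), ∃ α > (0:ℝ), ∀ k : K, ∃ σ, Stmt17.IsStrat σ ∧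
        ∀ θ : ℕ → ℝ, Stmt17.IsEval θ → Stmt17.impatience θ ≤ α →
          Stmt17.payoff q g θ σ k ≥ vstar k - ε) ∧
      -- characterization of `v*`
      (∀ k : K, vstar k =
        sInf {c : ℝ | ∃ w : (K → ℝ) → ℝ, Stmt17.IsAffineOn w ∧
          (∀ p ∈ Stmt17.ΔK K, w p ∈ Icc (0:ℝ) 1) ∧
          (∀ (k' : K) (a : A), w (Stmt17.dirac k') ≥ w (q k' a)) ∧
          (∀ py ∈ Stmt17.RR q g, w py.1 ≥ py.2) ∧
          c = w (Stmt17.dirac k)}) := by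
  exact ⟨Stmt17.guaranteedValue q g,
    fun _ hε => Stmt17.exists_forall_impatience_le_abs_value_sub_le hq hg hε,
    fun _ hε => Stmt17.exists_forall_impatience_le_sub_le_payoff hq hg hε,
    fun k => (Stmt17.isLeast_guaranteedValue hq hg k).csInf_eq.symm⟩
end
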